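/- arXiv:1801.10493 — 3 statements merged into one kernel-verified Lean document; each statement's English description precedes it below -/
import Mathlib

section
/- Let N ≥ 3, 0 ≤ k ≤ N−1 and 0 ≤ σ ≤ 2 (with k ≠ N−2 when σ = 2). Then there exists a constant C > 0, depending only on N, k and σ, such that for every v ∈ D^{1,2}(ℝ^N) one has ∫_{ℝ^N} |∇v|² dx ≥ C (∫_{ℝ^N} |z|^{−σ} |v|^{2*_σ} dx)^{2/2*_σ}. -/
open MeasureTheory Filter Metric Set Bornology

noncomputable section

abbrev Euc (N : ℕ) := EuclideanSpace ℝ (Fin N)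

/-- Euclidean norm of the `z`-component (the last `N - k` coordinates) of `x ∈ ℝ^N`. -/
def zNorm (N k : ℕ) (x : Euc N) : ℝ :=
  Real.sqrt (∑ i : Fin N, if k ≤ (i : ℕ) then (x i) ^ 2 else 0)

/-- Euclidean norm of the `t`-component (the first `k` coordinates) of `x ∈ ℝ^N`. -/
def tNorm (N k : ℕ) (x : Euc N) : ℝ :=
  Real.sqrt (∑ i : Fin N, if (i : ℕ) < k then (x i) ^ 2 else 0)

/-- The critical Hardy–Sobolev exponent `2*_σ = 2(N-σ)/(N-2)`. -/
def twoStar (N : ℕ) (σ : ℝ) : ℝ := 2 * ((N : ℝ) - σ) / ((N : ℝ) - 2)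

/-- Dirichlet energy `∫ |∇v|²`. -/
def gradL2 (N : ℕ) (v : Euc N → ℝ) : ℝ := ∫ x, ‖fderiv ℝ v x‖ ^ 2

/-- Hardy–Sobolev integral `∫ |z|^{-σ} |v|^{2*_σ}`. -/
def hsInt (N k : ℕ) (σ : ℝ) (v : Euc N → ℝ) : ℝ :=
  ∫ x, zNorm N k x ^ (-σ) * |v x| ^ twoStar N σ

/-- Membership in `D^{1,2}(ℝ^N)`, the completion of `C_c^∞(ℝ^N)` for the norm
`v ↦ (∫ |∇v|²)^{1/2}`: `v` is a limit of smooth compactly supported functions, with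
gradients converging in `L²` (and, via the Sobolev embedding of the completion,
the functions converging in `L^{2N/(N-2)}`). -/
def MemD12 (N : ℕ) (v : Euc N → ℝ) : Prop :=
  ∃ φ : ℕ → Euc N → ℝ,
    (∀ n, ContDiff ℝ (⊤ : ℕ∞) (φ n) ∧ HasCompactSupport (φ n)) ∧
    Tendsto (fun n => eLpNorm (fun x => v x - φ n x)
      (ENNReal.ofReal (2 * (N : ℝ) / ((N : ℝ) - 2))) volume) atTop (nhds 0) ∧
    Tendsto (fun n => eLpNorm (fun x => fderiv ℝ v x - fderiv ℝ (φ n) x) 2 volume)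
      atTop (nhds 0)

/-- The best constant `S_{N,σ}` in the cylindrical Hardy–Sobolev inequality. -/
def Sconst (N k : ℕ) (σ : ℝ) : ℝ :=
  sInf {s : ℝ | ∃ v, MemD12 N v ∧ hsInt N k σ v = 1 ∧ s = gradL2 N v}

/-- A (positive) ground state for `S_{N,σ}`. -/
def GroundState (N k : ℕ) (σ : ℝ) (w : Euc N → ℝ) : Prop :=
  MemD12 N w ∧ (∀ x, 0 < w x) ∧ hsInt N k σ w = 1 ∧ gradL2 N w = Sconst N k σ

/-- Membership in `H¹₀(Ω)`: limit of smooth functions compactly supported in `Ω`,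
in the `H¹` norm. -/
def MemH10 (N : ℕ) (Ω : Set (Euc N)) (u : Euc N → ℝ) : Prop :=
  ∃ φ : ℕ → Euc N → ℝ,
    (∀ n, ContDiff ℝ (⊤ : ℕ∞) (φ n) ∧ HasCompactSupport (φ n) ∧ tsupport (φ n) ⊆ Ω) ∧
    Tendsto (fun n => eLpNorm (fun x => u x - φ n x) 2 volume) atTop (nhds 0) ∧
    Tendsto (fun n => eLpNorm (fun x => fderiv ℝ u x - fderiv ℝ (φ n) x) 2 volume)
      atTop (nhds 0)

/-- Coercivity of the operator `-Δ + h` on `H¹₀(Ω)`. -/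
def CoerciveOp (N : ℕ) (Ω : Set (Euc N)) (h : Euc N → ℝ) : Prop :=
  ∃ c > 0, ∀ u, MemH10 N Ω u →
    c * ∫ x in Ω, (‖fderiv ℝ u x‖ ^ 2 + u x ^ 2) ≤
      ∫ x in Ω, (‖fderiv ℝ u x‖ ^ 2 + h x * u x ^ 2)

/-- The Hardy–Sobolev quotient of `u` on `Ω` with singularity `Γ` and potential `h`. -/
def hsQuot (N : ℕ) (σ : ℝ) (Ω Γ : Set (Euc N)) (h : Euc N → ℝ) (u : Euc N → ℝ) : ℝ :=
  ((∫ x in Ω, ‖fderiv ℝ u x‖ ^ 2) + ∫ x in Ω, h x * u x ^ 2) /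
    (∫ x in Ω, infDist x Γ ^ (-σ) * |u x| ^ twoStar N σ) ^ (2 / twoStar N σ)

/-- The best constant `μ_{h,σ}(Ω,Γ)`. -/
def muHS (N : ℕ) (σ : ℝ) (Ω Γ : Set (Euc N)) (h : Euc N → ℝ) : ℝ :=
  sInf {m : ℝ | ∃ u, MemH10 N Ω u ∧ ¬ (u =ᵐ[volume.restrict Ω] (0 : Euc N → ℝ)) ∧
    m = hsQuot N σ Ω Γ h u}

/-- The pointwise Laplacian of `f : ℝ^N → ℝ`. -/
def lapl (N : ℕ) (f : Euc N → ℝ) (x : Euc N) : ℝ :=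
  ∑ i : Fin N, fderiv ℝ (fun y => fderiv ℝ f y (EuclideanSpace.single i 1)) x
    (EuclideanSpace.single i 1)

/-!
Write `I_σ(v) = ∫ |z|^(-σ) |v|^(2*_σ)`. Since `2*_σ` is affine in `σ`, with `2*_2 = 2`, the Sobolev
inequality `I_0 ≤ S ‖∇v‖^(2*_0)` turns a bound `I_σ ≤ C I_0^(1 - σ/2) ‖∇v‖^σ` into
`I_σ ≤ K ‖∇v‖^(2*_σ)`. The former bound has a different reason in each of three regimes.

* `σ < 1`: as `|z| ≥ |x_i|` for a coordinate `x_i` of `z`, only the weight `|x_i|^(-σ)` matters.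
  Along a line parallel to the `i`-th axis, `|v|^(2*_1)` is at most the integral of its derivative.
  So near `x_i = 0` the supremum of `|v|` is used and far from it the integral of `|v|^(2*_0)`.
  Integrating over the lines with Hölder's inequality gives the bound.
* `1 ≤ σ < N - k`: the field `|z|^(-σ) z` has divergence `(N - k - σ) |z|^(-σ)`. Integrating by
  parts and applying the Cauchy–Schwarz inequality bounds `I_σ` by a multiple of
  `I_(2σ - 2)^(1/2) ‖∇v‖`. Hölder interpolates `I_(2σ - 2)` between `I_0` and `I_σ`, and the power
  of `I_σ` is absorbed, which is legitimate because `|z|` is first replaced by `(|z|² + ε²)^(1/2)`.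
* `N - k ≤ σ`: the excluded case leaves only `k = N - 1`, `σ ≥ 1`. Test functions may now have
  `I_σ = ∞`, so the argument is made for `v` itself. Finiteness of `I_σ(v)` forces the trace of `v`
  on `z = 0` to vanish along almost every line, hence Hardy's inequality on lines bounds `I_2(v)` by
  `4 ‖∇v‖²`, and Hölder interpolates `I_σ` between `I_0` and `I_2`.

When the integrand of `I_σ` is not integrable, its Bochner integral is `0` by convention.
-/

open scoped ENNReal NNReal

section RealLine

lemma setLIntegral_Ioo_zero_rpow {ρ σ : ℝ} (hρ : 0 < ρ) (hσ : σ < 1) :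
    ∫⁻ s in Ioo 0 ρ, ENNReal.ofReal (s ^ (-σ)) = ENNReal.ofReal (ρ ^ (1 - σ) / (1 - σ)) := by
  rw [← setLIntegral_congr Ioo_ae_eq_Ioc.symm, ← ofReal_integral_eq_lintegral_ofReal]
  · rw [← intervalIntegral.integral_of_le hρ.le, integral_rpow (Or.inl (by linarith)),
      neg_add_eq_sub, Real.zero_rpow (by linarith), sub_zero]
  · exact (intervalIntegrable_iff_integrableOn_Ioc_of_le hρ.le).1
      (intervalIntegral.intervalIntegrable_rpow' (by linarith))
  · filter_upwards [ae_restrict_mem measurableSet_Ioc] with s hs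
    exact Real.rpow_nonneg hs.1.le _

lemma setLIntegral_Ioi_rpow {ρ b : ℝ} (hρ : 0 < ρ) (hb : 1 < b) :
    ∫⁻ s in Ioi ρ, ENNReal.ofReal (s ^ (-b)) = ENNReal.ofReal (ρ ^ (1 - b) / (b - 1)) := by
  rw [← ofReal_integral_eq_lintegral_ofReal]
  · rw [integral_Ioi_rpow_of_lt (by linarith) hρ, neg_add_eq_sub, neg_div, ← div_neg, neg_sub]
  · exact integrableOn_Ioi_rpow_of_lt (by linarith) hρ
  · filter_upwards [ae_restrict_mem measurableSet_Ioi] with s hs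
    exact Real.rpow_nonneg (hρ.trans hs).le _

lemma setLIntegral_Ioo_zero_inv_eq_top {m : ℝ} (hm : 0 < m) :
    ∫⁻ s in Ioo 0 m, ENNReal.ofReal (s ^ (-1 : ℝ)) = ∞ := by
  by_contra hne
  have hint : IntegrableOn (fun s : ℝ ↦ s ^ (-1 : ℝ)) (Ioo 0 m) := by
    refine ⟨by fun_prop, ?_⟩
    rw [hasFiniteIntegral_iff_ofReal]
    · exact lt_top_iff_ne_top.2 hne
    · filter_upwards [ae_restrict_mem measurableSet_Ioo] with x hx
      exact Real.rpow_nonneg hx.1.le _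
  exact lt_irrefl _ ((intervalIntegral.integrableOn_Ioo_rpow_iff hm).1 hint)

lemma lintegral_eq_setLIntegral_Ioi_add_comp_neg (f : ℝ → ℝ≥0∞) :
    ∫⁻ s, f s = (∫⁻ s in Ioi 0, f s) + ∫⁻ s in Ioi 0, f (-s) := by
  rw [← lintegral_add_compl f measurableSet_Ioi, compl_Ioi, ← setLIntegral_congr Iio_ae_eq_Iic,
    ← (Measure.measurePreserving_neg (volume : Measure ℝ)).setLIntegral_comp_preimage_emb
      (MeasurableEquiv.neg ℝ).measurableEmbedding f (Iio 0)]
  simp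

lemma setLIntegral_Ioo_zero_rpow_mul_rpow_le {ρ σ α : ℝ} (hρ : 0 < ρ) (hσ : σ < 1) (hα : 0 ≤ α)
    {h : ℝ → ℝ≥0∞} {H : ℝ≥0∞} (hsup : ∀ s, h s ≤ H) :
    ∫⁻ s in Ioo 0 ρ, ENNReal.ofReal (s ^ (-σ)) * h s ^ α ≤
      ENNReal.ofReal (ρ ^ (1 - σ) / (1 - σ)) * H ^ α := by
  rw [← setLIntegral_Ioo_zero_rpow hρ hσ, ← lintegral_mul_const _ (by fun_prop)]
  gcongr with s
  exact hsup s

lemma setLIntegral_Ioi_rpow_mul_rpow_le {ρ σ m : ℝ} (hρ : 0 < ρ) (hσ : 0 ≤ σ) (hσm : σ ≤ m)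
    (hm : 1 < m) {h : ℝ → ℝ≥0∞} (hmeas : Measurable h) :
    ∫⁻ s in Ioi ρ, ENNReal.ofReal (s ^ (-σ)) * h s ^ (1 - σ / m) ≤
      (∫⁻ s, h s) ^ (1 - σ / m) * ENNReal.ofReal (ρ ^ (1 - m) / (m - 1)) ^ (σ / m) := by
  have hm0 : 0 < m := by linarith
  have hα : 0 ≤ 1 - σ / m := sub_nonneg.2 ((div_le_one hm0).2 hσm)
  calc _ = ∫⁻ s in Ioi ρ, h s ^ (1 - σ / m) * ENNReal.ofReal (s ^ (-m)) ^ (σ / m) := by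
        refine setLIntegral_congr_fun measurableSet_Ioi fun s hs ↦ ?_
        have hs : 0 < s := hρ.trans hs
        rw [ENNReal.ofReal_rpow_of_pos (by positivity), ← Real.rpow_mul hs.le, mul_comm,
          neg_mul, mul_div_cancel₀ σ hm0.ne']
    _ ≤ (∫⁻ s in Ioi ρ, h s) ^ (1 - σ / m) *
        (∫⁻ s in Ioi ρ, ENNReal.ofReal (s ^ (-m))) ^ (σ / m) :=
        ENNReal.lintegral_mul_norm_pow_le (by fun_prop) (by fun_prop) hα (by positivity)
          (by ring)
    _ ≤ _ := by
        rw [setLIntegral_Ioi_rpow hρ hm]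
        gcongr
        exact Measure.restrict_le_self

/-- Splitting at `s = A / H` balances the contributions near the origin, where `h ≤ H` is used,
and away from it, where `∫ h ≤ A` is used. -/
lemma setLIntegral_Ioi_zero_rpow_mul_rpow_le {σ m A H : ℝ} (hσ0 : 0 ≤ σ) (hσ1 : σ < 1)
    (hm : 1 < m) (hA : 0 < A) (hH : 0 < H) {h : ℝ → ℝ≥0∞} (hmeas : Measurable h)
    (hint : ∫⁻ s, h s ≤ ENNReal.ofReal A) (hsup : ∀ s, h s ≤ ENNReal.ofReal H) :
    ∫⁻ s in Ioi 0, ENNReal.ofReal (s ^ (-σ)) * h s ^ (1 - σ / m) ≤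
      ENNReal.ofReal ((1 / (1 - σ) + (1 / (m - 1)) ^ (σ / m)) *
        (A ^ (1 - σ) * H ^ (σ - σ / m))) := by
  have : 0 < 1 - σ := by linarith
  have : 0 < m - 1 := by linarith
  have hα : 0 ≤ 1 - σ / m := sub_nonneg.2 ((div_le_one (by linarith)).2 (by linarith))
  have hρ : 0 < A / H := div_pos hA hH
  have near : (A / H) ^ (1 - σ) / (1 - σ) * H ^ (1 - σ / m) =
      1 / (1 - σ) * (A ^ (1 - σ) * H ^ (σ - σ / m)) := by
    rw [Real.div_rpow hA.le hH.le, show σ - σ / m = 1 - σ / m - (1 - σ) by ring,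
      Real.rpow_sub hH (1 - σ / m)]
    ring
  have far : A ^ (1 - σ / m) * ((A / H) ^ (1 - m) / (m - 1)) ^ (σ / m) =
      (1 / (m - 1)) ^ (σ / m) * (A ^ (1 - σ) * H ^ (σ - σ / m)) := by
    rw [div_eq_mul_one_div (_ ^ _) (m - 1), Real.mul_rpow (by positivity) (by positivity),
      ← Real.rpow_mul hρ.le, Real.div_rpow hA.le hH.le,
      show (1 - m) * (σ / m) = σ / m - σ by field_simp,
      show 1 - σ = 1 - σ / m + (σ / m - σ) by ring, Real.rpow_add hA,
      show σ - σ / m = -(σ / m - σ) by ring, Real.rpow_neg hH.le]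
    ring
  calc _ ≤ (∫⁻ s in Ioo 0 (A / H), ENNReal.ofReal (s ^ (-σ)) * h s ^ (1 - σ / m)) +
        ∫⁻ s in Ioi (A / H), ENNReal.ofReal (s ^ (-σ)) * h s ^ (1 - σ / m) := by
        rw [← Ioo_union_Ici_eq_Ioi hρ, setLIntegral_congr (Ioi_ae_eq_Ici (a := A / H))]
        exact lintegral_union_le _ _ _
    _ ≤ ENNReal.ofReal ((A / H) ^ (1 - σ) / (1 - σ)) * ENNReal.ofReal H ^ (1 - σ / m) +
        ENNReal.ofReal A ^ (1 - σ / m) *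
          ENNReal.ofReal ((A / H) ^ (1 - m) / (m - 1)) ^ (σ / m) := by
        refine add_le_add (setLIntegral_Ioo_zero_rpow_mul_rpow_le hρ hσ1 hα hsup)
          ((setLIntegral_Ioi_rpow_mul_rpow_le hρ hσ0 (by linarith) hm hmeas).trans ?_)
        gcongr
    _ = _ := by
        rw [ENNReal.ofReal_rpow_of_pos hH, ENNReal.ofReal_rpow_of_pos hA,
          ENNReal.ofReal_rpow_of_pos (by positivity), ← ENNReal.ofReal_mul (by positivity),
          ← ENNReal.ofReal_mul (by positivity), near, far,
          ← ENNReal.ofReal_add (by positivity) (by positivity), add_mul]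

lemma lintegral_abs_rpow_mul_rpow_le {σ m A H : ℝ} (hσ0 : 0 ≤ σ) (hσ1 : σ < 1)
    (hm : 1 < m) (hA : 0 < A) (hH : 0 < H) {h : ℝ → ℝ≥0∞} (hmeas : Measurable h)
    (hint : ∫⁻ s, h s ≤ ENNReal.ofReal A) (hsup : ∀ s, h s ≤ ENNReal.ofReal H) :
    ∫⁻ s, ENNReal.ofReal (|s| ^ (-σ)) * h s ^ (1 - σ / m) ≤
      ENNReal.ofReal (2 * (1 / (1 - σ) + (1 / (m - 1)) ^ (σ / m)) *
        (A ^ (1 - σ) * H ^ (σ - σ / m))) := by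
  have half (g : ℝ → ℝ≥0∞) (hg : Measurable g) (hgA : ∫⁻ s, g s ≤ ENNReal.ofReal A)
      (hgH : ∀ s, g s ≤ ENNReal.ofReal H) :
      ∫⁻ s in Ioi 0, ENNReal.ofReal (|s| ^ (-σ)) * g s ^ (1 - σ / m) ≤
        ENNReal.ofReal ((1 / (1 - σ) + (1 / (m - 1)) ^ (σ / m)) *
          (A ^ (1 - σ) * H ^ (σ - σ / m))) := by
    refine (setLIntegral_congr_fun measurableSet_Ioi fun s hs ↦ ?_).trans_le
      (setLIntegral_Ioi_zero_rpow_mul_rpow_le hσ0 hσ1 hm hA hH hg hgA hgH)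
    rw [abs_of_pos hs]
  rw [lintegral_eq_setLIntegral_Ioi_add_comp_neg, mul_assoc, ENNReal.ofReal_mul zero_le_two,
    ENNReal.ofReal_ofNat, two_mul]
  simp only [abs_neg]
  exact add_le_add (half h hmeas hint hsup) (half (fun s ↦ h (-s)) (by fun_prop)
    ((lintegral_neg_eq_self h).trans_le hint) fun s ↦ hsup (-s))

lemma exists_lintegral_abs_rpow_mul_rpow_le {σ m : ℝ} (hσ0 : 0 ≤ σ) (hσ1 : σ < 1) (hm : 1 < m) :
    ∃ C : ℝ≥0, ∀ (h : ℝ → ℝ≥0∞) (H : ℝ≥0∞), Measurable h → (∀ s, h s ≤ H) →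
      ∫⁻ s, ENNReal.ofReal (|s| ^ (-σ)) * h s ^ (1 - σ / m) ≤
        C * ((∫⁻ s, h s) ^ (1 - σ) * H ^ (σ - σ / m)) := by
  have hα : 0 < 1 - σ / m := sub_pos.2 ((div_lt_one (by linarith)).2 (by linarith))
  rcases hσ0.eq_or_lt with rfl | hσ
  · exact ⟨1, by simp⟩
  have hβ : 0 < σ - σ / m := sub_pos.2 (div_lt_self hσ hm)
  set c : ℝ := 2 * (1 / (1 - σ) + (1 / (m - 1)) ^ (σ / m)) with hc
  have hc0 : 0 < c := by
    have : 0 < 1 - σ := by linarith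
    have : 0 < m - 1 := by linarith
    positivity
  clear_value c
  refine ⟨c.toNNReal, fun h H hmeas hsup ↦ ?_⟩
  have hC : (c.toNNReal : ℝ≥0∞) ≠ 0 := by simpa using hc0
  by_cases hz : h =ᵐ[volume] 0
  · refine (lintegral_eq_zero_of_ae_eq_zero ?_).trans_le zero_le
    filter_upwards [hz] with s hs
    simp [hs, hα]
  have hA0 : ∫⁻ s, h s ≠ 0 := (lintegral_eq_zero_iff hmeas).not.2 hz
  have hH0 : H ≠ 0 := by
    rintro rfl
    exact hz (.of_forall fun s ↦ nonpos_iff_eq_zero.1 (hsup s))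
  rcases eq_or_ne (∫⁻ s, h s) ∞ with hAt | hAt
  · have hH1 : H ^ (σ - σ / m) ≠ 0 := by simp [hH0, hβ.not_gt]
    rw [hAt, ENNReal.top_rpow_of_pos (by linarith), ENNReal.top_mul hH1, ENNReal.mul_top hC]
    exact le_top
  rcases eq_or_ne H ∞ with rfl | hHt
  · have hA1 : (∫⁻ s, h s) ^ (1 - σ) ≠ 0 := by simp [hA0, hσ1.le]
    rw [ENNReal.top_rpow_of_pos hβ, ENNReal.mul_top hA1, ENNReal.mul_top hC]
    exact le_top
  have hA := ENNReal.toReal_pos hA0 hAt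
  have hH := ENNReal.toReal_pos hH0 hHt
  refine (lintegral_abs_rpow_mul_rpow_le hσ0 hσ1 hm hA hH hmeas
    (ENNReal.ofReal_toReal hAt).ge (by simpa only [ENNReal.ofReal_toReal hHt])).trans_eq ?_
  rw [← hc, ENNReal.ofReal_mul hc0.le, ENNReal.ofReal_mul (by positivity),
    ← ENNReal.ofReal_rpow_of_pos hA, ← ENNReal.ofReal_rpow_of_pos hH,
    ENNReal.ofReal_toReal hAt, ENNReal.ofReal_toReal hHt]
  rfl

end RealLine

section Hardy

variable {p q : ℝ} {G : ℝ → ℝ≥0∞}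

lemma rpow_setLIntegral_Ioc_le (hpq : p.HolderConjugate q) (hG : Measurable G) {s : ℝ}
    (hs : 0 < s) :
    (∫⁻ r in Ioc 0 s, G r) ^ p ≤
      (∫⁻ r in Ioc 0 s, G r ^ p * ENNReal.ofReal (r ^ (1 / q))) *
        ENNReal.ofReal (q * s ^ (1 / q)) ^ (p - 1) := by
  have hp := hpq.pos
  have hq : 1 - 1 / p = 1 / q := by simpa only [one_div] using hpq.one_sub_inv
  have hweight : ∫⁻ r in Ioc 0 s, ENNReal.ofReal (r ^ (-(1 / p))) =
      ENNReal.ofReal (q * s ^ (1 / q)) := by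
    rw [← setLIntegral_congr Ioo_ae_eq_Ioc,
      setLIntegral_Ioo_zero_rpow hs ((div_lt_one hp).2 hpq.lt), hq, div_div_eq_mul_div, div_one,
      mul_comm]
  calc (∫⁻ r in Ioc 0 s, G r) ^ p
      = (∫⁻ r in Ioc 0 s, (G r ^ p * ENNReal.ofReal (r ^ (1 / q))) ^ (1 / p) *
          ENNReal.ofReal (r ^ (-(1 / p))) ^ (1 / q)) ^ p := by
        congr 1
        refine setLIntegral_congr_fun measurableSet_Ioc fun r hr ↦ ?_
        have hr : 0 < r := hr.1
        rw [ENNReal.mul_rpow_of_nonneg _ _ (by positivity), ← ENNReal.rpow_mul,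
          mul_one_div_cancel hp.ne', ENNReal.rpow_one, mul_assoc,
          ENNReal.ofReal_rpow_of_pos (by positivity), ENNReal.ofReal_rpow_of_pos (by positivity),
          ← ENNReal.ofReal_mul (by positivity), ← Real.rpow_mul hr.le, ← Real.rpow_mul hr.le,
          ← Real.rpow_add hr]
        simp [mul_comm]
    _ ≤ ((∫⁻ r in Ioc 0 s, G r ^ p * ENNReal.ofReal (r ^ (1 / q))) ^ (1 / p) *
          ENNReal.ofReal (q * s ^ (1 / q)) ^ (1 / q)) ^ p := by
        rw [← hweight]
        gcongr
        exact ENNReal.lintegral_mul_norm_pow_le (by fun_prop) (by fun_prop) (by positivity)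
          hpq.symm.one_div_nonneg
          (hpq.one_div_add_one_div.trans one_div_one)
    _ = _ := by
        rw [ENNReal.mul_rpow_of_nonneg _ _ hp.le, ← ENNReal.rpow_mul, ← ENNReal.rpow_mul,
          one_div_mul_cancel hp.ne', ENNReal.rpow_one, one_div_mul_eq_div, hpq.div_conj_eq_sub_one]

lemma setLIntegral_Ioi_rpow_mul_setLIntegral_Ioc {b : ℝ} (hb : 1 < b) {F : ℝ → ℝ≥0∞}
    (hF : Measurable F) :
    ∫⁻ s in Ioi 0, ENNReal.ofReal (s ^ (-b)) * ∫⁻ r in Ioc 0 s, F r =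
      ∫⁻ r in Ioi 0, ENNReal.ofReal (r ^ (1 - b) / (b - 1)) * F r := by
  have hmeas : Measurable (Function.uncurry fun s r : ℝ ↦
      (Ici r).indicator (fun s ↦ ENNReal.ofReal (s ^ (-b))) s * F r) := by
    have : Measurable ({z : ℝ × ℝ | z.2 ≤ z.1}.indicator
        fun z ↦ ENNReal.ofReal (z.1 ^ (-b))) :=
      Measurable.indicator (by fun_prop) (measurableSet_le measurable_snd measurable_fst)
    exact this.mul (by fun_prop)
  calc _ = ∫⁻ s in Ioi 0, ∫⁻ r in Ioi 0,
        (Ici r).indicator (fun s ↦ ENNReal.ofReal (s ^ (-b))) s * F r := by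
        refine setLIntegral_congr_fun measurableSet_Ioi fun s _ ↦ ?_
        rw [← lintegral_const_mul _ hF, ← Ioi_inter_Iic, inter_comm,
          ← setLIntegral_indicator measurableSet_Iic]
        refine lintegral_congr fun r ↦ ?_
        by_cases h : r ≤ s <;> simp [indicator, h]
    _ = ∫⁻ r in Ioi 0, ∫⁻ s in Ioi 0,
        (Ici r).indicator (fun s ↦ ENNReal.ofReal (s ^ (-b))) s * F r :=
        lintegral_lintegral_swap hmeas.aemeasurable
    _ = _ := by
        refine setLIntegral_congr_fun measurableSet_Ioi fun r hr ↦ ?_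
        rw [lintegral_mul_const _ (Measurable.indicator (by fun_prop) measurableSet_Ici),
          setLIntegral_indicator measurableSet_Ici, inter_eq_left.2 (Ici_subset_Ioi.2 hr),
          ← setLIntegral_congr Ioi_ae_eq_Ici, setLIntegral_Ioi_rpow hr hb]

lemma hardy_Ioi (hpq : p.HolderConjugate q) (hG : Measurable G) :
    ∫⁻ s in Ioi 0, ENNReal.ofReal (s ^ (-p)) * (∫⁻ r in Ioc 0 s, G r) ^ p ≤
      ENNReal.ofReal (q ^ p) * ∫⁻ r in Ioi 0, G r ^ p := by
  have hq := hpq.symm.pos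
  have hqp : 1 / q = 1 - 1 / p := by simpa only [one_div] using hpq.one_sub_inv.symm
  have hexp : -p + 1 / q * (p - 1) = -(1 + 1 / q) := by
    rw [hqp]; field_simp [hpq.ne_zero]; ring
  calc _ ≤ ∫⁻ s in Ioi 0, ENNReal.ofReal (q ^ (p - 1)) * (ENNReal.ofReal (s ^ (-(1 + 1 / q))) *
        ∫⁻ r in Ioc 0 s, G r ^ p * ENNReal.ofReal (r ^ (1 / q))) := by
        refine setLIntegral_mono' measurableSet_Ioi fun s hs ↦ ?_
        have hs : 0 < s := hs
        grw [rpow_setLIntegral_Ioc_le hpq hG hs]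
        rw [mul_comm (lintegral _ _), ← mul_assoc, ← mul_assoc,
          ENNReal.ofReal_rpow_of_pos (by positivity), ← ENNReal.ofReal_mul (by positivity),
          ← ENNReal.ofReal_mul (by positivity), Real.mul_rpow hq.le (by positivity),
          ← Real.rpow_mul hs.le, mul_left_comm, ← Real.rpow_add hs, hexp]
    _ = ENNReal.ofReal (q ^ (p - 1)) * ∫⁻ r in Ioi 0,
          ENNReal.ofReal (r ^ (-(1 / q)) * q) * (G r ^ p * ENNReal.ofReal (r ^ (1 / q))) := by
        rw [lintegral_const_mul' _ _ ENNReal.ofReal_ne_top,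
          setLIntegral_Ioi_rpow_mul_setLIntegral_Ioc (by simpa using hq) (by fun_prop)]
        simp
    _ = _ := by
        rw [show q ^ p = q ^ (p - 1) * q by rw [Real.rpow_sub_one hq.ne', div_mul_cancel₀ _ hq.ne'],
          ENNReal.ofReal_mul (by positivity), mul_assoc,
          ← lintegral_const_mul' (ENNReal.ofReal q) _ ENNReal.ofReal_ne_top]
        congr 1
        refine setLIntegral_congr_fun measurableSet_Ioi fun r hr ↦ ?_
        have hr : 0 < r := hr
        rw [mul_left_comm, mul_comm, ← ENNReal.ofReal_mul (by positivity), mul_right_comm,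
          ← Real.rpow_add hr, neg_add_cancel, Real.rpow_zero, one_mul]

lemma hardy_line (hpq : p.HolderConjugate q) (hG : Measurable G) :
    ∫⁻ s, ENNReal.ofReal (|s| ^ (-p)) * (∫⁻ r in uIoc 0 s, G r) ^ p ≤
      ENNReal.ofReal (q ^ p) * ∫⁻ r, G r ^ p := by
  have hneg (s : ℝ) (hs : 0 < s) : ∫⁻ r in uIoc 0 (-s), G r = ∫⁻ r in Ioc 0 s, G (-r) := by
    rw [uIoc_of_ge (by linarith), ← setLIntegral_congr Ico_ae_eq_Ioc,
      ← (Measure.measurePreserving_neg (volume : Measure ℝ)).setLIntegral_comp_preimage_emb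
      (MeasurableEquiv.neg ℝ).measurableEmbedding G, neg_preimage, neg_Ico, neg_zero, neg_neg]
  rw [lintegral_eq_setLIntegral_Ioi_add_comp_neg, lintegral_eq_setLIntegral_Ioi_add_comp_neg,
    mul_add]
  refine add_le_add ((setLIntegral_congr_fun measurableSet_Ioi fun s hs ↦ ?_).trans_le
    (hardy_Ioi hpq hG)) ((setLIntegral_congr_fun measurableSet_Ioi fun s hs ↦ ?_).trans_le
    (hardy_Ioi hpq (hG.comp measurable_neg)))
  · rw [abs_of_pos hs, uIoc_of_le (mem_Ioi.1 hs).le]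
  · rw [abs_neg, abs_of_pos hs, hneg s hs]

end Hardy

section Trace

variable {σ p : ℝ} {w : ℝ → ℝ≥0∞}

lemma le_of_ae_le_add_of_lintegral_ne_top (hσ : 1 ≤ σ) (hp : 0 < p)
    (hfin : ∫⁻ s, ENNReal.ofReal (|s| ^ (-σ)) * w s ^ p ≠ ∞) {c d : ℝ≥0∞} {m : ℝ}
    (hm : 0 < m) (h : ∀ᵐ s, s ∈ Ioo 0 m → c ≤ w s + d) : c ≤ d := by
  -- Otherwise `w ≥ c - d > 0` to the right of `0`, where `|s|^(-σ)` is not integrable.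
  by_contra! hdc
  have hδ : c - d ≠ 0 := (tsub_pos_of_lt hdc).ne'
  refine hfin (eq_top_iff.2 ?_)
  calc ∞ = ∫⁻ s in Ioo 0 (min m 1), ENNReal.ofReal (s ^ (-1 : ℝ)) * (c - d) ^ p := by
        rw [lintegral_mul_const _ (by fun_prop),
          setLIntegral_Ioo_zero_inv_eq_top (lt_min hm one_pos), ENNReal.top_mul]
        simp [hδ, hp.le]
    _ ≤ ∫⁻ s in Ioo 0 (min m 1), ENNReal.ofReal (|s| ^ (-σ)) * w s ^ p := by
        refine lintegral_mono_ae ?_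
        filter_upwards [ae_restrict_mem measurableSet_Ioo, ae_restrict_of_ae h] with s hs hsw
        obtain ⟨hsm, hs1⟩ := lt_min_iff.1 hs.2
        gcongr ENNReal.ofReal ?_ * ?_ ^ p
        · rw [abs_of_pos hs.1]
          exact Real.rpow_le_rpow_of_exponent_ge hs.1 hs1.le (by linarith)
        · exact tsub_le_iff_right.2 (hsw ⟨hs.1, hsm⟩)
    _ ≤ _ := setLIntegral_le_lintegral _ _

lemma ae_le_setLIntegral_uIoc_of_lintegral_ne_top (hσ : 1 ≤ σ) (hp : 0 < p)
    (hfin : ∫⁻ s, ENNReal.ofReal (|s| ^ (-σ)) * w s ^ p ≠ ∞) {G : ℝ → ℝ≥0∞}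
    (hw : ∀ᵐ s, ∀ᵐ s', w s ≤ w s' + ∫⁻ r in uIoc s' s, G r) :
    ∀ᵐ s, w s ≤ ∫⁻ r in uIoc 0 s, G r := by
  have hfin_neg : ∫⁻ s, ENNReal.ofReal (|s| ^ (-σ)) * w (-s) ^ p ≠ ∞ := by
    simpa only [abs_neg] using (lintegral_neg_eq_self
      fun s ↦ ENNReal.ofReal (|s| ^ (-σ)) * w s ^ p).trans_ne hfin
  filter_upwards [hw, Measure.ae_ne volume 0] with s hs hs0
  rcases hs0.lt_or_gt with hneg | hpos
  · refine le_of_ae_le_add_of_lintegral_ne_top hσ hp hfin_neg (neg_pos.2 hneg) ?_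
    filter_upwards [(Measure.measurePreserving_neg volume).quasiMeasurePreserving.ae hs]
      with s' hs' hmem
    grw [hs']
    gcongr
    rw [uIoc_of_ge (by linarith [hmem.2]), uIoc_of_ge hneg.le]
    exact Ioc_subset_Ioc_right (neg_nonpos.2 hmem.1.le)
  · refine le_of_ae_le_add_of_lintegral_ne_top hσ hp hfin hpos ?_
    filter_upwards [hs] with s' hs' hmem
    grw [hs']
    gcongr
    rw [uIoc_of_le hmem.2.le, uIoc_of_le hpos.le]
    exact Ioc_subset_Ioc_left hmem.1.le

end Trace

section Slice

lemma exists_strictMono_ae_tendsto_zero_of_tendsto_lintegral {α : Type*} [MeasurableSpace α]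
    {μ : Measure α} {g : ℕ → α → ℝ≥0∞} (hg : ∀ j, AEMeasurable (g j) μ)
    (h : Tendsto (fun j ↦ ∫⁻ x, g j x ∂μ) atTop (nhds 0)) :
    ∃ ns : ℕ → ℕ, StrictMono ns ∧ ∀ᵐ x ∂μ, Tendsto (fun j ↦ g (ns j) x) atTop (nhds 0) := by
  obtain ⟨δ, hδ, hsum⟩ := ENNReal.exists_pos_sum_of_countable one_ne_zero ℕ
  obtain ⟨ns, hns, hle⟩ := extraction_forall_of_eventually' fun j ↦
    eventually_atTop.1 (h.eventually_le_const (ENNReal.coe_pos.2 (hδ j)))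
  have hfin : ∫⁻ x, ∑' j, g (ns j) x ∂μ ≠ ∞ := by
    rw [lintegral_tsum fun j ↦ hg _]
    exact ne_top_of_le_ne_top hsum.ne_top (ENNReal.tsum_le_tsum hle)
  refine ⟨ns, hns, ?_⟩
  filter_upwards [ae_lt_top' (by fun_prop) hfin] with x hx
  exact ENNReal.tendsto_atTop_zero_of_tsum_ne_top hx.ne

lemma enorm_sub_le_setLIntegral_uIoc_deriv {E : Type*} [NormedAddCommGroup E] [NormedSpace ℝ E]
    {f : ℝ → E} (hf : ContDiff ℝ 1 f) (a b : ℝ) :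
    ‖f b - f a‖ₑ ≤ ∫⁻ r in uIoc a b, ‖deriv f r‖ₑ := by
  rcases le_total a b with hab | hba
  · rw [uIoc_of_le hab, ← setLIntegral_congr Ioc_ae_eq_Icc.symm]
    exact enorm_sub_le_lintegral_deriv_of_contDiffOn_Icc hf.contDiffOn hab
  · rw [uIoc_of_ge hba, setLIntegral_congr Ioc_ae_eq_Icc, enorm_sub_rev]
    exact enorm_sub_le_lintegral_deriv_of_contDiffOn_Icc hf.contDiffOn hba

lemma enorm_le_add_setLIntegral_uIoc_of_tendsto {f : ℕ → ℝ → ℝ} (hf : ∀ j, ContDiff ℝ 1 (f j))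
    {G : ℝ → ℝ≥0∞} (hG : Measurable G) {D : ℕ → ℝ → ℝ≥0∞} (hD : ∀ j, Measurable (D j))
    (hder : ∀ j r, ‖deriv (f j) r‖ₑ ≤ G r + D j r)
    (hD0 : Tendsto (fun j ↦ ∫⁻ r, D j r ^ (2 : ℝ)) atTop (nhds 0)) {u : ℝ → ℝ} {s t : ℝ}
    (hs : Tendsto (fun j ↦ ‖f j s‖ₑ) atTop (nhds ‖u s‖ₑ))
    (ht : Tendsto (fun j ↦ ‖f j t‖ₑ) atTop (nhds ‖u t‖ₑ)) :
    ‖u s‖ₑ ≤ ‖u t‖ₑ + ∫⁻ r in uIoc t s, G r := by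
  have hD1 : Tendsto (fun j ↦ ∫⁻ r in uIoc t s, D j r) atTop (nhds 0) := by
    have hbound (j : ℕ) : ∫⁻ r in uIoc t s, D j r ≤
        (∫⁻ r, D j r ^ (2 : ℝ)) ^ (1 / 2 : ℝ) * ENNReal.ofReal |s - t| ^ (1 / 2 : ℝ) := by
      have := ENNReal.lintegral_mul_le_Lp_mul_Lq (volume.restrict (uIoc t s))
        Real.HolderConjugate.two_two (hD j).aemeasurable (g := 1) aemeasurable_const
      simp only [mul_one, Pi.one_apply, ENNReal.one_rpow, setLIntegral_one, Real.volume_uIoc]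
        at this
      grw [this, setLIntegral_le_lintegral]
    refine tendsto_of_tendsto_of_tendsto_of_le_of_le tendsto_const_nhds ?_ (fun _ ↦ zero_le) hbound
    have := ENNReal.Tendsto.mul_const (b := ENNReal.ofReal |s - t| ^ (1 / 2 : ℝ))
      (hD0.ennrpow_const (1 / 2)) (.inr (by finiteness))
    simpa using this
  have hlim := (ht.add_const (∫⁻ r in uIoc t s, G r)).add hD1
  rw [add_zero] at hlim
  refine le_of_tendsto_of_tendsto' hs hlim fun j ↦ ?_
  calc ‖f j s‖ₑ = ‖f j t + (f j s - f j t)‖ₑ := by rw [add_sub_cancel]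
    _ ≤ ‖f j t‖ₑ + ∫⁻ r in uIoc t s, ‖deriv (f j) r‖ₑ := by
        grw [enorm_add_le, enorm_sub_le_setLIntegral_uIoc_deriv (hf j)]
    _ ≤ ‖f j t‖ₑ + ∫⁻ r in uIoc t s, (G r + D j r) := by
        gcongr
        exact hder j _
    _ = _ := by rw [lintegral_add_left hG, add_assoc]

variable {n : ℕ} (i : Fin (n + 1))

/-- The point of `ℝ^(n+1)` with `i`-th coordinate `s` and remaining coordinates `y`, through which
integrals over `ℝ^(n+1)` are sliced along the lines parallel to the `i`-th axis. -/
def insertCoord (y : Fin n → ℝ) (s : ℝ) : Euc (n + 1) :=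
  WithLp.toLp 2 (i.insertNth s y)

@[simp] lemma insertCoord_apply_same (y : Fin n → ℝ) (s : ℝ) : insertCoord i y s i = s := by
  simp [insertCoord]

lemma insertCoord_eq_add_smul (y : Fin n → ℝ) :
    insertCoord i y = fun s ↦ insertCoord i y 0 + s • EuclideanSpace.single i (1 : ℝ) := by
  ext s j
  cases j using Fin.succAboveCases i <;> simp [insertCoord]

lemma measurePreserving_insertCoord :
    MeasurePreserving (fun z : (Fin n → ℝ) × ℝ ↦ insertCoord i z.1 z.2) := by
  have hins := (volume_preserving_piFinSuccAbove (fun _ : Fin (n + 1) ↦ ℝ) i).symm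
  exact (PiLp.volume_preserving_toLp (Fin (n + 1))).comp (hins.comp Measure.measurePreserving_swap)

lemma lintegral_eq_lintegral_insertCoord {f : Euc (n + 1) → ℝ≥0∞} (hf : AEMeasurable f) :
    ∫⁻ x, f x = ∫⁻ y, ∫⁻ s, f (insertCoord i y s) := by
  have h := measurePreserving_insertCoord i
  rw [← h.map_eq] at hf ⊢
  rw [lintegral_map' hf h.measurable.aemeasurable]
  exact lintegral_prod _ (hf.comp_measurable h.measurable)

lemma ae_ae_insertCoord {P : Euc (n + 1) → Prop} (hP : ∀ᵐ x, P x) :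
    ∀ᵐ y, ∀ᵐ s, P (insertCoord i y s) :=
  Measure.ae_ae_of_ae_prod ((measurePreserving_insertCoord i).quasiMeasurePreserving.ae hP)

lemma contDiff_insertCoord (y : Fin n → ℝ) {m : WithTop ℕ∞} : ContDiff ℝ m (insertCoord i y) := by
  rw [insertCoord_eq_add_smul]
  fun_prop

lemma isometry_insertCoord (y : Fin n → ℝ) : Isometry (insertCoord i y) := by
  refine Isometry.of_dist_eq fun s s' ↦ ?_
  rw [insertCoord_eq_add_smul, dist_add_left, dist_eq_norm, ← sub_smul, norm_smul]
  simp [Real.dist_eq]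

lemma enorm_deriv_comp_insertCoord_le {φ : Euc (n + 1) → ℝ} (hφ : Differentiable ℝ φ)
    (y : Fin n → ℝ) (s : ℝ) :
    ‖deriv (φ ∘ insertCoord i y) s‖ₑ ≤ ‖fderiv ℝ φ (insertCoord i y s)‖ₑ := by
  have hline : HasDerivAt (insertCoord i y) (EuclideanSpace.single i (1 : ℝ)) s := by
    rw [insertCoord_eq_add_smul]
    simpa using ((hasDerivAt_id s).smul_const (EuclideanSpace.single i (1 : ℝ))).const_add
      (insertCoord i y 0)
  rw [((hφ _).hasFDerivAt.comp_hasDerivAt s hline).deriv]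
  grw [ContinuousLinearMap.le_opENorm]
  simp [← ofReal_norm]

lemma enorm_insertCoord_le_lintegral_enorm_fderiv {ψ : Euc (n + 1) → ℝ} (hψ : ContDiff ℝ 1 ψ)
    (hψc : HasCompactSupport ψ) (y : Fin n → ℝ) (s : ℝ) :
    ‖ψ (insertCoord i y s)‖ₑ ≤ ∫⁻ r, ‖fderiv ℝ ψ (insertCoord i y r)‖ₑ := by
  have h := HasCompactSupport.enorm_le_lintegral_Ici_deriv (hψ.comp (contDiff_insertCoord i y))
    (hψc.comp_isClosedEmbedding (isometry_insertCoord i y).isClosedEmbedding) s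
  grw [setLIntegral_le_lintegral] at h
  exact h.trans <| lintegral_mono fun r ↦
    enorm_deriv_comp_insertCoord_le i (hψ.differentiable one_ne_zero) y r

end Slice

section Exponent

variable {N : ℕ}

lemma two_le_twoStar (hN : 3 ≤ N) {σ : ℝ} (hσ : σ ≤ 2) : 2 ≤ twoStar N σ := by
  have : (3 : ℝ) ≤ N := mod_cast hN
  rw [twoStar, le_div_iff₀ (by linarith)]
  linarith

lemma twoStar_interpolate (a b θ : ℝ) :
    twoStar N ((1 - θ) * a + θ * b) = (1 - θ) * twoStar N a + θ * twoStar N b := by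
  unfold twoStar
  ring

lemma twoStar_two (hN : 3 ≤ N) : twoStar N 2 = 2 := by
  have : (3 : ℝ) ≤ N := mod_cast hN
  rw [twoStar, mul_div_cancel_right₀ _ (by linarith)]

lemma twoStar_eq_add (hN : 3 ≤ N) (σ : ℝ) : twoStar N σ = (1 - σ / 2) * twoStar N 0 + σ := by
  have h := twoStar_interpolate (N := N) 0 2 (σ / 2)
  rw [twoStar_two hN] at h
  simpa using h

lemma two_mul_twoStar_sub_two (hN : 3 ≤ N) (σ : ℝ) :
    2 * twoStar N σ - 2 = twoStar N (2 * σ - 2) := by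
  rw [twoStar_eq_add hN σ, twoStar_eq_add hN (2 * σ - 2)]
  ring

lemma twoStar_zero_mul (hN : 3 ≤ N) (σ : ℝ) : twoStar N 0 * (1 - σ / N) = twoStar N σ := by
  have : (3 : ℝ) ≤ N := mod_cast hN
  unfold twoStar
  field

lemma twoStar_zero_div_twoStar_one (hN : 3 ≤ N) :
    twoStar N 0 / twoStar N 1 = N / (N - 1) := by
  have : (3 : ℝ) ≤ N := mod_cast hN
  have : (N : ℝ) - 1 ≠ 0 := by linarith
  have : (N : ℝ) - 2 ≠ 0 := by linarith
  unfold twoStar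
  field

lemma rpow_mul_rpow_le_rpow_twoStar (hN : 3 ≤ N) {σ : ℝ} (hσ0 : 0 ≤ σ) (hσ2 : σ ≤ 2)
    {X A S : ℝ≥0∞} (h : X ≤ S * A ^ twoStar N 0) :
    X ^ (1 - σ / 2) * A ^ σ ≤ S ^ (1 - σ / 2) * A ^ twoStar N σ := by
  have : 0 ≤ 1 - σ / 2 := by linarith
  have : 0 ≤ twoStar N 0 := by linarith [two_le_twoStar hN zero_le_two]
  grw [h]
  rw [ENNReal.mul_rpow_of_nonneg _ _ ‹_›, ← ENNReal.rpow_mul, mul_assoc,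
    ← ENNReal.rpow_add_of_nonneg _ _ (by positivity) hσ0, twoStar_eq_add hN σ,
    mul_comm (twoStar N 0)]

end Exponent

section TestFunctions

variable {N : ℕ}

/-- The Hardy–Sobolev integral `∫ ρ^(-σ) |v|^(2*_σ)` for a general distance-like weight `ρ`, with
values in `[0, ∞]`. -/
def hsLIntegral (ρ : Euc N → ℝ) (σ : ℝ) (v : Euc N → ℝ) : ℝ≥0∞ :=
  ∫⁻ x, ENNReal.ofReal (ρ x ^ (-σ)) * ‖v x‖ₑ ^ twoStar N σ

lemma hsLIntegral_zero_right (ρ v : Euc N → ℝ) :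
    hsLIntegral ρ 0 v = ∫⁻ x, ‖v x‖ₑ ^ twoStar N 0 := by
  simp [hsLIntegral]

lemma hsLIntegral_anti {ρ ρ' : Euc N → ℝ} (hρ : ∀ᵐ x, 0 < ρ x) (hle : ∀ x, ρ x ≤ ρ' x) {σ : ℝ}
    (hσ : 0 ≤ σ) (v : Euc N → ℝ) : hsLIntegral ρ' σ v ≤ hsLIntegral ρ σ v := by
  refine lintegral_mono_ae ?_
  filter_upwards [hρ] with x hx
  gcongr ENNReal.ofReal ?_ * _
  exact Real.rpow_le_rpow_of_nonpos hx (hle x) (by linarith)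

lemma hsLIntegral_interpolate_le {ρ v : Euc N → ℝ} (hρm : Measurable ρ) (hρ : ∀ᵐ x, 0 < ρ x)
    (hv : AEMeasurable fun x ↦ ‖v x‖ₑ) {a b θ : ℝ} (ha : 0 ≤ twoStar N a) (hb : 0 ≤ twoStar N b)
    (hθ0 : 0 ≤ θ) (hθ1 : θ ≤ 1) :
    hsLIntegral ρ ((1 - θ) * a + θ * b) v ≤
      hsLIntegral ρ a v ^ (1 - θ) * hsLIntegral ρ b v ^ θ := by
  have hθ : 0 ≤ 1 - θ := by linarith
  refine le_trans (lintegral_mono_ae ?_) (ENNReal.lintegral_mul_norm_pow_le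
    (p := 1 - θ) (q := θ) (by fun_prop) (by fun_prop) hθ hθ0 (by ring))
  filter_upwards [hρ] with x hx
  have hweight : ENNReal.ofReal (ρ x ^ (-((1 - θ) * a + θ * b))) =
      ENNReal.ofReal (ρ x ^ (-a)) ^ (1 - θ) * ENNReal.ofReal (ρ x ^ (-b)) ^ θ := by
    rw [ENNReal.ofReal_rpow_of_pos (by positivity), ENNReal.ofReal_rpow_of_pos (by positivity),
      ← ENNReal.ofReal_mul (by positivity), ← Real.rpow_mul hx.le, ← Real.rpow_mul hx.le,
      ← Real.rpow_add hx]
    ring_nf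
  rw [twoStar_interpolate, hweight, ENNReal.rpow_add_of_nonneg _ _ (by positivity) (by positivity),
    mul_comm (1 - θ) (twoStar N a), mul_comm θ (twoStar N b), ENNReal.rpow_mul, ENNReal.rpow_mul,
    ENNReal.mul_rpow_of_nonneg _ _ hθ, ENNReal.mul_rpow_of_nonneg _ _ hθ0, mul_mul_mul_comm]

lemma hsLIntegral_le_liminf {ρ v : Euc N → ℝ} {ρs φ : ℕ → Euc N → ℝ} {σ : ℝ}
    (hp : 0 ≤ twoStar N σ) (hρs : ∀ j, Measurable (ρs j)) (hφ : ∀ j, Measurable (φ j))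
    (hρ : ∀ᵐ x, 0 < ρ x) (hρlim : ∀ x, Tendsto (fun j ↦ ρs j x) atTop (nhds (ρ x)))
    (hφlim : ∀ᵐ x, Tendsto (fun j ↦ ‖φ j x‖ₑ) atTop (nhds ‖v x‖ₑ)) :
    hsLIntegral ρ σ v ≤ liminf (fun j ↦ hsLIntegral (ρs j) σ (φ j)) atTop := by
  refine le_trans (lintegral_mono_ae ?_) (lintegral_liminf_le' fun j ↦ by fun_prop)
  filter_upwards [hρ, hφlim] with x hx hφx
  refine (Tendsto.liminf_eq ?_).ge
  exact ENNReal.Tendsto.mul (ENNReal.tendsto_ofReal ((hρlim x).rpow_const (.inl hx.ne')))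
    (.inr (by finiteness)) (hφx.ennrpow_const _) (.inr ENNReal.ofReal_ne_top)

lemma exists_lintegral_enorm_rpow_twoStar_le (hN : 3 ≤ N) : ∃ S : ℝ≥0, ∀ φ : Euc N → ℝ,
    ContDiff ℝ 1 φ → HasCompactSupport φ →
      ∫⁻ x, ‖φ x‖ₑ ^ twoStar N 0 ≤ S * eLpNorm (fderiv ℝ φ) 2 volume ^ twoStar N 0 := by
  have hN' : (3 : ℝ) ≤ N := mod_cast hN
  have hp := two_le_twoStar hN zero_le_two
  refine ⟨SNormLESNormFDerivOfEqConst ℝ (volume : Measure (Euc N)) 2 ^ twoStar N 0,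
    fun φ hφ hφc ↦ ?_⟩
  set p : ℝ≥0 := ⟨twoStar N 0, by linarith⟩
  have hconj : (p : ℝ)⁻¹ = (2 : ℝ)⁻¹ - (N : ℝ)⁻¹ := by
    have : (N : ℝ) - 2 ≠ 0 := by linarith
    have : (N : ℝ) ≠ 0 := by linarith
    change (twoStar N 0)⁻¹ = _
    rw [twoStar]
    field_simp
    ring
  have hp0 : p ≠ 0 := by
    rw [← NNReal.coe_ne_zero]
    exact (by linarith : twoStar N 0 ≠ 0)
  have h := eLpNorm_le_eLpNorm_fderiv_of_eq (F := ℝ) (volume : Measure (Euc N)) hφ hφc (p := 2)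
    (p' := p) (by norm_num) (by rw [finrank_euclideanSpace_fin]; omega)
    (by rwa [finrank_euclideanSpace_fin])
  have hpow := ENNReal.rpow_le_rpow h p.coe_nonneg
  rwa [eLpNorm_nnreal_pow_eq_lintegral hp0, ENNReal.mul_rpow_of_nonneg _ _ p.coe_nonneg,
    ← ENNReal.coe_rpow_of_nonneg _ p.coe_nonneg] at hpow

lemma enorm_norm_rpow (a : ℝ) {p : ℝ} (hp : 0 ≤ p) : ‖‖a‖ ^ p‖ₑ = ‖a‖ₑ ^ p := by
  rw [Real.enorm_rpow_of_nonneg (norm_nonneg a) hp, enorm_norm]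

lemma lintegral_mul_enorm_fderiv_norm_rpow_le {φ : Euc N → ℝ} (hφ : ContDiff ℝ 1 φ) {p : ℝ}
    (hp : 1 < p) {W : Euc N → ℝ≥0∞} (hW : Measurable W) :
    ∫⁻ x, W x * ‖fderiv ℝ (fun x ↦ ‖φ x‖ ^ p) x‖ₑ ≤ ENNReal.ofReal p *
      ((∫⁻ x, W x ^ (2 : ℝ) * ‖φ x‖ₑ ^ (2 * p - 2)) ^ (1 / 2 : ℝ) *
        eLpNorm (fderiv ℝ φ) 2 volume) := by
  have hφm : Measurable φ := hφ.continuous.measurable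
  have : Measurable (fderiv ℝ φ) := measurable_fderiv ℝ φ
  have hpt (x : Euc N) : W x * ‖fderiv ℝ (fun x ↦ ‖φ x‖ ^ p) x‖ₑ ≤
      ENNReal.ofReal p * ((W x * ‖φ x‖ₑ ^ (p - 1)) * ‖fderiv ℝ φ x‖ₑ) := by
    have := enorm_fderiv_norm_rpow_le (hφ.differentiable one_ne_zero) (x := x)
      (p := p.toNNReal) (by simpa using hp)
    rw [Real.coe_toNNReal p (by linarith)] at this
    change _ ≤ ENNReal.ofReal p * _ * _ at this
    grw [this]
    exact le_of_eq (by ring)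
  have hcs := ENNReal.lintegral_mul_le_Lp_mul_Lq volume Real.HolderConjugate.two_two
    (f := fun x ↦ W x * ‖φ x‖ₑ ^ (p - 1)) (g := fun x ↦ ‖fderiv ℝ φ x‖ₑ) (by fun_prop) (by fun_prop)
  simp only [Pi.mul_apply, ENNReal.mul_rpow_of_nonneg _ _ zero_le_two, ← ENNReal.rpow_mul] at hcs
  grw [lintegral_mono hpt, lintegral_const_mul _ (by fun_prop), hcs,
    eLpNorm_eq_lintegral_rpow_enorm_toReal two_ne_zero ENNReal.ofNat_ne_top, ENNReal.toReal_ofNat,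
    sub_mul, one_mul, mul_comm p]

end TestFunctions

section CoordinateWeight

variable {n : ℕ}

lemma exists_lintegral_insertCoord_le (hn : 3 ≤ n + 1) {σ : ℝ} (hσ0 : 0 ≤ σ) (hσ1 : σ < 1) :
    ∃ C : ℝ≥0, ∀ (i : Fin (n + 1)) (φ : Euc (n + 1) → ℝ), ContDiff ℝ 1 φ → HasCompactSupport φ →
      ∀ y, ∫⁻ s, ENNReal.ofReal (|s| ^ (-σ)) * ‖φ (insertCoord i y s)‖ₑ ^ twoStar (n + 1) σ ≤
        C * ((∫⁻ s, ‖φ (insertCoord i y s)‖ₑ ^ twoStar (n + 1) 0) ^ (1 - σ) *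
          (∫⁻ s, ‖fderiv ℝ (fun x ↦ ‖φ x‖ ^ twoStar (n + 1) 1) (insertCoord i y s)‖ₑ) ^ σ) := by
  have hm : (3 : ℝ) ≤ (n + 1 : ℕ) := mod_cast hn
  have hp0 := two_le_twoStar hn zero_le_two
  have hp1 := two_le_twoStar hn one_le_two
  obtain ⟨C, hC⟩ := exists_lintegral_abs_rpow_mul_rpow_le (m := (n + 1 : ℕ)) hσ0 hσ1 (by linarith)
  refine ⟨C, fun i φ hφ hφc y ↦ ?_⟩
  have hφm : Measurable fun s ↦ φ (insertCoord i y s) :=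
    (hφ.continuous.comp (isometry_insertCoord i y).continuous).measurable
  set ψ : Euc (n + 1) → ℝ := fun x ↦ ‖φ x‖ ^ twoStar (n + 1) 1
  have hψ : ContDiff ℝ 1 ψ := hφ.norm_rpow (by linarith)
  have hψc : HasCompactSupport ψ := hφc.comp_left (g := fun a : ℝ ↦ ‖a‖ ^ twoStar (n + 1) 1)
    (by simp [(by linarith : twoStar (n + 1) 1 ≠ 0)])
  set B := ∫⁻ s, ‖fderiv ℝ ψ (insertCoord i y s)‖ₑ
  have hB (s : ℝ) : ‖φ (insertCoord i y s)‖ₑ ^ twoStar (n + 1) 0 ≤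
      B ^ (twoStar (n + 1) 0 / twoStar (n + 1) 1) := by
    have h := enorm_insertCoord_le_lintegral_enorm_fderiv i hψ hψc y s
    rw [enorm_norm_rpow _ (by linarith)] at h
    calc ‖φ (insertCoord i y s)‖ₑ ^ twoStar (n + 1) 0
        = (‖φ (insertCoord i y s)‖ₑ ^ twoStar (n + 1) 1) ^
            (twoStar (n + 1) 0 / twoStar (n + 1) 1) := by
          rw [← ENNReal.rpow_mul, mul_div_cancel₀ _ (by linarith)]
      _ ≤ _ := by gcongr
  have h := hC _ _ (hφm.enorm.pow_const _) hB
  simp only [← ENNReal.rpow_mul, twoStar_zero_mul hn] at h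
  have hexp : twoStar (n + 1) 0 / twoStar (n + 1) 1 * (σ - σ / (n + 1 : ℕ)) = σ := by
    have : ((n + 1 : ℕ) : ℝ) - 1 ≠ 0 := by linarith
    rw [twoStar_zero_div_twoStar_one hn]
    field
  rwa [hexp] at h

lemma exists_hsLIntegral_abs_coord_le (hn : 3 ≤ n + 1) {σ : ℝ} (hσ0 : 0 ≤ σ) (hσ1 : σ < 1) :
    ∃ C : ℝ≥0, ∀ (i : Fin (n + 1)) (φ : Euc (n + 1) → ℝ), ContDiff ℝ 1 φ → HasCompactSupport φ →
      hsLIntegral (fun x ↦ |x i|) σ φ ≤ C * ((∫⁻ x, ‖φ x‖ₑ ^ twoStar (n + 1) 0) ^ (1 - σ / 2) *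
        eLpNorm (fderiv ℝ φ) 2 volume ^ σ) := by
  obtain ⟨C, hC⟩ := exists_lintegral_insertCoord_le hn hσ0 hσ1
  refine ⟨C * (twoStar (n + 1) 1).toNNReal ^ σ, fun i φ hφ hφc ↦ ?_⟩
  have hp1 := two_le_twoStar hn one_le_two
  set X := ∫⁻ x, ‖φ x‖ₑ ^ twoStar (n + 1) 0
  set a := eLpNorm (fderiv ℝ φ) 2 volume
  set g : Euc (n + 1) → ℝ≥0∞ := fun x ↦ ‖fderiv ℝ (fun x ↦ ‖φ x‖ ^ twoStar (n + 1) 1) x‖ₑ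
  have hφm : Measurable φ := hφ.continuous.measurable
  have hgm : Measurable g := (measurable_fderiv ℝ _).enorm
  have hins := (measurePreserving_insertCoord i).measurable
  have hg : ∫⁻ x, g x ≤ ENNReal.ofReal (twoStar (n + 1) 1) * (X ^ (1 / 2 : ℝ) * a) := by
    have h := lintegral_mul_enorm_fderiv_norm_rpow_le hφ (p := twoStar (n + 1) 1) (by linarith)
      (W := 1) measurable_const
    simpa only [Pi.one_apply, one_mul, ENNReal.one_rpow, two_mul_twoStar_sub_two hn, mul_one,
      sub_self] using h
  calc hsLIntegral (fun x ↦ |x i|) σ φ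
      = ∫⁻ y, ∫⁻ s, ENNReal.ofReal (|s| ^ (-σ)) *
          ‖φ (insertCoord i y s)‖ₑ ^ twoStar (n + 1) σ := by
        rw [hsLIntegral, lintegral_eq_lintegral_insertCoord i (by fun_prop)]
        simp only [insertCoord_apply_same]
    _ ≤ ∫⁻ y, C * ((∫⁻ s, ‖φ (insertCoord i y s)‖ₑ ^ twoStar (n + 1) 0) ^ (1 - σ) *
          (∫⁻ s, g (insertCoord i y s)) ^ σ) := lintegral_mono (hC i φ hφ hφc)
    _ ≤ C * (X ^ (1 - σ) * (∫⁻ x, g x) ^ σ) := by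
        rw [lintegral_const_mul' _ _ ENNReal.coe_ne_top, lintegral_eq_lintegral_insertCoord i
          hgm.aemeasurable, show X = _ from lintegral_eq_lintegral_insertCoord i (by fun_prop)]
        gcongr
        exact ENNReal.lintegral_mul_norm_pow_le (by fun_prop) (by fun_prop) (by linarith) hσ0
          (by ring)
    _ ≤ C * (X ^ (1 - σ) * (ENNReal.ofReal (twoStar (n + 1) 1) * (X ^ (1 / 2 : ℝ) * a)) ^ σ) := by
        gcongr
    _ = _ := by
        rw [ENNReal.mul_rpow_of_nonneg _ _ hσ0, ENNReal.mul_rpow_of_nonneg _ _ hσ0,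
          ← ENNReal.rpow_mul, show 1 - σ / 2 = (1 - σ) + 1 / 2 * σ by ring,
          ENNReal.rpow_add_of_nonneg _ _ (by linarith) (by linarith), ENNReal.coe_mul,
          ENNReal.coe_rpow_of_nonneg _ hσ0, ENNReal.ofReal]
        ring

end CoordinateWeight

section RegularizedNorm

variable {N : ℕ} (J : Finset (Fin N)) {ε : ℝ}

/-- The norm of the components of `x` indexed by `J`, regularised at its zeros when `ε ≠ 0`. For
`ε = 0` and `J = {i | k ≤ i}` it is `zNorm N k`. -/
def regNorm (ε : ℝ) (x : Euc N) : ℝ := √(∑ i ∈ J, x i ^ 2 + ε ^ 2)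

lemma continuous_regNorm : Continuous fun p : ℝ × Euc N ↦ regNorm J p.1 p.2 := by
  unfold regNorm
  fun_prop

lemma measurable_regNorm (ε : ℝ) : Measurable (regNorm J ε) :=
  ((continuous_regNorm J).comp (.prodMk_right ε)).measurable

lemma regNorm_pos (hε : ε ≠ 0) (x : Euc N) : 0 < regNorm J ε x :=
  Real.sqrt_pos.2 (by positivity)

lemma sum_sq_le_regNorm_sq (x : Euc N) : ∑ i ∈ J, x i ^ 2 ≤ regNorm J ε x ^ 2 := by
  rw [regNorm, Real.sq_sqrt (by positivity)]
  exact le_add_of_nonneg_right (sq_nonneg ε)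

lemma contDiff_regNorm_rpow (hε : ε ≠ 0) (τ : ℝ) : ContDiff ℝ 1 fun x ↦ regNorm J ε x ^ τ := by
  refine ContDiff.rpow_const_of_ne ?_ fun x ↦ (regNorm_pos J hε x).ne'
  unfold regNorm
  exact ContDiff.sqrt (by fun_prop) fun x ↦ by positivity

lemma continuous_regNorm_rpow (hε : ε ≠ 0) (τ : ℝ) : Continuous fun x ↦ regNorm J ε x ^ τ :=
  (contDiff_regNorm_rpow J hε τ).continuous

lemma differentiable_regNorm (hε : ε ≠ 0) : Differentiable ℝ (regNorm J ε) := by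
  simpa using (contDiff_regNorm_rpow J hε 1).differentiable one_ne_zero

lemma fderiv_regNorm_single (hε : ε ≠ 0) {i : Fin N} (hi : i ∈ J) (x : Euc N) :
    fderiv ℝ (regNorm J ε) x (EuclideanSpace.single i 1) = x i / regNorm J ε x := by
  have hsum : HasFDerivAt (fun x : Euc N ↦ ∑ i ∈ J, x i ^ 2 + ε ^ 2)
      (∑ i ∈ J, (2 * x i) • (EuclideanSpace.proj i : Euc N →L[ℝ] ℝ)) x := by
    refine (HasFDerivAt.fun_sum fun i _ ↦ ?_).add_const _
    simpa using ((EuclideanSpace.proj i : Euc N →L[ℝ] ℝ).hasFDerivAt (x := x)).pow 2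
  have h := (hsum.sqrt (by positivity)).fderiv
  change fderiv ℝ (regNorm J ε) x = _ at h
  rw [h]
  simp only [smul_apply, sum_apply, PiLp.proj_apply, PiLp.single_apply, smul_eq_mul, mul_ite,
    mul_one, mul_zero, Finset.sum_ite_eq', hi, ↓reduceIte, regNorm]
  field

lemma fderiv_coord_mul_regNorm_rpow (hε : ε ≠ 0) (τ : ℝ) {i : Fin N} (hi : i ∈ J) (x : Euc N) :
    fderiv ℝ (fun x : Euc N ↦ x i * regNorm J ε x ^ τ) x (EuclideanSpace.single i 1) =
      regNorm J ε x ^ τ + τ * x i ^ 2 * regNorm J ε x ^ (τ - 2) := by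
  have hcoord := (EuclideanSpace.proj i : Euc N →L[ℝ] ℝ).hasFDerivAt (x := x)
  have hpos := regNorm_pos J hε x
  have hrpow := (differentiable_regNorm J hε x).hasFDerivAt.rpow_const (p := τ) (.inl hpos.ne')
  have h := (hcoord.fun_mul hrpow).fderiv
  simp only [PiLp.proj_apply] at h
  rw [h, show τ - 2 = τ - 1 - 1 by ring, Real.rpow_sub_one hpos.ne' (τ - 1)]
  simp only [add_apply, smul_apply, fderiv_regNorm_single J hε hi, smul_eq_mul, PiLp.proj_apply,
    PiLp.single_eq_same, mul_one]
  ring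

lemma card_sub_mul_rpow_le_sum_fderiv (hε : ε ≠ 0) {σ : ℝ} (hσ : 0 ≤ σ) (x : Euc N) :
    (J.card - σ) * regNorm J ε x ^ (-σ) ≤ ∑ i ∈ J,
      fderiv ℝ (fun x : Euc N ↦ x i * regNorm J ε x ^ (-σ)) x (EuclideanSpace.single i 1) := by
  have hpos := regNorm_pos J hε x
  rw [Finset.sum_congr rfl fun i hi ↦ fderiv_coord_mul_regNorm_rpow J hε (-σ) hi x,
    Finset.sum_add_distrib, ← Finset.sum_mul, ← Finset.mul_sum, Finset.sum_const, nsmul_eq_mul]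
  have h : σ * (∑ i ∈ J, x i ^ 2) * regNorm J ε x ^ (-σ - 2) ≤ σ * regNorm J ε x ^ (-σ) := by
    grw [sum_sq_le_regNorm_sq J x, Real.rpow_sub hpos, Real.rpow_two]
    exact le_of_eq (by field)
  linarith

lemma norm_sum_coord_smul_le (x : Euc N) :
    ‖∑ i ∈ J, x i • EuclideanSpace.single i (1 : ℝ)‖ ≤ regNorm J ε x := by
  have happly (j : Fin N) : (∑ i ∈ J, x i • EuclideanSpace.single i (1 : ℝ)) j =
      if j ∈ J then x j else 0 := by
    simp [Pi.single_apply]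
  have hsq : ‖∑ i ∈ J, x i • EuclideanSpace.single i (1 : ℝ)‖ ^ 2 = ∑ i ∈ J, x i ^ 2 := by
    rw [EuclideanSpace.norm_sq_eq]
    simp [happly, ite_pow]
  exact le_of_sq_le_sq (hsq.trans_le (sum_sq_le_regNorm_sq J x)) (Real.sqrt_nonneg _)

lemma integral_sum_fderiv_mul_eq_neg {F : Fin N → Euc N → ℝ} (hF : ∀ i, ContDiff ℝ 1 (F i))
    {ψ : Euc N → ℝ} (hψ : ContDiff ℝ 1 ψ) (hψc : HasCompactSupport ψ) :
    ∫ x, (∑ i ∈ J, fderiv ℝ (F i) x (EuclideanSpace.single i 1)) * ψ x =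
      -∫ x, fderiv ℝ ψ x (∑ i ∈ J, F i x • EuclideanSpace.single i (1 : ℝ)) := by
  have := hψ.continuous_fderiv one_ne_zero
  have hψc' (v : Euc N) : HasCompactSupport fun x ↦ fderiv ℝ ψ x v :=
    (hψc.fderiv (𝕜 := ℝ)).comp_left (g := fun L : Euc N →L[ℝ] ℝ ↦ L v) (by simp)
  have hFψ' (i : Fin N) : Integrable fun x ↦ F i x * fderiv ℝ ψ x (EuclideanSpace.single i 1) :=
    ((hF i).continuous.mul (by fun_prop)).integrable_of_hasCompactSupport (hψc' _).mul_left
  have hF'ψ (i : Fin N) : Integrable fun x ↦ fderiv ℝ (F i) x (EuclideanSpace.single i 1) * ψ x :=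
    ((((hF i).continuous_fderiv one_ne_zero).clm_apply continuous_const).mul
      hψ.continuous).integrable_of_hasCompactSupport hψc.mul_left
  simp only [Finset.sum_mul, map_sum, map_smul, smul_eq_mul]
  rw [integral_finsetSum _ fun i _ ↦ hF'ψ i, integral_finsetSum _ fun i _ ↦ hFψ' i,
    ← Finset.sum_neg_distrib]
  refine Finset.sum_congr rfl fun i _ ↦ ?_
  rw [integral_mul_fderiv_eq_neg_fderiv_mul_of_integrable (hF'ψ i) (hFψ' i)
    (((hF i).continuous.mul hψ.continuous).integrable_of_hasCompactSupport hψc.mul_left)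
    (fun x _ ↦ (hF i).differentiable one_ne_zero x) (fun x _ ↦ hψ.differentiable one_ne_zero x),
    neg_neg]

lemma card_sub_mul_integral_le (hε : ε ≠ 0) {σ : ℝ} (hσ : 0 ≤ σ) {ψ : Euc N → ℝ}
    (hψ : ContDiff ℝ 1 ψ) (hψc : HasCompactSupport ψ) (hψ0 : ∀ x, 0 ≤ ψ x) :
    (J.card - σ) * ∫ x, regNorm J ε x ^ (-σ) * ψ x ≤
      ∫ x, regNorm J ε x ^ (1 - σ) * ‖fderiv ℝ ψ x‖ := by
  have hψ' := hψ.continuous_fderiv one_ne_zero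
  have hψc' := hψc.fderiv (𝕜 := ℝ)
  have hρ := continuous_regNorm_rpow J hε
  have hF (i : Fin N) : ContDiff ℝ 1 fun x : Euc N ↦ x i * regNorm J ε x ^ (-σ) :=
    ContDiff.mul (by fun_prop) (contDiff_regNorm_rpow J hε _)
  have hF' (i : Fin N) := (hF i).continuous_fderiv one_ne_zero
  have hflux (x : Euc N) : -fderiv ℝ ψ x (∑ i ∈ J,
      (x i * regNorm J ε x ^ (-σ)) • EuclideanSpace.single i (1 : ℝ)) ≤
        regNorm J ε x ^ (1 - σ) * ‖fderiv ℝ ψ x‖ := by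
    have hpos := regNorm_pos J hε x
    grw [neg_le_abs, ← Real.norm_eq_abs, ContinuousLinearMap.le_opNorm, mul_comm]
    simp only [mul_comm (x _), mul_smul, ← Finset.smul_sum, norm_smul]
    grw [norm_sum_coord_smul_le J (ε := ε), Real.norm_of_nonneg (by positivity),
      ← Real.rpow_add_one hpos.ne', neg_add_eq_sub]
  calc (J.card - σ) * ∫ x, regNorm J ε x ^ (-σ) * ψ x
      = ∫ x, (J.card - σ) * regNorm J ε x ^ (-σ) * ψ x := by
        simp only [mul_assoc, integral_const_mul]
    _ ≤ ∫ x, (∑ i ∈ J, fderiv ℝ (fun x : Euc N ↦ x i * regNorm J ε x ^ (-σ)) x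
          (EuclideanSpace.single i 1)) * ψ x := by
        refine integral_mono ?_ ?_ fun x ↦ mul_le_mul_of_nonneg_right
          (card_sub_mul_rpow_le_sum_fderiv J hε hσ x) (hψ0 x)
        · exact (Continuous.mul (by fun_prop) hψ.continuous).integrable_of_hasCompactSupport
            hψc.mul_left
        · exact (Continuous.mul (by fun_prop) hψ.continuous).integrable_of_hasCompactSupport
            hψc.mul_left
    _ = ∫ x, -fderiv ℝ ψ x (∑ i ∈ J,
          (x i * regNorm J ε x ^ (-σ)) • EuclideanSpace.single i (1 : ℝ)) := by
        rw [integral_sum_fderiv_mul_eq_neg J hF hψ hψc, integral_neg]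
    _ ≤ _ := by
        refine integral_mono ?_ ?_ hflux
        · exact (by fun_prop : Continuous _).integrable_of_hasCompactSupport
            (hψc'.mono fun x hx h ↦ hx (by simp [h]))
        · exact ((hρ _).mul hψ'.norm).integrable_of_hasCompactSupport hψc'.norm.mul_left

lemma hsLIntegral_regNorm_ne_top (hε : ε ≠ 0) {σ : ℝ} (hp : 0 < twoStar N σ) {φ : Euc N → ℝ}
    (hφ : Continuous φ) (hφc : HasCompactSupport φ) : hsLIntegral (regNorm J ε) σ φ ≠ ∞ := by
  have hint : Integrable fun x ↦ regNorm J ε x ^ (-σ) * ‖φ x‖ ^ twoStar N σ :=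
    ((continuous_regNorm_rpow J hε _).mul (hφ.norm.rpow_const fun _ ↦ .inr hp.le)
      ).integrable_of_hasCompactSupport (hφc.mono fun x hx h ↦ hx (by simp [h, hp.ne']))
  have hfin : ∫⁻ x, ‖regNorm J ε x ^ (-σ) * ‖φ x‖ ^ twoStar N σ‖ₑ ≠ ∞ := hint.2.ne
  convert hfin using 1
  refine lintegral_congr fun x ↦ ?_
  rw [enorm_mul, enorm_norm_rpow _ hp.le,
    Real.enorm_of_nonneg (Real.rpow_nonneg (regNorm_pos J hε x).le _)]

lemma ofReal_card_sub_mul_hsLIntegral_le (hN : 3 ≤ N) (hε : ε ≠ 0) {σ : ℝ} (hσ0 : 0 ≤ σ)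
    (hσ2 : σ ≤ 2) (hσJ : σ ≤ J.card) {φ : Euc N → ℝ} (hφ : ContDiff ℝ 1 φ)
    (hφc : HasCompactSupport φ) :
    ENNReal.ofReal (J.card - σ) * hsLIntegral (regNorm J ε) σ φ ≤ ENNReal.ofReal (twoStar N σ) *
      (hsLIntegral (regNorm J ε) (2 * σ - 2) φ ^ (1 / 2 : ℝ) *
        eLpNorm (fderiv ℝ φ) 2 volume) := by
  have hp := two_le_twoStar hN hσ2
  have hρ0 (x : Euc N) (τ : ℝ) : 0 ≤ regNorm J ε x ^ τ :=
    Real.rpow_nonneg (regNorm_pos J hε x).le τ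
  set ψ : Euc N → ℝ := fun x ↦ ‖φ x‖ ^ twoStar N σ
  have hψ : ContDiff ℝ 1 ψ := hφ.norm_rpow (by linarith)
  have hψc : HasCompactSupport ψ := hφc.comp_left (g := fun a : ℝ ↦ ‖a‖ ^ twoStar N σ)
    (by simp [(by linarith : twoStar N σ ≠ 0)])
  have hψ0 (x : Euc N) : 0 ≤ ψ x := by positivity
  have hmain : ENNReal.ofReal (J.card - σ) * hsLIntegral (regNorm J ε) σ φ ≤
      ∫⁻ x, ENNReal.ofReal (regNorm J ε x ^ (1 - σ)) * ‖fderiv ℝ ψ x‖ₑ := by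
    have hint {τ : ℝ} {f : Euc N → ℝ} (hf : Continuous f) (hfc : HasCompactSupport f) :
        Integrable fun x ↦ regNorm J ε x ^ τ * f x :=
      ((continuous_regNorm_rpow J hε _).mul hf).integrable_of_hasCompactSupport hfc.mul_left
    have h := ENNReal.ofReal_le_ofReal (card_sub_mul_integral_le J hε hσ0 hψ hψc hψ0)
    rw [ENNReal.ofReal_mul (by linarith),
      ofReal_integral_eq_lintegral_ofReal (hint hψ.continuous hψc)
        (.of_forall fun x ↦ mul_nonneg (hρ0 x _) (hψ0 x)),
      ofReal_integral_eq_lintegral_ofReal (hint (hψ.continuous_fderiv one_ne_zero).norm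
        (hψc.fderiv (𝕜 := ℝ)).norm)
        (.of_forall fun x ↦ mul_nonneg (hρ0 x _) (norm_nonneg _))] at h
    simpa only [ENNReal.ofReal_mul (hρ0 _ _), ofReal_norm, ← Real.enorm_of_nonneg (hψ0 _), ψ,
      enorm_norm_rpow _ (by linarith : 0 ≤ twoStar N σ), hsLIntegral] using h
  refine hmain.trans ((lintegral_mul_enorm_fderiv_norm_rpow_le hφ (by linarith)
    ((measurable_regNorm J ε).pow_const _).ennreal_ofReal).trans_eq ?_)
  have hsq (x : Euc N) : ENNReal.ofReal (regNorm J ε x ^ (1 - σ)) ^ (2 : ℝ) =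
      ENNReal.ofReal (regNorm J ε x ^ (-(2 * σ - 2))) := by
    rw [ENNReal.ofReal_rpow_of_nonneg (hρ0 x _) zero_le_two,
      ← Real.rpow_mul (regNorm_pos J hε x).le]
    ring_nf
  simp only [hsq, two_mul_twoStar_sub_two hN, hsLIntegral]

lemma le_rpow_of_le_mul_rpow {x b : ℝ≥0∞} (hx : x ≠ ∞) {σ : ℝ} (hσ : 0 < σ)
    (h : x ≤ b * x ^ (1 - 1 / σ)) : x ≤ b ^ σ := by
  rcases eq_or_ne x 0 with rfl | hx0
  · exact zero_le
  have hsplit : x = x ^ (1 / σ) * x ^ (1 - 1 / σ) := by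
    rw [← ENNReal.rpow_add _ _ hx0 hx, add_sub_cancel, ENNReal.rpow_one]
  nth_rw 1 [hsplit] at h
  rw [ENNReal.mul_le_mul_iff_left (by simp [hx0, hx]) (by simp [hx0, hx])] at h
  rwa [one_div, ENNReal.rpow_inv_le_iff hσ] at h

lemma hsLIntegral_regNorm_le (hN : 3 ≤ N) (hε : ε ≠ 0) {σ : ℝ} (hσ1 : 1 ≤ σ) (hσ2 : σ ≤ 2)
    (hσJ : σ < J.card) {φ : Euc N → ℝ} (hφ : ContDiff ℝ 1 φ) (hφc : HasCompactSupport φ) :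
    hsLIntegral (regNorm J ε) σ φ ≤
      (ENNReal.ofReal (twoStar N σ) / ENNReal.ofReal (J.card - σ)) ^ σ *
        ((∫⁻ x, ‖φ x‖ₑ ^ twoStar N 0) ^ (1 - σ / 2) * eLpNorm (fderiv ℝ φ) 2 volume ^ σ) := by
  have hp := two_le_twoStar hN hσ2
  have hp0 := two_le_twoStar hN zero_le_two
  have hσ0 : 0 < σ := by linarith
  have hφm : Measurable φ := hφ.continuous.measurable
  set I := hsLIntegral (regNorm J ε) σ φ
  set X := ∫⁻ x, ‖φ x‖ₑ ^ twoStar N 0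
  set a := eLpNorm (fderiv ℝ φ) 2 volume
  have hinterp : hsLIntegral (regNorm J ε) (2 * σ - 2) φ ≤ X ^ (2 / σ - 1) * I ^ (2 - 2 / σ) := by
    have h2σ : 2 / σ ≤ 2 := by rw [div_le_iff₀ hσ0]; linarith
    have h1σ : 1 ≤ 2 / σ := by rwa [le_div_iff₀ hσ0, one_mul]
    have h := hsLIntegral_interpolate_le (measurable_regNorm J ε)
      (.of_forall (regNorm_pos J hε)) (hφm.enorm.aemeasurable) (a := 0) (b := σ)
      (θ := 2 - 2 / σ) (by linarith) (by linarith) (by linarith) (by linarith)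
    rwa [hsLIntegral_zero_right, show 1 - (2 - 2 / σ) = 2 / σ - 1 by ring,
      show (2 / σ - 1) * 0 + (2 - 2 / σ) * σ = 2 * σ - 2 by field] at h
  have habsorb : I ≤ ENNReal.ofReal (twoStar N σ) / ENNReal.ofReal (J.card - σ) *
      (X ^ (1 / σ - 1 / 2) * a) * I ^ (1 - 1 / σ) := by
    have h := ofReal_card_sub_mul_hsLIntegral_le J hN hε hσ0.le hσ2 hσJ.le hφ hφc
    grw [hinterp, ENNReal.mul_rpow_of_nonneg _ _ (by positivity), ← ENNReal.rpow_mul,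
      ← ENNReal.rpow_mul] at h
    rw [← ENNReal.mul_div_right_comm, ← ENNReal.mul_div_right_comm, ENNReal.le_div_iff_mul_le
      (.inl (by simpa using hσJ)) (.inl ENNReal.ofReal_ne_top), mul_comm I]
    refine h.trans_eq ?_
    change _ * (_ * a) = _
    ring_nf
  refine (le_rpow_of_le_mul_rpow (hsLIntegral_regNorm_ne_top J hε (by linarith) hφ.continuous hφc)
    hσ0 habsorb).trans_eq ?_
  rw [ENNReal.mul_rpow_of_nonneg _ _ hσ0.le, ENNReal.mul_rpow_of_nonneg _ _ hσ0.le,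
    ← ENNReal.rpow_mul]
  congr 4
  field

end RegularizedNorm

section ZNorm

variable {N k : ℕ}

lemma zNorm_eq_regNorm : zNorm N k = regNorm {i | k ≤ i} 0 := by
  ext x
  simp [zNorm, regNorm, Finset.sum_filter]

lemma measurable_zNorm : Measurable (zNorm N k) :=
  zNorm_eq_regNorm ▸ measurable_regNorm _ 0

lemma abs_coord_le_zNorm {i : Fin N} (hi : k ≤ i) (x : Euc N) : |x i| ≤ zNorm N k x := by
  rw [← Real.sqrt_sq_eq_abs, zNorm, ← Finset.sum_filter]
  exact Real.sqrt_le_sqrt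
    (Finset.single_le_sum (f := fun j ↦ x j ^ 2) (fun j _ ↦ sq_nonneg (x j)) (by simpa using hi))

lemma zNorm_last (n : ℕ) (x : Euc (n + 1)) : zNorm (n + 1) n x = |x (Fin.last n)| := by
  have hlt (i : Fin n) : ¬n ≤ (i : ℕ) := by omega
  simp [zNorm, Fin.sum_univ_castSucc, hlt, Real.sqrt_sq_eq_abs]

lemma ae_coord_ne_zero (i : Fin N) : ∀ᵐ x : Euc N, x i ≠ 0 := by
  have h := Measure.addHaar_submodule (volume : Measure (Euc N))
    (EuclideanSpace.proj i : Euc N →L[ℝ] ℝ).ker fun h ↦ by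
      have : EuclideanSpace.single i (1 : ℝ) ∈ (EuclideanSpace.proj i : Euc N →L[ℝ] ℝ).ker :=
        h ▸ Submodule.mem_top
      simp at this
  exact measure_eq_zero_iff_ae_notMem.1 h

lemma ae_zNorm_pos (hk : k < N) : ∀ᵐ x : Euc N, 0 < zNorm N k x := by
  filter_upwards [ae_coord_ne_zero (⟨N - 1, by omega⟩ : Fin N)] with x hx
  exact (abs_pos.2 hx).trans_le (abs_coord_le_zNorm (by simpa using Nat.le_sub_one_of_lt hk) x)

lemma hsLIntegral_zNorm_le_of_lt_sub (hN : 3 ≤ N) (hk : k < N) {σ : ℝ} (hσ1 : 1 ≤ σ) (hσ2 : σ ≤ 2)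
    (hσk : σ < N - k) {φ : Euc N → ℝ} (hφ : ContDiff ℝ 1 φ) (hφc : HasCompactSupport φ) :
    hsLIntegral (zNorm N k) σ φ ≤
      (ENNReal.ofReal (twoStar N σ) / ENNReal.ofReal (N - k - σ)) ^ σ *
        ((∫⁻ x, ‖φ x‖ₑ ^ twoStar N 0) ^ (1 - σ / 2) * eLpNorm (fderiv ℝ φ) 2 volume ^ σ) := by
  set J : Finset (Fin N) := {i | k ≤ i}
  have hcard : (J.card : ℝ) = N - k := by
    have hJ : J = Finset.Ici ⟨k, hk⟩ := by
      ext i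
      simp [J, Fin.le_def]
    rw [hJ, Fin.card_Ici, Nat.cast_sub hk.le]
  have hlim (x : Euc N) :
      Tendsto (fun j : ℕ ↦ regNorm J (1 / ((j : ℝ) + 1)) x) atTop (nhds (zNorm N k x)) := by
    rw [zNorm_eq_regNorm]
    exact ((continuous_regNorm J).comp (.prodMk_left x)).continuousAt.tendsto.comp
      tendsto_one_div_add_atTop_nhds_zero_nat
  refine (hsLIntegral_le_liminf (by linarith [two_le_twoStar hN hσ2])
    (fun j ↦ measurable_regNorm J _) (fun _ ↦ hφ.continuous.measurable) (ae_zNorm_pos hk) hlim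
    (.of_forall fun _ ↦ tendsto_const_nhds)).trans ?_
  rw [← hcard] at hσk ⊢
  exact liminf_le_of_le (by isBoundedDefault) fun b hb ↦ by
    obtain ⟨j, hj⟩ := hb.exists
    exact hj.trans (hsLIntegral_regNorm_le J hN (by positivity) hσ1 hσ2 hσk hφ hφc)

lemma exists_hsLIntegral_zNorm_le (hN : 3 ≤ N) (hk : k < N) {σ : ℝ} (hσ0 : 0 ≤ σ) (hσ2 : σ ≤ 2)
    (hσk : σ < N - k) : ∃ K : ℝ≥0, ∀ φ : Euc N → ℝ, ContDiff ℝ 1 φ → HasCompactSupport φ →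
      hsLIntegral (zNorm N k) σ φ ≤ K * eLpNorm (fderiv ℝ φ) 2 volume ^ twoStar N σ := by
  obtain ⟨S, hS⟩ := exists_lintegral_enorm_rpow_twoStar_le hN
  suffices ∃ C : ℝ≥0, ∀ φ : Euc N → ℝ, ContDiff ℝ 1 φ → HasCompactSupport φ →
      hsLIntegral (zNorm N k) σ φ ≤ C * ((∫⁻ x, ‖φ x‖ₑ ^ twoStar N 0) ^ (1 - σ / 2) *
        eLpNorm (fderiv ℝ φ) 2 volume ^ σ) by
    obtain ⟨C, hC⟩ := this
    refine ⟨C * S ^ (1 - σ / 2), fun φ hφ hφc ↦ ?_⟩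
    grw [hC φ hφ hφc, rpow_mul_rpow_le_rpow_twoStar hN hσ0 hσ2 (hS φ hφ hφc), ENNReal.coe_mul,
      ENNReal.coe_rpow_of_nonneg _ (by linarith), mul_assoc]
  rcases lt_or_ge σ 1 with hσ1 | hσ1
  · obtain ⟨n, rfl⟩ := Nat.exists_eq_add_one_of_ne_zero (by omega : N ≠ 0)
    obtain ⟨C, hC⟩ := exists_hsLIntegral_abs_coord_le hN hσ0 hσ1
    have hpos : ∀ᵐ x : Euc (n + 1), 0 < |x (Fin.last n)| :=
      (ae_coord_ne_zero (Fin.last n)).mono fun _ ↦ abs_pos.2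
    exact ⟨C, fun φ hφ hφc ↦ (hsLIntegral_anti hpos
      (abs_coord_le_zNorm (Nat.le_of_lt_succ hk)) hσ0 φ).trans (hC _ φ hφ hφc)⟩
  · have hfin : (ENNReal.ofReal (twoStar N σ) / ENNReal.ofReal (N - k - σ)) ^ σ ≠ ∞ :=
      ENNReal.rpow_ne_top_of_nonneg hσ0
        (ENNReal.div_ne_top ENNReal.ofReal_ne_top (ENNReal.ofReal_pos.2 (sub_pos.2 hσk)).ne')
    lift (ENNReal.ofReal (twoStar N σ) / ENNReal.ofReal (N - k - σ)) ^ σ to ℝ≥0 using hfin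
      with C hC
    exact ⟨C, fun φ hφ hφc ↦ hC ▸ hsLIntegral_zNorm_le_of_lt_sub hN hk hσ1 hσ2 hσk hφ hφc⟩

end ZNorm

lemma eLpNorm_two_rpow_two {α E : Type*} [MeasurableSpace α] {μ : Measure α}
    [NormedAddCommGroup E] (f : α → E) :
    eLpNorm f 2 μ ^ (2 : ℝ) = ∫⁻ x, ‖f x‖ₑ ^ (2 : ℝ) ∂μ := by
  simpa using eLpNorm_nnreal_pow_eq_lintegral (f := f) (μ := μ) (p := 2) two_ne_zero

namespace MemD12

variable {N : ℕ} {v : Euc N → ℝ}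

lemma exists_seq_tendsto (hN : 3 ≤ N) (hv : MemD12 N v) (hvm : AEMeasurable fun x ↦ ‖v x‖ₑ) :
    ∃ φ : ℕ → Euc N → ℝ, (∀ j, ContDiff ℝ 1 (φ j)) ∧ (∀ j, HasCompactSupport (φ j)) ∧
      (∀ᵐ x, Tendsto (fun j ↦ ‖φ j x‖ₑ) atTop (nhds ‖v x‖ₑ)) ∧
      Tendsto (fun j ↦ eLpNorm (fderiv ℝ v - fderiv ℝ (φ j)) 2 volume) atTop (nhds 0) := by
  obtain ⟨φ, hφ, hφv, hdφ⟩ := hv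
  have hp : ENNReal.ofReal (2 * (N : ℝ) / ((N : ℝ) - 2)) ≠ 0 := by
    have : (3 : ℝ) ≤ N := mod_cast hN
    have : 0 < (N : ℝ) - 2 := by linarith
    exact (ENNReal.ofReal_pos.2 (by positivity)).ne'
  have hnorm : AEStronglyMeasurable (fun x ↦ ‖v x‖) := by
    simpa using hvm.ennreal_toReal.aestronglyMeasurable
  have hlim : Tendsto (fun j ↦ eLpNorm ((fun x ↦ ‖φ j x‖) - fun x ↦ ‖v x‖)
      (ENNReal.ofReal (2 * (N : ℝ) / ((N : ℝ) - 2))) volume) atTop (nhds 0) := by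
    refine tendsto_of_tendsto_of_tendsto_of_le_of_le tendsto_const_nhds hφv (fun _ ↦ zero_le)
      fun j ↦ eLpNorm_mono fun x ↦ ?_
    rw [norm_sub_rev]
    exact abs_norm_sub_norm_le _ _
  obtain ⟨ns, hns, hae⟩ := (tendstoInMeasure_of_tendsto_eLpNorm hp
    (fun j ↦ (hφ j).1.continuous.norm.aestronglyMeasurable) hnorm hlim).exists_seq_tendsto_ae
  refine ⟨fun j ↦ φ (ns j), fun j ↦ (hφ _).1.of_le (mod_cast le_top), fun j ↦ (hφ _).2, ?_,
    hdφ.comp hns.tendsto_atTop⟩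
  filter_upwards [hae] with x hx
  simpa only [ofReal_norm] using ENNReal.tendsto_ofReal hx

lemma eLpNorm_fderiv_ne_top (hv : MemD12 N v) : eLpNorm (fderiv ℝ v) 2 volume ≠ ∞ := by
  obtain ⟨φ, hφ, -, hdφ⟩ := hv
  obtain ⟨j, hj⟩ := (hdφ.eventually_lt_const one_pos).exists
  have hφj : eLpNorm (fderiv ℝ (φ j)) 2 volume < ∞ :=
    (((hφ j).1.continuous_fderiv (by simp)).memLp_of_hasCompactSupport
      ((hφ j).2.fderiv (𝕜 := ℝ))).eLpNorm_lt_top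
  have hadd := eLpNorm_add_le (μ := volume) (p := 2)
    ((measurable_fderiv ℝ v).sub (measurable_fderiv ℝ (φ j))).aestronglyMeasurable
    (measurable_fderiv ℝ (φ j)).aestronglyMeasurable one_le_two
  rw [sub_add_cancel] at hadd
  exact (hadd.trans_lt (ENNReal.add_lt_top.2 ⟨hj.trans ENNReal.one_lt_top, hφj⟩)).ne

lemma hsLIntegral_le (hN : 3 ≤ N) (hv : MemD12 N v) (hvm : AEMeasurable fun x ↦ ‖v x‖ₑ)
    {ρ : Euc N → ℝ} (hρm : Measurable ρ) (hρ : ∀ᵐ x, 0 < ρ x) {σ : ℝ} (hσ : σ ≤ 2) {K : ℝ≥0}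
    (hK : ∀ φ : Euc N → ℝ, ContDiff ℝ 1 φ → HasCompactSupport φ →
      hsLIntegral ρ σ φ ≤ K * eLpNorm (fderiv ℝ φ) 2 volume ^ twoStar N σ) :
    hsLIntegral ρ σ v ≤ K * eLpNorm (fderiv ℝ v) 2 volume ^ twoStar N σ := by
  obtain ⟨φ, hφ, hφc, hφv, hdφ⟩ := hv.exists_seq_tendsto hN hvm
  have hp := two_le_twoStar hN hσ
  have hgrad (j : ℕ) : eLpNorm (fderiv ℝ (φ j)) 2 volume ≤
      eLpNorm (fderiv ℝ v) 2 volume + eLpNorm (fderiv ℝ v - fderiv ℝ (φ j)) 2 volume := by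
    have h := eLpNorm_sub_le (μ := volume) (p := 2) (measurable_fderiv ℝ v).aestronglyMeasurable
      ((measurable_fderiv ℝ v).sub (measurable_fderiv ℝ (φ j))).aestronglyMeasurable one_le_two
    rwa [sub_sub_cancel] at h
  have hlim := ENNReal.Tendsto.const_mul (a := K)
    ((hdφ.const_add (eLpNorm (fderiv ℝ v) 2 volume)).ennrpow_const (twoStar N σ))
    (.inr ENNReal.coe_ne_top)
  rw [add_zero] at hlim
  refine (hsLIntegral_le_liminf (by linarith) (fun _ ↦ hρm)
    (fun j ↦ (hφ j).continuous.measurable) hρ (fun _ ↦ tendsto_const_nhds) hφv).trans ?_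
  rw [← hlim.liminf_eq]
  refine liminf_le_liminf (.of_forall fun j ↦ ?_)
  grw [hK _ (hφ j) (hφc j), hgrad j]

lemma ae_enorm_insertCoord_le {n : ℕ} {v : Euc (n + 1) → ℝ} (hn : 3 ≤ n + 1)
    (hv : MemD12 (n + 1) v) (hvm : AEMeasurable fun x ↦ ‖v x‖ₑ) (i : Fin (n + 1)) :
    ∀ᵐ y, ∀ᵐ s, ∀ᵐ s', ‖v (insertCoord i y s)‖ₑ ≤ ‖v (insertCoord i y s')‖ₑ +
      ∫⁻ r in uIoc s' s, ‖fderiv ℝ v (insertCoord i y r)‖ₑ := by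
  obtain ⟨φ, hφ, -, hφv, hdφ⟩ := hv.exists_seq_tendsto hn hvm
  set D : ℕ → Euc (n + 1) → ℝ≥0∞ := fun j x ↦ ‖fderiv ℝ v x - fderiv ℝ (φ j) x‖ₑ
  have hD (j : ℕ) : Measurable (D j) :=
    ((measurable_fderiv ℝ v).sub (measurable_fderiv ℝ (φ j))).enorm
  have hins := (measurePreserving_insertCoord i).measurable
  have hDlim : Tendsto (fun j ↦ ∫⁻ y, ∫⁻ s, D j (insertCoord i y s) ^ (2 : ℝ)) atTop
      (nhds 0) := by
    have h := hdφ.ennrpow_const 2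
    rw [ENNReal.zero_rpow_of_pos two_pos] at h
    refine h.congr fun j ↦ ?_
    rw [← lintegral_eq_lintegral_insertCoord i ((hD j).pow_const 2).aemeasurable,
      eLpNorm_two_rpow_two]
    rfl
  obtain ⟨ns, hns, hslice⟩ := exists_strictMono_ae_tendsto_zero_of_tendsto_lintegral
    (fun j ↦ (((hD j).pow_const 2).comp hins).lintegral_prod_right'.aemeasurable) hDlim
  filter_upwards [hslice, ae_ae_insertCoord i hφv] with y hy hφy
  have hy_meas := (isometry_insertCoord i y).continuous.measurable
  have hder (j : ℕ) (r : ℝ) : ‖deriv (φ (ns j) ∘ insertCoord i y) r‖ₑ ≤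
      ‖fderiv ℝ v (insertCoord i y r)‖ₑ + D (ns j) (insertCoord i y r) := by
    grw [enorm_deriv_comp_insertCoord_le i ((hφ _).differentiable one_ne_zero), ← enorm_sub_le,
      sub_sub_cancel]
  filter_upwards [hφy] with s hs
  filter_upwards [hφy] with s' hs'
  exact enorm_le_add_setLIntegral_uIoc_of_tendsto (u := v ∘ insertCoord i y)
    (fun j ↦ (hφ (ns j)).comp (contDiff_insertCoord i y))
    ((measurable_fderiv ℝ v).comp hy_meas).enorm (fun j ↦ (hD (ns j)).comp hy_meas) hder hy
    (hs.comp hns.tendsto_atTop) (hs'.comp hns.tendsto_atTop)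

lemma hsLIntegral_abs_coord_two_le {n : ℕ} {v : Euc (n + 1) → ℝ} (hn : 3 ≤ n + 1)
    (hv : MemD12 (n + 1) v) (hvm : AEMeasurable fun x ↦ ‖v x‖ₑ) (i : Fin (n + 1)) {σ : ℝ}
    (hσ1 : 1 ≤ σ) (hσ2 : σ ≤ 2) (hfin : hsLIntegral (fun x ↦ |x i|) σ v ≠ ∞) :
    hsLIntegral (fun x ↦ |x i|) 2 v ≤ 4 * eLpNorm (fderiv ℝ v) 2 volume ^ (2 : ℝ) := by
  have hp := two_le_twoStar hn hσ2
  have hins := (measurePreserving_insertCoord i).quasiMeasurePreserving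
  have hmeas (τ : ℝ) : AEMeasurable fun x : Euc (n + 1) ↦
      ENNReal.ofReal (|x i| ^ (-τ)) * ‖v x‖ₑ ^ twoStar (n + 1) τ := by fun_prop
  have hslice : ∀ᵐ y, ∫⁻ s, ENNReal.ofReal (|s| ^ (-σ)) *
      ‖v (insertCoord i y s)‖ₑ ^ twoStar (n + 1) σ < ∞ := by
    rw [hsLIntegral, lintegral_eq_lintegral_insertCoord i (hmeas σ)] at hfin
    simpa only [Function.comp_apply, insertCoord_apply_same] using
      ae_lt_top' ((hmeas σ).comp_quasiMeasurePreserving hins).lintegral_prod_right' hfin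
  have hgrad : eLpNorm (fderiv ℝ v) 2 volume ^ (2 : ℝ) =
      ∫⁻ y, ∫⁻ s, ‖fderiv ℝ v (insertCoord i y s)‖ₑ ^ (2 : ℝ) := by
    rw [eLpNorm_two_rpow_two,
      lintegral_eq_lintegral_insertCoord i ((measurable_fderiv ℝ v).enorm.pow_const 2).aemeasurable]
  rw [hgrad, hsLIntegral, lintegral_eq_lintegral_insertCoord i (hmeas 2),
    ← lintegral_const_mul' _ _ (by finiteness)]
  refine lintegral_mono_ae ?_
  filter_upwards [hslice, hv.ae_enorm_insertCoord_le hn hvm i] with y hy hvy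
  have htrace := ae_le_setLIntegral_uIoc_of_lintegral_ne_top hσ1 (by linarith) hy.ne hvy
  have hG : Measurable fun s ↦ ‖fderiv ℝ v (insertCoord i y s)‖ₑ :=
    ((measurable_fderiv ℝ v).comp (isometry_insertCoord i y).continuous.measurable).enorm
  simp only [insertCoord_apply_same, twoStar_two hn]
  calc ∫⁻ s, ENNReal.ofReal (|s| ^ (-2 : ℝ)) * ‖v (insertCoord i y s)‖ₑ ^ (2 : ℝ)
      ≤ ∫⁻ s, ENNReal.ofReal (|s| ^ (-2 : ℝ)) *
          (∫⁻ r in uIoc 0 s, ‖fderiv ℝ v (insertCoord i y r)‖ₑ) ^ (2 : ℝ) := by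
        refine lintegral_mono_ae ?_
        filter_upwards [htrace] with s hs
        gcongr
    _ ≤ ENNReal.ofReal (2 ^ (2 : ℝ)) * ∫⁻ s, ‖fderiv ℝ v (insertCoord i y s)‖ₑ ^ (2 : ℝ) :=
        hardy_line Real.HolderConjugate.two_two hG
    _ = _ := by norm_num

lemma hsLIntegral_abs_coord_le {n : ℕ} {v : Euc (n + 1) → ℝ} (hn : 3 ≤ n + 1)
    (hv : MemD12 (n + 1) v) (hvm : AEMeasurable fun x ↦ ‖v x‖ₑ) (i : Fin (n + 1)) {σ : ℝ}
    (hσ1 : 1 ≤ σ) (hσ2 : σ ≤ 2) (hfin : hsLIntegral (fun x ↦ |x i|) σ v ≠ ∞) :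
    hsLIntegral (fun x ↦ |x i|) σ v ≤ 4 ^ (σ / 2) *
      ((∫⁻ x, ‖v x‖ₑ ^ twoStar (n + 1) 0) ^ (1 - σ / 2) *
        eLpNorm (fderiv ℝ v) 2 volume ^ σ) := by
  have hp0 := two_le_twoStar hn zero_le_two
  have hpos : ∀ᵐ x : Euc (n + 1), 0 < |x i| := (ae_coord_ne_zero i).mono fun _ ↦ abs_pos.2
  have hσ : 0 ≤ σ / 2 := by linarith
  have h := hsLIntegral_interpolate_le (by fun_prop) hpos hvm (a := 0) (b := 2) (θ := σ / 2)
    (by linarith) (by rw [twoStar_two hn]; exact zero_le_two) hσ (by linarith)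
  rw [hsLIntegral_zero_right, mul_zero, zero_add, div_mul_cancel₀ σ two_ne_zero] at h
  grw [h, hv.hsLIntegral_abs_coord_two_le hn hvm i hσ1 hσ2 hfin, ENNReal.mul_rpow_of_nonneg _ _ hσ,
    ← ENNReal.rpow_mul, mul_div_cancel₀ σ two_ne_zero]
  exact le_of_eq (by ring)

lemma ofReal_gradL2 (hv : MemD12 N v) :
    ENNReal.ofReal (gradL2 N v) = eLpNorm (fderiv ℝ v) 2 volume ^ (2 : ℝ) := by
  have hfin : ∫⁻ x, ‖fderiv ℝ v x‖ₑ ^ (2 : ℝ) ≠ ∞ := by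
    rw [← eLpNorm_two_rpow_two]
    exact ENNReal.rpow_ne_top_of_nonneg zero_le_two hv.eLpNorm_fderiv_ne_top
  have henorm (x : Euc N) : ENNReal.ofReal (‖fderiv ℝ v x‖ ^ 2) = ‖fderiv ℝ v x‖ₑ ^ (2 : ℝ) := by
    rw [ENNReal.ofReal_pow (norm_nonneg _), ofReal_norm, ENNReal.rpow_two]
  rw [eLpNorm_two_rpow_two, gradL2, integral_eq_lintegral_of_nonneg_ae
    (.of_forall fun x ↦ by positivity)
    ((measurable_fderiv ℝ v).norm.pow_const 2).aestronglyMeasurable]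
  simp only [henorm, ENNReal.ofReal_toReal hfin]

end MemD12

section RealIntegral

variable {N k : ℕ} {σ : ℝ} {v : Euc N → ℝ}

lemma aemeasurable_enorm_of_integrable (hk : k < N) (hp : 0 < twoStar N σ)
    (hint : Integrable fun x ↦ zNorm N k x ^ (-σ) * |v x| ^ twoStar N σ) :
    AEMeasurable fun x ↦ ‖v x‖ₑ := by
  have hmeas : AEMeasurable fun x ↦ ENNReal.ofReal ((zNorm N k x ^ σ *
      (zNorm N k x ^ (-σ) * |v x| ^ twoStar N σ)) ^ (twoStar N σ)⁻¹) :=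
    (((measurable_zNorm.pow_const σ).aemeasurable.mul hint.aemeasurable).pow_const _).ennreal_ofReal
  refine hmeas.congr ?_
  filter_upwards [ae_zNorm_pos hk] with x hx
  rw [← mul_assoc, ← Real.rpow_add hx, add_neg_cancel, Real.rpow_zero, one_mul,
    Real.rpow_rpow_inv (abs_nonneg _) hp.ne', Real.enorm_eq_ofReal_abs]

lemma ofReal_hsInt (hp : 0 ≤ twoStar N σ)
    (hint : Integrable fun x ↦ zNorm N k x ^ (-σ) * |v x| ^ twoStar N σ) :
    ENNReal.ofReal (hsInt N k σ v) = hsLIntegral (zNorm N k) σ v := by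
  have hz (x : Euc N) : 0 ≤ zNorm N k x ^ (-σ) := Real.rpow_nonneg (Real.sqrt_nonneg _) _
  rw [hsInt, ofReal_integral_eq_lintegral_ofReal hint
    (.of_forall fun x ↦ mul_nonneg (hz x) (Real.rpow_nonneg (abs_nonneg _) _))]
  refine lintegral_congr fun x ↦ ?_
  rw [ENNReal.ofReal_mul (hz x), ← ENNReal.ofReal_rpow_of_nonneg (abs_nonneg _) hp,
    Real.enorm_eq_ofReal_abs]

lemma exists_mul_hsInt_rpow_le_gradL2 (hN : 3 ≤ N) (hk : k < N) (hσ : σ ≤ 2) {K : ℝ≥0}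
    (hK : ∀ v : Euc N → ℝ, MemD12 N v → AEMeasurable (fun x ↦ ‖v x‖ₑ) →
      hsLIntegral (zNorm N k) σ v ≠ ∞ →
        hsLIntegral (zNorm N k) σ v ≤ K * eLpNorm (fderiv ℝ v) 2 volume ^ twoStar N σ) :
    ∃ C : ℝ, 0 < C ∧ ∀ v : Euc N → ℝ, MemD12 N v →
      C * hsInt N k σ v ^ (2 / twoStar N σ) ≤ gradL2 N v := by
  have hp := two_le_twoStar hN hσ
  have hp0 : 0 < twoStar N σ := by linarith
  set M : ℝ≥0 := (K + 1) ^ (2 / twoStar N σ)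
  have hM : 0 < M := NNReal.rpow_pos (by positivity)
  refine ⟨(M : ℝ)⁻¹, by positivity, fun v hv ↦ ?_⟩
  have hgrad : 0 ≤ gradL2 N v := integral_nonneg fun x ↦ by positivity
  by_cases hint : Integrable fun x ↦ zNorm N k x ^ (-σ) * |v x| ^ twoStar N σ
  · have hI := ofReal_hsInt hp0.le hint
    have hI0 : 0 ≤ hsInt N k σ v := integral_nonneg fun x ↦
      mul_nonneg (Real.rpow_nonneg (Real.sqrt_nonneg _) _) (by positivity)
    have hle := hK v hv (aemeasurable_enorm_of_integrable hk hp0 hint)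
      (hI ▸ ENNReal.ofReal_ne_top)
    rw [inv_mul_le_iff₀ (mod_cast hM), ← ENNReal.ofReal_le_ofReal_iff (by positivity),
      ENNReal.ofReal_mul (by positivity), ENNReal.ofReal_coe_nnreal, hv.ofReal_gradL2,
      ← ENNReal.ofReal_rpow_of_nonneg hI0 (by positivity), hI]
    calc hsLIntegral (zNorm N k) σ v ^ (2 / twoStar N σ)
        ≤ (((K + 1 : ℝ≥0) : ℝ≥0∞) *
            eLpNorm (fderiv ℝ v) 2 volume ^ twoStar N σ) ^ (2 / twoStar N σ) := by
          grw [hle, ← le_self_add (a := K)]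
      _ = M * eLpNorm (fderiv ℝ v) 2 volume ^ (2 : ℝ) := by
          rw [ENNReal.mul_rpow_of_nonneg _ _ (by positivity), ← ENNReal.rpow_mul,
            mul_div_cancel₀ _ hp0.ne', ENNReal.coe_rpow_of_nonneg _ (by positivity)]
  · rwa [hsInt, integral_undef hint, Real.zero_rpow (by positivity), mul_zero]

end RealIntegral

lemma exists_hsLIntegral_zNorm_last_le {n : ℕ} {σ : ℝ} (hn : 3 ≤ n + 1) (hσ1 : 1 ≤ σ)
    (hσ2 : σ ≤ 2) :
    ∃ K : ℝ≥0, ∀ v : Euc (n + 1) → ℝ, MemD12 (n + 1) v → AEMeasurable (fun x ↦ ‖v x‖ₑ) →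
      hsLIntegral (zNorm (n + 1) n) σ v ≠ ∞ → hsLIntegral (zNorm (n + 1) n) σ v ≤
        K * eLpNorm (fderiv ℝ v) 2 volume ^ twoStar (n + 1) σ := by
  obtain ⟨S, hS⟩ := exists_lintegral_enorm_rpow_twoStar_le hn
  refine ⟨4 ^ (σ / 2) * S ^ (1 - σ / 2), fun v hv hvm hfin ↦ ?_⟩
  have hSv : ∫⁻ x, ‖v x‖ₑ ^ twoStar (n + 1) 0 ≤
      S * eLpNorm (fderiv ℝ v) 2 volume ^ twoStar (n + 1) 0 := by
    simpa only [hsLIntegral_zero_right] using hv.hsLIntegral_le hn hvm (ρ := 1) measurable_const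
      (by simp) zero_le_two (by simpa only [hsLIntegral_zero_right] using hS)
  have hz : zNorm (n + 1) n = fun x ↦ |x (Fin.last n)| := funext (zNorm_last n)
  rw [hz] at hfin ⊢
  grw [hv.hsLIntegral_abs_coord_le hn hvm _ hσ1 hσ2 hfin,
    rpow_mul_rpow_le_rpow_twoStar hn (by linarith) hσ2 hSv, ENNReal.coe_mul,
    ENNReal.coe_rpow_of_nonneg _ (by linarith), ENNReal.coe_rpow_of_nonneg _ (by linarith),
    mul_assoc, ENNReal.coe_ofNat]

lemma exists_hsLIntegral_zNorm_le_of_memD12 {N k : ℕ} {σ : ℝ} (hN : 3 ≤ N) (hk : k < N)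
    (hσ0 : 0 ≤ σ) (hσ2 : σ ≤ 2) (hexc : σ = 2 → k ≠ N - 2) :
    ∃ K : ℝ≥0, ∀ v : Euc N → ℝ, MemD12 N v → AEMeasurable (fun x ↦ ‖v x‖ₑ) →
      hsLIntegral (zNorm N k) σ v ≠ ∞ →
        hsLIntegral (zNorm N k) σ v ≤ K * eLpNorm (fderiv ℝ v) 2 volume ^ twoStar N σ := by
  rcases lt_or_ge σ (N - k) with hσk | hσk
  · obtain ⟨K, hK⟩ := exists_hsLIntegral_zNorm_le hN hk hσ0 hσ2 hσk
    exact ⟨K, fun v hv hvm _ ↦ hv.hsLIntegral_le hN hvm measurable_zNorm (ae_zNorm_pos hk) hσ2 hK⟩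
  obtain ⟨d, rfl⟩ := Nat.exists_eq_add_of_lt hk
  obtain rfl : d = 0 := by
    by_contra hd
    have hd1 : (1 : ℝ) ≤ d := mod_cast Nat.one_le_iff_ne_zero.2 hd
    push_cast at hσk
    have hd2 : (d : ℝ) = (1 : ℕ) := by push_cast; linarith
    exact hexc (by linarith) (by rw [Nat.cast_inj.1 hd2]; omega)
  exact exists_hsLIntegral_zNorm_last_le hN (by push_cast at hσk; linarith) hσ2

/-- Cylindrical Hardy–Sobolev inequality: for `N ≥ 3`, `0 ≤ k ≤ N-1`,
`0 ≤ σ ≤ 2` (with `k ≠ N-2` when `σ = 2`), there is a constant `C > 0`, depending only on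
`N`, `k` and `σ`, such that `∫ |∇v|² ≥ C (∫ |z|^{-σ} |v|^{2*_σ})^{2/2*_σ}` for all
`v ∈ D^{1,2}(ℝ^N)`. -/
theorem statement0 (N k : ℕ) (σ : ℝ) (hN : 3 ≤ N) (hk : k ≤ N - 1)
    (hσ0 : 0 ≤ σ) (hσ2 : σ ≤ 2) (hexc : σ = 2 → k ≠ N - 2) :
    ∃ C : ℝ, 0 < C ∧ ∀ v : Euc N → ℝ, MemD12 N v →
      C * hsInt N k σ v ^ (2 / twoStar N σ) ≤ gradL2 N v := by
  have hkN : k < N := by omega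
  obtain ⟨K, hK⟩ := exists_hsLIntegral_zNorm_le_of_memD12 hN hkN hσ0 hσ2 hexc
  exact exists_mul_hsInt_rpow_le_gradL2 hN hkN hσ2 hK
end
end

section
/- Let N ≥ 3 and 0 ≤ k ≤ N−1 with k ≠ N−2. The constant ((N−k−2)/2)² in the cylindrical Hardy inequality is optimal, i.e. ((N−k−2)/2)² = inf{ ∫_{ℝ^N} |∇v|² dx / ∫_{ℝ^N} |z|^{−2} v² dx : v ∈ D^{1,2}(ℝ^N), v ≠ 0 }, but it is never achieved: there is no nonzero v ∈ D^{1,2}(ℝ^N) with ∫_{ℝ^N} |∇v|² dx = ((N−k−2)/2)² ∫_{ℝ^N} |z|^{−2} v² dx. -/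
open MeasureTheory Filter Metric Set Bornology

noncomputable section

/-!
Completing the square gives `∫ (div X - |X|²) v² ≤ ∫ |∇v|²` for every vector field `X`. Let `z`
have `m = N - k` components. The field `X = (m - 2) / 2 · z / |z|²` has
`div X - |X|² = ((m - 2) / 2)² |z|⁻²`, which is the Hardy inequality. Adding `δ z / (|z|² + 1)` to
`X` changes the potential by `2δ / (|z|² + 1)² - δ² |z|² / (|z|² + 1)²`. If `v` realizes equality,
then `2δ ∫ v² / (|z|² + 1)² ≤ O(δ²)` for both signs of `δ`, and hence `v = 0`. These fields are
singular and not compactly supported, so they are approached by truncated regular ones.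

For optimality take `φ(x) = b(log |z|²) χ(t)`. Up to the contribution of `∇χ`, the two integrals
become `4 ∫ exp(α s) b'(s)² ds` and `∫ exp(α s) b(s)² ds` with `α = (m - 2) / 2`. Choosing
`b(s) = exp(-α s / 2) a(ε s)` with `a` supported in the negative half-line makes their ratio tend to
`α²` as `ε → 0`, while the contribution of `∇χ` carries a factor `|z|²` and disappears.
-/

section Divergence

variable {E : Type*} [NormedAddCommGroup E] [NormedSpace ℝ E]

/-- The divergence of a vector field, as the trace of its derivative. -/
def divergence (X : E → E) (x : E) : ℝ :=
  LinearMap.trace ℝ E (fderiv ℝ X x)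

lemma integrable_norm_fderiv_sq [MeasurableSpace E] [OpensMeasurableSpace E] {μ : Measure E}
    [IsFiniteMeasureOnCompacts μ] {φ : E → ℝ} (hφ : ContDiff ℝ 1 φ) (hc : HasCompactSupport φ) :
    Integrable (fun x => ‖fderiv ℝ φ x‖ ^ 2) μ := by
  have hcont : Continuous fun x => ‖fderiv ℝ φ x‖ ^ 2 := by
    have := hφ.continuous_fderiv one_ne_zero
    fun_prop
  refine hcont.integrable_of_hasCompactSupport ?_
  exact (hc.fderiv ℝ).comp_left (g := fun T : E →L[ℝ] ℝ => ‖T‖ ^ 2) (by simp)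

variable [FiniteDimensional ℝ E]

lemma divergence_smul {h : E → ℝ} {X : E → E} {x : E} (hh : DifferentiableAt ℝ h x)
    (hX : DifferentiableAt ℝ X x) :
    divergence (fun y => h y • X y) x = h x * divergence X x + fderiv ℝ h x (X x) := by
  simp [divergence, fderiv_fun_smul hh hX, ContinuousLinearMap.coe_smulRight]

lemma continuous_divergence {X : E → E} (hX : ContDiff ℝ 1 X) : Continuous (divergence X) :=
  (LinearMap.continuous_of_finiteDimensional
    ((LinearMap.trace ℝ E).comp (ContinuousLinearMap.coeLM ℝ))).comp
    (hX.continuous_fderiv one_ne_zero)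

lemma divergence_sq_smul {φ : E → ℝ} {X : E → E} {x : E} (hφ : DifferentiableAt ℝ φ x)
    (hX : DifferentiableAt ℝ X x) :
    divergence (fun y => φ y ^ 2 • X y) x =
      divergence X x * φ x ^ 2 + 2 * φ x * fderiv ℝ φ x (X x) := by
  rw [divergence_smul (h := fun y => φ y ^ 2) (hφ.fun_pow 2) hX, fderiv_fun_pow _ hφ]
  simp only [Nat.add_one_sub_one, pow_one, nsmul_eq_mul, Nat.cast_ofNat, smul_apply, smul_eq_mul]
  ring

lemma divergence_sub_norm_sq_mul_sq_le {φ : E → ℝ} {X : E → E} {x : E}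
    (hφ : DifferentiableAt ℝ φ x) (hX : DifferentiableAt ℝ X x) :
    (divergence X x - ‖X x‖ ^ 2) * φ x ^ 2 ≤
      ‖fderiv ℝ φ x‖ ^ 2 + divergence (fun y => φ y ^ 2 • X y) x := by
  have hle : |fderiv ℝ φ x (X x)| ≤ ‖fderiv ℝ φ x‖ * ‖X x‖ := (fderiv ℝ φ x).le_opNorm (X x)
  have hle' := mul_le_mul_of_nonneg_left hle (abs_nonneg (φ x))
  rw [← abs_mul] at hle'
  rw [divergence_sq_smul hφ hX]
  nlinarith [neg_abs_le (φ x * fderiv ℝ φ x (X x)), sq_abs (φ x),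
    sq_nonneg (‖fderiv ℝ φ x‖ - |φ x| * ‖X x‖)]

variable [MeasurableSpace E] [BorelSpace E] {μ : Measure E} [μ.IsAddHaarMeasure]

lemma integrable_divergence {X : E → E} (hX : ContDiff ℝ 1 X) (hc : HasCompactSupport X) :
    Integrable (divergence X) μ :=
  (continuous_divergence hX).integrable_of_hasCompactSupport
    ((hc.fderiv ℝ).comp_left (g := fun T : E →L[ℝ] E => LinearMap.trace ℝ E T) (by simp))

lemma integral_fderiv_apply_eq_zero {f : E → ℝ} (hf : ContDiff ℝ 1 f) (hc : HasCompactSupport f)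
    (w : E) : ∫ x, fderiv ℝ f x w ∂μ = 0 := by
  have hf' : Integrable (fun x => fderiv ℝ f x w) μ :=
    ((hf.continuous_fderiv one_ne_zero).clm_apply continuous_const).integrable_of_hasCompactSupport
      (hc.fderiv_apply ℝ w)
  simpa using integral_mul_fderiv_eq_neg_fderiv_mul_of_integrable (𝕜 := ℝ) (μ := μ)
    (f := fun _ : E => (1 : ℝ)) (g := f) (v := w) (by simp) (by simpa using hf')
    (by simpa using hf.continuous.integrable_of_hasCompactSupport hc) (by fun_prop)
    (fun x _ => hf.differentiable one_ne_zero x)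

lemma integral_divergence_eq_zero {X : E → E} (hX : ContDiff ℝ 1 X) (hc : HasCompactSupport X) :
    ∫ x, divergence X x ∂μ = 0 := by
  let b := Module.finBasis ℝ E
  let coord (i) : E →L[ℝ] ℝ := (b.coord i).toContinuousLinearMap
  have hdiv (x : E) : divergence X x = ∑ i, fderiv ℝ (fun y => coord i (X y)) x (b i) := by
    rw [divergence, LinearMap.trace_eq_matrix_trace ℝ b, Matrix.trace]
    refine Finset.sum_congr rfl fun i _ => ?_
    have hcomp : HasFDerivAt (fun y => coord i (X y)) ((coord i).comp (fderiv ℝ X x)) x :=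
      (coord i).hasFDerivAt.comp x (hX.differentiable one_ne_zero x).hasFDerivAt
    rw [hcomp.fderiv, Matrix.diag_apply, LinearMap.toMatrix_apply]
    rfl
  have hXb (i) : ContDiff ℝ 1 fun y => coord i (X y) := (coord i).contDiff.comp hX
  have hcb (i) : HasCompactSupport fun y => coord i (X y) :=
    hc.comp_left (g := coord i) (map_zero _)
  simp only [hdiv]
  rw [integral_finsetSum _ fun i _ => (((hXb i).continuous_fderiv one_ne_zero).clm_apply
    continuous_const).integrable_of_hasCompactSupport ((hcb i).fderiv_apply ℝ (b i))]
  exact Finset.sum_eq_zero fun i _ => integral_fderiv_apply_eq_zero (hXb i) (hcb i) (b i)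

lemma integral_divergence_sub_norm_sq_mul_sq_le {X : E → E} {φ : E → ℝ} (hX : ContDiff ℝ 1 X)
    (hφ : ContDiff ℝ 1 φ) (hc : HasCompactSupport φ) :
    ∫ x, (divergence X x - ‖X x‖ ^ 2) * φ x ^ 2 ∂μ ≤ ∫ x, ‖fderiv ℝ φ x‖ ^ 2 ∂μ := by
  have hsq : HasCompactSupport fun x => φ x ^ 2 := hc.comp_left (g := (· ^ 2)) (by simp)
  have hcont : Continuous fun x => (divergence X x - ‖X x‖ ^ 2) * φ x ^ 2 := by
    have := continuous_divergence hX
    fun_prop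
  have hgrad := integrable_norm_fderiv_sq (μ := μ) hφ hc
  have hφX : ContDiff ℝ 1 (fun y => φ y ^ 2 • X y) := (hφ.pow 2).smul hX
  have hφXc : HasCompactSupport (fun y => φ y ^ 2 • X y) := hsq.smul_right
  have hdiv := integrable_divergence (μ := μ) hφX hφXc
  calc ∫ x, (divergence X x - ‖X x‖ ^ 2) * φ x ^ 2 ∂μ
      ≤ ∫ x, (‖fderiv ℝ φ x‖ ^ 2 + divergence (fun y => φ y ^ 2 • X y) x) ∂μ :=
        integral_mono (hcont.integrable_of_hasCompactSupport hsq.mul_left) (hgrad.add hdiv)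
          fun x => divergence_sub_norm_sq_mul_sq_le (hφ.differentiable one_ne_zero x)
            (hX.differentiable one_ne_zero x)
    _ = ∫ x, ‖fderiv ℝ φ x‖ ^ 2 ∂μ := by
        rw [integral_add hgrad hdiv, integral_divergence_eq_zero hφX hφXc, add_zero]

end Divergence

section Limit

variable {α F : Type*} [MeasurableSpace α] {μ : Measure α} [NormedAddCommGroup F]

lemma memLp_of_tendsto_eLpNorm_sub {p : ENNReal} {f : α → F} {g : ℕ → α → F}
    (hf : AEStronglyMeasurable f μ) (hg : ∀ n, MemLp (g n) p μ)
    (hlim : Tendsto (fun n => eLpNorm (f - g n) p μ) atTop (nhds 0)) : MemLp f p μ := by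
  obtain ⟨n, hn⟩ := (hlim.eventually (gt_mem_nhds zero_lt_one)).exists
  simpa using (MemLp.add ⟨hf.sub (hg n).1, hn.trans ENNReal.one_lt_top⟩ (hg n) :
    MemLp (f - g n + g n) p μ)

lemma tendsto_eLpNorm_norm_sub_norm {p : ENNReal} {f : α → F} {g : ℕ → α → F}
    (hlim : Tendsto (fun n => eLpNorm (fun x => f x - g n x) p μ) atTop (nhds 0)) :
    Tendsto (fun n => eLpNorm ((fun x => ‖f x‖) - fun x => ‖g n x‖) p μ) atTop (nhds 0) :=
  tendsto_of_tendsto_of_tendsto_of_le_of_le tendsto_const_nhds hlim (fun _ => zero_le)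
    fun n => eLpNorm_mono fun x => abs_norm_sub_norm_le (f x) (g n x)

lemma tendsto_integral_mul_sq {f : α → ℝ} {g : ℕ → α → ℝ} {w : α → ℝ} {C : ℝ}
    (hf : AEStronglyMeasurable f μ) (hg : ∀ n, MemLp (g n) 2 μ)
    (hlim : Tendsto (fun n => eLpNorm (f - g n) 2 μ) atTop (nhds 0))
    (hw : AEStronglyMeasurable w μ) (hC : ∀ x, ‖w x‖ ≤ C) :
    Tendsto (fun n => ∫ x, w x * g n x ^ 2 ∂μ) atTop (nhds (∫ x, w x * f x ^ 2 ∂μ)) := by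
  have hf2 := memLp_of_tendsto_eLpNorm_sub hf hg hlim
  have hwmul {a : α → ℝ} (ha : MemLp a 2 μ) : MemLp (w * a) 2 μ :=
    ha.of_le_mul (hw.mul ha.1) (ae_of_all _ fun x => by
      simpa using mul_le_mul_of_nonneg_right (hC x) (norm_nonneg (a x)))
  have hint {a : α → ℝ} (ha : MemLp a 2 μ) :
      ∫ x, w x * a x ^ 2 ∂μ = inner ℝ (ha.toLp a) ((hwmul ha).toLp (w * a)) := by
    rw [L2.inner_def]
    refine integral_congr_ae ?_
    filter_upwards [ha.coeFn_toLp, (hwmul ha).coeFn_toLp] with x hax hwax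
    simp only [hax, hwax, Pi.mul_apply, Real.inner_apply]
    ring
  have hgf : Tendsto (fun n => eLpNorm (g n - f) 2 μ) atTop (nhds 0) := by
    simpa only [eLpNorm_sub_comm] using hlim
  have hwgf : Tendsto (fun n => eLpNorm (w * g n - w * f) 2 μ) atTop (nhds 0) := by
    have hbound := ENNReal.Tendsto.const_mul (a := ENNReal.ofReal C) hgf
      (Or.inr ENNReal.ofReal_ne_top)
    rw [mul_zero] at hbound
    refine tendsto_of_tendsto_of_tendsto_of_le_of_le tendsto_const_nhds hbound
      (fun _ => zero_le) fun n => ?_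
    refine eLpNorm_le_mul_eLpNorm_of_ae_le_mul (ae_of_all _ fun x => ?_) 2
    rw [← mul_sub]
    simpa using mul_le_mul_of_nonneg_right (hC x) (norm_nonneg ((g n - f) x))
  rw [hint hf2]
  simp only [hint (hg _)]
  exact ((Lp.tendsto_Lp_iff_tendsto_eLpNorm'' _ hg f hf2).2 hgf).inner
    ((Lp.tendsto_Lp_iff_tendsto_eLpNorm'' _ (fun n => hwmul (hg n)) _ (hwmul hf2)).2 hwgf)

lemma tendsto_integral_mul_sq_of_support_subset {p : ENNReal} (hp : 2 ≤ p) {K : Set α}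
    (hμK : μ K ≠ ⊤) {f : α → ℝ} {g : ℕ → α → ℝ} {w : α → ℝ} {C : ℝ}
    (hf : AEStronglyMeasurable f μ) (hg : ∀ n, MemLp (g n) p μ)
    (hlim : Tendsto (fun n => eLpNorm (f - g n) p μ) atTop (nhds 0))
    (hw : AEStronglyMeasurable w μ) (hC : ∀ x, ‖w x‖ ≤ C) (hwK : Function.support w ⊆ K) :
    Tendsto (fun n => ∫ x, w x * g n x ^ 2 ∂μ) atTop (nhds (∫ x, w x * f x ^ 2 ∂μ)) := by
  have : IsFiniteMeasure (μ.restrict K) := isFiniteMeasure_restrict.2 hμK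
  have hrestrict (a : α → ℝ) : ∫ x in K, w x * a x ^ 2 ∂μ = ∫ x, w x * a x ^ 2 ∂μ :=
    setIntegral_eq_integral_of_forall_compl_eq_zero fun x hx => by
      simp [Function.notMem_support.1 fun h => hx (hwK h)]
  simp only [← hrestrict]
  refine tendsto_integral_mul_sq hf.restrict (fun n => ((hg n).restrict K).mono_exponent hp) ?_
    hw.restrict hC
  have hexp : 0 ≤ 1 / (2 : ENNReal).toReal - 1 / p.toReal := by
    simpa only [one_div, ← ENNReal.toReal_inv, sub_nonneg] using
      ENNReal.toReal_mono (by simp) (ENNReal.inv_le_inv.2 hp)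
  have hbound := ENNReal.Tendsto.mul_const hlim
    (Or.inr (ENNReal.rpow_ne_top_of_nonneg hexp (measure_ne_top (μ.restrict K) univ)))
  rw [zero_mul] at hbound
  refine tendsto_of_tendsto_of_tendsto_of_le_of_le tendsto_const_nhds hbound
    (fun _ => zero_le) fun n => ?_
  refine (eLpNorm_le_eLpNorm_mul_rpow_measure_univ hp (hf.sub (hg n).1).restrict).trans ?_
  gcongr
  exact Measure.restrict_le_self

lemma aestronglyMeasurable_norm_of_integrable_mul_sq {w v : α → ℝ} (hw : AEMeasurable w μ)
    (hw0 : ∀ᵐ x ∂μ, w x ≠ 0)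
    (hwv : Integrable (fun x => w x * v x ^ 2) μ) : AEStronglyMeasurable (fun x => ‖v x‖) μ := by
  have hsqrt : AEMeasurable (fun x => √((w x)⁻¹ * (w x * v x ^ 2))) μ :=
    (hw.inv.mul hwv.aemeasurable).sqrt
  refine (hsqrt.congr ?_).aestronglyMeasurable
  filter_upwards [hw0] with x hx
  rw [inv_mul_cancel_left₀ hx, Real.sqrt_sq_eq_abs, Real.norm_eq_abs]

end Limit

section DirichletSpace

lemma two_le_sobolevExponent {N : ℕ} (hN : 3 ≤ N) :
    2 ≤ ENNReal.ofReal (2 * (N : ℝ) / ((N : ℝ) - 2)) := by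
  have hN' : (3 : ℝ) ≤ N := by exact_mod_cast hN
  have hle : (2 : ℝ) ≤ 2 * N / (N - 2) := by
    rw [le_div_iff₀ (by linarith)]
    linarith
  simpa using ENNReal.ofReal_le_ofReal hle

lemma memD12_of_contDiff {N : ℕ} {φ : Euc N → ℝ} (hφ : ContDiff ℝ (⊤ : ℕ∞) φ)
    (hc : HasCompactSupport φ) : MemD12 N φ := by
  refine ⟨fun _ => φ, fun _ => ⟨hφ, hc⟩, by simp, tendsto_const_nhds.congr fun _ => ?_⟩
  rw [← eLpNorm_norm]
  simp

lemma integral_divergence_sub_norm_sq_mul_sq_le_gradL2 {N : ℕ} (hN : 3 ≤ N) {v : Euc N → ℝ}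
    (hv : MemD12 N v) (hvm : AEStronglyMeasurable (fun x => ‖v x‖) volume) {X : Euc N → Euc N}
    (hX : ContDiff ℝ 1 X) (hc : HasCompactSupport X) :
    ∫ x, (divergence X x - ‖X x‖ ^ 2) * v x ^ 2 ≤ gradL2 N v := by
  obtain ⟨φ, hφ, hlim, hlim'⟩ := hv
  have hφ1 (n) : ContDiff ℝ 1 (φ n) := (hφ n).1.of_le (by exact_mod_cast le_top)
  have hφp (n) (p : ENNReal) : MemLp (fun x => ‖φ n x‖) p volume :=
    ((hφ1 n).continuous.memLp_of_hasCompactSupport (hφ n).2).norm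
  have hDφ (n) : MemLp (fun x => ‖fderiv ℝ (φ n) x‖) 2 volume :=
    (((hφ1 n).continuous_fderiv one_ne_zero).memLp_of_hasCompactSupport ((hφ n).2.fderiv ℝ)).norm
  set V : Euc N → ℝ := fun x => divergence X x - ‖X x‖ ^ 2
  have hV : Continuous V := (continuous_divergence hX).sub (hX.continuous.norm.pow 2)
  have hVc : HasCompactSupport V := hc.mono' fun x hx => by
    contrapose! hx
    simp [V, divergence, fderiv_of_notMem_tsupport ℝ hx, image_eq_zero_of_notMem_tsupport hx]
  obtain ⟨C, hC⟩ := hVc.exists_bound_of_continuous hV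
  have hleft : Tendsto (fun n => ∫ x, V x * φ n x ^ 2) atTop (nhds (∫ x, V x * v x ^ 2)) := by
    simpa only [Real.norm_eq_abs, sq_abs] using tendsto_integral_mul_sq_of_support_subset
      (two_le_sobolevExponent hN) hVc.measure_lt_top.ne hvm (fun n => hφp n _)
      (tendsto_eLpNorm_norm_sub_norm hlim) hV.aestronglyMeasurable hC (subset_tsupport V)
  have hright : Tendsto (fun n => ∫ x, ‖fderiv ℝ (φ n) x‖ ^ 2) atTop (nhds (gradL2 N v)) := by
    simpa only [one_mul, gradL2] using tendsto_integral_mul_sq (w := fun _ => 1) (C := 1)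
      (measurable_fderiv ℝ v).norm.aestronglyMeasurable hDφ (tendsto_eLpNorm_norm_sub_norm hlim')
      aestronglyMeasurable_const (by simp)
  exact le_of_tendsto_of_tendsto' hleft hright fun n =>
    integral_divergence_sub_norm_sq_mul_sq_le hX (hφ1 n) (hφ n).2

end DirichletSpace

section CylindricalField

variable {E : Type*} [NormedAddCommGroup E] [InnerProductSpace ℝ E] [FiniteDimensional ℝ E]
  (W : Submodule ℝ E)

lemma divergence_starProjection (x : E) :
    divergence W.starProjection x = Module.finrank ℝ W := by
  have hproj : LinearMap.IsProj W (W.starProjection : E →ₗ[ℝ] E) :=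
    ⟨W.starProjection_apply_mem, fun _ => W.starProjection_eq_self_iff.2⟩
  rw [divergence, ContinuousLinearMap.fderiv, hproj.trace]

lemma fderiv_norm_sq_starProjection_apply (x : E) :
    fderiv ℝ (fun y => ‖W.starProjection y‖ ^ 2) x (W.starProjection x) =
      2 * ‖W.starProjection x‖ ^ 2 := by
  rw [((W.starProjection.hasFDerivAt (x := x)).norm_sq).fderiv]
  simp [W.starProjection_eq_self_iff.2 (W.starProjection_apply_mem x)]

/-- The vector field `x ↦ ρ(|z|²) z`, where `z` is the orthogonal projection of `x` to `W`. -/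
def cylindricalField (ρ : ℝ → ℝ) (x : E) : E :=
  ρ (‖W.starProjection x‖ ^ 2) • W.starProjection x

variable {W} {ρ : ℝ → ℝ}

lemma contDiff_cylindricalField (hρ : ∀ s, 0 ≤ s → ContDiffAt ℝ 1 ρ s) :
    ContDiff ℝ 1 (cylindricalField W ρ) :=
  contDiff_iff_contDiffAt.2 fun x => ((hρ _ (sq_nonneg _)).comp x
    (W.starProjection.contDiff.norm_sq ℝ).contDiffAt).smul W.starProjection.contDiff.contDiffAt

lemma divergence_cylindricalField {x : E}
    (hρ : DifferentiableAt ℝ ρ (‖W.starProjection x‖ ^ 2)) :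
    divergence (cylindricalField W ρ) x = Module.finrank ℝ W * ρ (‖W.starProjection x‖ ^ 2) +
      2 * ‖W.starProjection x‖ ^ 2 * deriv ρ (‖W.starProjection x‖ ^ 2) := by
  have hsq : DifferentiableAt ℝ (fun y => ‖W.starProjection y‖ ^ 2) x :=
    W.starProjection.differentiableAt.norm_sq ℝ
  have hcomp := hρ.hasDerivAt.comp_hasFDerivAt x hsq.hasFDerivAt
  have hmul : cylindricalField W ρ =
      fun y => (ρ ∘ fun y => ‖W.starProjection y‖ ^ 2) y • W.starProjection y := rfl
  rw [hmul, divergence_smul hcomp.differentiableAt W.starProjection.differentiableAt,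
    hcomp.fderiv, divergence_starProjection]
  simp only [Function.comp_apply, smul_apply,
    fderiv_norm_sq_starProjection_apply, smul_eq_mul]
  ring

lemma divergence_cutoff_smul_cylindricalField {χ : E → ℝ} (hχ : Differentiable ℝ χ) (r : ℝ) {x : E}
    (hρ : ContDiff ℝ 1 (cylindricalField W ρ)) :
    divergence (fun y => χ (r • y) • cylindricalField W ρ y) x =
      χ (r • x) * divergence (cylindricalField W ρ) x +
      ρ (‖W.starProjection x‖ ^ 2) * fderiv ℝ χ (r • x) (W.starProjection (r • x)) := by
  rw [divergence_smul (h := fun y => χ (r • y)) (by fun_prop) (hρ.differentiable one_ne_zero x),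
    fderiv_comp_smul]
  simp [cylindricalField]

/-- The potential `div X - ‖X‖²` of the cylindrical field `X = ρ(|z|²) z`, where `z` has `m`
components, as a function of `s = |z|²`. -/
def riccatiPotential (m : ℝ) (ρ : ℝ → ℝ) (s : ℝ) : ℝ :=
  m * ρ s + 2 * s * deriv ρ s - s * ρ s ^ 2

lemma abs_cutoff_riccati_le {m c A B D M L : ℝ} (hm : 0 ≤ m) (hc : |c| ≤ 1) (hA : |A| ≤ M)
    (hB : |B| ≤ M) (hD : |D| ≤ L) :
    |c * (m * A) + c * (2 * B) + A * D - (c * A) ^ 2| ≤ m * M + 2 * M + M * L + M ^ 2 := by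
  have hM : 0 ≤ M := (abs_nonneg A).trans hA
  calc |c * (m * A) + c * (2 * B) + A * D - (c * A) ^ 2|
      ≤ |c| * (m * |A|) + |c| * (2 * |B|) + |A| * |D| + (|c| * |A|) ^ 2 := by
        refine (abs_sub _ _).trans ((add_le_add_left (abs_add_three _ _ _) _).trans_eq ?_)
        simp only [abs_mul, abs_pow, abs_of_nonneg hm, abs_two]
    _ ≤ 1 * (m * M) + 1 * (2 * M) + M * L + (1 * M) ^ 2 := by gcongr
    _ = m * M + 2 * M + M * L + M ^ 2 := by ring

lemma divergence_cutoff_sub_norm_sq {χ : E → ℝ} (hχ : Differentiable ℝ χ) (r : ℝ) (x : E)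
    (hρ : ∀ s, 0 ≤ s → ContDiffAt ℝ 1 ρ s) :
    divergence (fun y => χ (r • y) • cylindricalField W ρ y) x -
        ‖χ (r • x) • cylindricalField W ρ x‖ ^ 2 =
      χ (r • x) * (Module.finrank ℝ W * ρ (‖W.starProjection x‖ ^ 2) +
        2 * ‖W.starProjection x‖ ^ 2 * deriv ρ (‖W.starProjection x‖ ^ 2)) +
      ρ (‖W.starProjection x‖ ^ 2) * fderiv ℝ χ (r • x) (W.starProjection (r • x)) -
      χ (r • x) ^ 2 * (‖W.starProjection x‖ ^ 2 * ρ (‖W.starProjection x‖ ^ 2) ^ 2) := by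
  rw [divergence_cutoff_smul_cylindricalField hχ r (contDiff_cylindricalField hρ),
    divergence_cylindricalField ((hρ _ (sq_nonneg _)).differentiableAt one_ne_zero),
    cylindricalField, norm_smul, norm_smul, mul_pow, mul_pow, Real.norm_eq_abs, sq_abs,
    Real.norm_eq_abs, sq_abs, mul_comm (ρ _ ^ 2)]

lemma abs_divergence_cutoff_sub_norm_sq_le {χ : E → ℝ} (hχ : Differentiable ℝ χ) {r M L : ℝ}
    {x : E} (hρ : ∀ s, 0 ≤ s → ContDiffAt ℝ 1 ρ s) (hs : 0 < ‖W.starProjection x‖ ^ 2)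
    (hχ1 : |χ (r • x)| ≤ 1)
    (hL : |fderiv ℝ χ (r • x) (W.starProjection (r • x))| ≤ L)
    (hM : |‖W.starProjection x‖ ^ 2 * ρ (‖W.starProjection x‖ ^ 2)| ≤ M)
    (hM' : |(‖W.starProjection x‖ ^ 2) ^ 2 * deriv ρ (‖W.starProjection x‖ ^ 2)| ≤ M) :
    |divergence (fun y => χ (r • y) • cylindricalField W ρ y) x -
        ‖χ (r • x) • cylindricalField W ρ x‖ ^ 2| ≤
      (Module.finrank ℝ W * M + 2 * M + M * L + M ^ 2) * (‖W.starProjection x‖ ^ 2)⁻¹ := by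
  rw [divergence_cutoff_sub_norm_sq hχ r x hρ]
  generalize ‖W.starProjection x‖ ^ 2 = s at hs hM hM' ⊢
  rw [← div_eq_mul_inv, le_div_iff₀ hs]
  refine le_trans (le_of_eq ?_) (abs_cutoff_riccati_le (Nat.cast_nonneg _) hχ1 hM hM' hL)
  rw [← abs_of_pos hs, ← abs_mul, abs_of_pos hs]
  ring_nf

lemma tendsto_divergence_cutoff_sub_norm_sq {χ : E → ℝ} (hχ : ContDiff ℝ 1 χ) (hχ0 : χ 0 = 1)
    {r : ℕ → ℝ} (hr : Tendsto r atTop (nhds 0)) {ρ : ℕ → ℝ → ℝ} {σ : ℝ → ℝ} {x : E}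
    (hρ : ∀ n s, 0 ≤ s → ContDiffAt ℝ 1 (ρ n) s)
    (hlim : Tendsto (fun n => ρ n (‖W.starProjection x‖ ^ 2)) atTop
      (nhds (σ (‖W.starProjection x‖ ^ 2))))
    (hlim' : Tendsto (fun n => deriv (ρ n) (‖W.starProjection x‖ ^ 2)) atTop
      (nhds (deriv σ (‖W.starProjection x‖ ^ 2)))) :
    Tendsto (fun n => divergence (fun y => χ (r n • y) • cylindricalField W (ρ n) y) x -
        ‖χ (r n • x) • cylindricalField W (ρ n) x‖ ^ 2) atTop
      (nhds (riccatiPotential (Module.finrank ℝ W) σ (‖W.starProjection x‖ ^ 2))) := by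
  have hrx : Tendsto (fun n => r n • x) atTop (nhds 0) := by
    simpa using hr.smul_const x
  have hc : Tendsto (fun n => χ (r n • x)) atTop (nhds 1) := by
    simpa only [hχ0, Function.comp_def] using (hχ.continuous.tendsto 0).comp hrx
  have hD : Tendsto (fun n => fderiv ℝ χ (r n • x) (W.starProjection (r n • x))) atTop
      (nhds 0) := by
    have hcont : Continuous fun y => fderiv ℝ χ y (W.starProjection y) :=
      (hχ.continuous_fderiv one_ne_zero).clm_apply W.starProjection.continuous
    simpa only [map_zero, Function.comp_def] using (hcont.tendsto 0).comp hrx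
  simp only [divergence_cutoff_sub_norm_sq (hχ.differentiable one_ne_zero) _ x (hρ _)]
  have hV := ((hc.mul ((hlim.const_mul (Module.finrank ℝ W : ℝ)).add
    (hlim'.const_mul (2 * ‖W.starProjection x‖ ^ 2)))).add (hlim.mul hD)).sub
      ((hc.pow 2).mul ((hlim.pow 2).const_mul (‖W.starProjection x‖ ^ 2)))
  simpa only [riccatiPotential, one_mul, mul_zero, add_zero, one_pow] using hV

end CylindricalField

section DominatedFields

lemma exists_abs_fderiv_apply_le {E : Type*} [NormedAddCommGroup E] [NormedSpace ℝ E] {χ : E → ℝ}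
    (hχ : ContDiff ℝ 1 χ) (hc : HasCompactSupport χ) (T : E →L[ℝ] E) :
    ∃ L, ∀ y, |fderiv ℝ χ y (T y)| ≤ L := by
  refine HasCompactSupport.exists_bound_of_continuous (f := fun y => fderiv ℝ χ y (T y)) ?_
    ((hχ.continuous_fderiv one_ne_zero).clm_apply T.continuous)
  exact (hc.fderiv ℝ).mono fun y hy hzero => hy (by simp [hzero])

lemma aestronglyMeasurable_divergence_sub_norm_sq_mul_sq {E : Type*} [NormedAddCommGroup E]
    [NormedSpace ℝ E] [FiniteDimensional ℝ E] [MeasurableSpace E] [BorelSpace E] {X : E → E}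
    {v : E → ℝ} {μ : Measure E} (hX : ContDiff ℝ 1 X)
    (hv : AEStronglyMeasurable (fun x => ‖v x‖) μ) :
    AEStronglyMeasurable (fun x => (divergence X x - ‖X x‖ ^ 2) * v x ^ 2) μ := by
  have hV : Continuous fun x => divergence X x - ‖X x‖ ^ 2 :=
    (continuous_divergence hX).sub (hX.continuous.norm.pow 2)
  simpa only [Real.norm_eq_abs, sq_abs] using hV.aestronglyMeasurable.fun_mul (hv.fun_pow 2)

lemma ae_starProjection_ne_zero {E : Type*} [NormedAddCommGroup E] [InnerProductSpace ℝ E]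
    [FiniteDimensional ℝ E] [MeasurableSpace E] [BorelSpace E] {W : Submodule ℝ E} (hW : W ≠ ⊥) :
    ∀ᵐ x : E, W.starProjection x ≠ 0 := by
  have hnull : volume (Wᗮ : Set E) = 0 :=
    Measure.addHaar_submodule volume Wᗮ fun h => hW (W.orthogonal_eq_top_iff.1 h)
  filter_upwards [measure_eq_zero_iff_ae_notMem.1 hnull] with x hx hPx
  exact hx (W.starProjection_apply_eq_zero_iff.1 hPx)

lemma integral_riccatiPotential_mul_sq_le_gradL2 {N : ℕ} (hN : 3 ≤ N) {W : Submodule ℝ (Euc N)}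
    (hW : W ≠ ⊥) {v : Euc N → ℝ} (hv : MemD12 N v)
    (hint : Integrable fun x => (‖W.starProjection x‖ ^ 2)⁻¹ * v x ^ 2)
    {ρ : ℕ → ℝ → ℝ} {σ : ℝ → ℝ} {M : ℝ} (hρ : ∀ n s, 0 ≤ s → ContDiffAt ℝ 1 (ρ n) s)
    (hM : ∀ n s, 0 < s → |s * ρ n s| ≤ M) (hM' : ∀ n s, 0 < s → |s ^ 2 * deriv (ρ n) s| ≤ M)
    (hlim : ∀ s, 0 < s → Tendsto (fun n => ρ n s) atTop (nhds (σ s)))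
    (hlim' : ∀ s, 0 < s → Tendsto (fun n => deriv (ρ n) s) atTop (nhds (deriv σ s))) :
    ∫ x, riccatiPotential (Module.finrank ℝ W) σ (‖W.starProjection x‖ ^ 2) * v x ^ 2 ≤
      gradL2 N v := by
  let χ : ContDiffBump (0 : Euc N) := ⟨1, 2, one_pos, one_lt_two⟩
  let X : ℕ → Euc N → Euc N := fun n x => χ (((n : ℝ) + 1)⁻¹ • x) • cylindricalField W (ρ n) x
  have hX (n) : ContDiff ℝ 1 (X n) :=
    (χ.contDiff.comp (contDiff_const_smul _)).smul (contDiff_cylindricalField (hρ n))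
  have hXc (n) : HasCompactSupport (X n) :=
    (χ.hasCompactSupport.comp_smul (by positivity)).smul_right
  obtain ⟨L, hL⟩ := exists_abs_fderiv_apply_le χ.contDiff χ.hasCompactSupport W.starProjection
  have hpos : ∀ᵐ x : Euc N, 0 < ‖W.starProjection x‖ ^ 2 := by
    filter_upwards [ae_starProjection_ne_zero hW] with x hx
    positivity
  have hvm : AEStronglyMeasurable (fun x => ‖v x‖) volume :=
    aestronglyMeasurable_norm_of_integrable_mul_sq (by fun_prop)
      (hpos.mono fun x hx => (inv_pos.2 hx).ne') hint
  have hbound (n) : ∀ᵐ x, ‖(divergence (X n) x - ‖X n x‖ ^ 2) * v x ^ 2‖ ≤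
      (Module.finrank ℝ W * M + 2 * M + M * L + M ^ 2) *
        ((‖W.starProjection x‖ ^ 2)⁻¹ * v x ^ 2) := by
    filter_upwards [hpos] with x hs
    rw [norm_mul, ← mul_assoc, Real.norm_of_nonneg (sq_nonneg (v x))]
    gcongr
    exact abs_divergence_cutoff_sub_norm_sq_le (χ.contDiff.differentiable one_ne_zero) (hρ n)
      hs (by simpa [abs_of_nonneg χ.nonneg] using χ.le_one) (hL _) (hM n _ hs)
      (hM' n _ hs)
  have hpointwise : ∀ᵐ x, Tendsto (fun n => (divergence (X n) x - ‖X n x‖ ^ 2) * v x ^ 2) atTop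
      (nhds (riccatiPotential (Module.finrank ℝ W) σ (‖W.starProjection x‖ ^ 2) * v x ^ 2)) := by
    filter_upwards [hpos] with x hs
    exact (tendsto_divergence_cutoff_sub_norm_sq χ.contDiff (χ.one_of_mem_closedBall (by simp [χ]))
      (tendsto_one_div_add_atTop_nhds_zero_nat.congr fun n => one_div _) hρ (hlim _ hs)
      (hlim' _ hs)).mul_const _
  exact le_of_tendsto' (tendsto_integral_of_dominated_convergence _
    (fun n => aestronglyMeasurable_divergence_sub_norm_sq_mul_sq (hX n) hvm) (hint.const_mul _)
    hbound hpointwise) fun n =>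
      integral_divergence_sub_norm_sq_mul_sq_le_gradL2 hN hv hvm (hX n) (hXc n)

end DominatedFields

section ImprovedHardy

/-- The profile `s ↦ α / (s + ε) + δ / (s + 1)`. For `α = (m - 2) / 2` and `ε = 0` the first term
gives the Hardy potential `α² / s`, and the second one a first-order gain in `δ`. -/
def hardyProfile (α δ ε s : ℝ) : ℝ :=
  α * (s + ε)⁻¹ + δ * (s + 1)⁻¹

lemma hasDerivAt_hardyProfile (α δ : ℝ) {ε s : ℝ} (hε : s + ε ≠ 0) (hs : s + 1 ≠ 0) :
    HasDerivAt (hardyProfile α δ ε) (-(α * ((s + ε) ^ 2)⁻¹ + δ * ((s + 1) ^ 2)⁻¹)) s := by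
  have hinv {c : ℝ} (hc : s + c ≠ 0) :
      HasDerivAt (fun t => (t + c)⁻¹) (-1 / (s + c) ^ 2) s :=
    ((hasDerivAt_id s).add_const c).fun_inv hc
  refine (((hinv hε).const_mul α).add ((hinv hs).const_mul δ)).congr_deriv ?_
  ring

lemma contDiffAt_hardyProfile (α δ : ℝ) {ε s : ℝ} (hε : 0 < ε) (hs : 0 ≤ s) :
    ContDiffAt ℝ 1 (hardyProfile α δ ε) s := by
  have hinv {c : ℝ} (hc : 0 < c) : ContDiffAt ℝ 1 (fun t => (t + c)⁻¹) s :=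
    (contDiffAt_id.add contDiffAt_const).inv (add_pos_of_nonneg_of_pos hs hc).ne'
  exact (contDiffAt_const.mul (hinv hε)).add (contDiffAt_const.mul (hinv one_pos))

lemma riccatiPotential_hardyProfile {m s : ℝ} (δ : ℝ) (hs : 0 < s) :
    riccatiPotential m (hardyProfile ((m - 2) / 2) δ 0) s =
      ((m - 2) / 2) ^ 2 * s⁻¹ + 2 * δ * ((s + 1) ^ 2)⁻¹ - δ ^ 2 * (s * ((s + 1) ^ 2)⁻¹) := by
  rw [riccatiPotential, (hasDerivAt_hardyProfile _ δ (by positivity) (by positivity)).deriv,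
    hardyProfile]
  field_simp
  ring

lemma abs_mul_inv_add_le_one {s c : ℝ} (hs : 0 ≤ s) (hc : 0 ≤ c) : |s * (s + c)⁻¹| ≤ 1 := by
  rw [abs_of_nonneg (by positivity)]
  exact mul_inv_le_one_of_le₀ (le_add_of_nonneg_right hc) (add_nonneg hs hc)

lemma abs_mul_add_mul_le {α δ a b : ℝ} (ha : |a| ≤ 1) (hb : |b| ≤ 1) :
    |α * a + δ * b| ≤ |α| + |δ| := by
  calc |α * a + δ * b| ≤ |α| * |a| + |δ| * |b| := by
        simpa only [abs_mul] using abs_add_le (α * a) (δ * b)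
    _ ≤ |α| * 1 + |δ| * 1 := by gcongr
    _ = |α| + |δ| := by ring

lemma abs_mul_hardyProfile_le (α δ : ℝ) {ε s : ℝ} (hε : 0 ≤ ε) (hs : 0 ≤ s) :
    |s * hardyProfile α δ ε s| ≤ |α| + |δ| := by
  convert abs_mul_add_mul_le (abs_mul_inv_add_le_one hs hε) (abs_mul_inv_add_le_one hs zero_le_one)
    using 2
  rw [hardyProfile]
  ring

lemma abs_sq_mul_deriv_hardyProfile_le (α δ : ℝ) {ε s : ℝ} (hε : 0 ≤ ε) (hs : 0 < s) :
    |s ^ 2 * deriv (hardyProfile α δ ε) s| ≤ |α| + |δ| := by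
  have hsq {c : ℝ} (hc : 0 ≤ c) : |(s * (s + c)⁻¹) ^ 2| ≤ 1 := by
    rw [abs_pow]
    exact pow_le_one₀ (abs_nonneg _) (abs_mul_inv_add_le_one hs.le hc)
  rw [(hasDerivAt_hardyProfile α δ (by positivity) (by positivity)).deriv, mul_neg, abs_neg]
  convert abs_mul_add_mul_le (hsq hε) (hsq zero_le_one) using 2
  simp only [mul_pow, inv_pow]
  ring

variable {N : ℕ} {W : Submodule ℝ (Euc N)} {v : Euc N → ℝ}

lemma integral_improved_hardy_le_gradL2 (hN : 3 ≤ N) (hW : W ≠ ⊥) (hv : MemD12 N v)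
    (hint : Integrable fun x => (‖W.starProjection x‖ ^ 2)⁻¹ * v x ^ 2) (δ : ℝ) :
    ∫ x, ((((Module.finrank ℝ W : ℝ) - 2) / 2) ^ 2 * (‖W.starProjection x‖ ^ 2)⁻¹ +
        2 * δ * ((‖W.starProjection x‖ ^ 2 + 1) ^ 2)⁻¹ -
        δ ^ 2 * (‖W.starProjection x‖ ^ 2 * ((‖W.starProjection x‖ ^ 2 + 1) ^ 2)⁻¹)) * v x ^ 2 ≤
      gradL2 N v := by
  set α : ℝ := ((Module.finrank ℝ W : ℝ) - 2) / 2
  have hε (n : ℕ) : 0 < 1 / ((n : ℝ) + 1) := by positivity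
  have hlim {s : ℝ} : Tendsto (fun n : ℕ => s + 1 / ((n : ℝ) + 1)) atTop (nhds (s + 0)) :=
    tendsto_one_div_add_atTop_nhds_zero_nat.const_add s
  refine le_trans (le_of_eq (integral_congr_ae ?_)) (integral_riccatiPotential_mul_sq_le_gradL2 hN
    hW hv hint (ρ := fun n => hardyProfile α δ (1 / ((n : ℝ) + 1))) (σ := hardyProfile α δ 0)
    (fun n s hs => contDiffAt_hardyProfile α δ (hε n) hs)
    (fun n s hs => abs_mul_hardyProfile_le α δ (hε n).le hs.le)
    (fun n s hs => abs_sq_mul_deriv_hardyProfile_le α δ (hε n).le hs)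
    (fun s hs => ?_) (fun s hs => ?_))
  · filter_upwards [ae_starProjection_ne_zero hW] with x hx
    rw [riccatiPotential_hardyProfile δ (by positivity)]
  · exact ((hlim.inv₀ (by positivity)).const_mul α).add_const _
  · have hderiv {ε : ℝ} (hε : 0 ≤ ε) :=
      (hasDerivAt_hardyProfile α δ (by positivity : s + ε ≠ 0) (by positivity)).deriv
    simp only [hderiv (hε _).le, hderiv le_rfl]
    exact ((((hlim.pow 2).inv₀ (by positivity)).const_mul α).add_const _).neg

lemma integrable_mul_sq_of_abs_mul_le_one (hW : W ≠ ⊥)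
    (hint : Integrable fun x => (‖W.starProjection x‖ ^ 2)⁻¹ * v x ^ 2) {w : ℝ → ℝ}
    (hw : Measurable w) (hw1 : ∀ s, 0 ≤ s → |s * w s| ≤ 1) :
    Integrable fun x => w (‖W.starProjection x‖ ^ 2) * v x ^ 2 := by
  refine (hint.bdd_mul (f := fun x => ‖W.starProjection x‖ ^ 2 * w (‖W.starProjection x‖ ^ 2))
    (by fun_prop) (ae_of_all _ fun x => hw1 _ (sq_nonneg _))).congr ?_
  filter_upwards [ae_starProjection_ne_zero hW] with x hx
  have hnorm : ‖W.starProjection x‖ ≠ 0 := norm_ne_zero_iff.2 hx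
  field_simp

lemma integrable_inv_add_one_sq_mul_sq (hW : W ≠ ⊥)
    (hint : Integrable fun x => (‖W.starProjection x‖ ^ 2)⁻¹ * v x ^ 2) :
    Integrable fun x => ((‖W.starProjection x‖ ^ 2 + 1) ^ 2)⁻¹ * v x ^ 2 := by
  refine integrable_mul_sq_of_abs_mul_le_one hW hint (w := fun s => ((s + 1) ^ 2)⁻¹)
    (by fun_prop) fun s hs => ?_
  rw [abs_of_nonneg (by positivity)]
  exact mul_inv_le_one_of_le₀ (by nlinarith) (by positivity)

lemma integrable_mul_inv_add_one_sq_mul_sq (hW : W ≠ ⊥)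
    (hint : Integrable fun x => (‖W.starProjection x‖ ^ 2)⁻¹ * v x ^ 2) :
    Integrable fun x =>
      ‖W.starProjection x‖ ^ 2 * ((‖W.starProjection x‖ ^ 2 + 1) ^ 2)⁻¹ * v x ^ 2 := by
  refine integrable_mul_sq_of_abs_mul_le_one hW hint (w := fun s => s * ((s + 1) ^ 2)⁻¹)
    (by fun_prop) fun s hs => ?_
  rw [abs_of_nonneg (by positivity), ← mul_assoc]
  exact mul_inv_le_one_of_le₀ (by nlinarith) (by positivity)

lemma improved_hardy (hN : 3 ≤ N) (hW : W ≠ ⊥) (hv : MemD12 N v)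
    (hint : Integrable fun x => (‖W.starProjection x‖ ^ 2)⁻¹ * v x ^ 2) (δ : ℝ) :
    (((Module.finrank ℝ W : ℝ) - 2) / 2) ^ 2 * (∫ x, (‖W.starProjection x‖ ^ 2)⁻¹ * v x ^ 2) +
      2 * δ * (∫ x, ((‖W.starProjection x‖ ^ 2 + 1) ^ 2)⁻¹ * v x ^ 2) -
      δ ^ 2 * (∫ x, ‖W.starProjection x‖ ^ 2 * ((‖W.starProjection x‖ ^ 2 + 1) ^ 2)⁻¹ * v x ^ 2) ≤
      gradL2 N v := by
  refine le_trans (le_of_eq ?_) (integral_improved_hardy_le_gradL2 hN hW hv hint δ)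
  have hA := integrable_inv_add_one_sq_mul_sq hW hint
  have hB := integrable_mul_inv_add_one_sq_mul_sq hW hint
  simp only [← integral_const_mul]
  rw [← integral_add (hint.const_mul _) (hA.const_mul _),
    ← integral_sub ((hint.const_mul _).fun_add (hA.const_mul _)) (hB.const_mul _)]
  exact integral_congr_ae (ae_of_all _ fun x => by simp only; ring)

lemma gradL2_nonneg : 0 ≤ gradL2 N v :=
  integral_nonneg fun _ => sq_nonneg _

theorem hardy_inequality (hN : 3 ≤ N) (hW : W ≠ ⊥) (hv : MemD12 N v) :
    (((Module.finrank ℝ W : ℝ) - 2) / 2) ^ 2 * ∫ x, (‖W.starProjection x‖ ^ 2)⁻¹ * v x ^ 2 ≤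
      gradL2 N v := by
  by_cases hint : Integrable fun x => (‖W.starProjection x‖ ^ 2)⁻¹ * v x ^ 2
  · simpa using improved_hardy hN hW hv hint 0
  · -- The Bochner integral of a non-integrable function is `0`.
    simpa only [integral_undef hint, mul_zero] using gradL2_nonneg

theorem ae_eq_zero_of_hardy_eq (hN : 3 ≤ N) (hW : W ≠ ⊥) (hv : MemD12 N v)
    (hint : Integrable fun x => (‖W.starProjection x‖ ^ 2)⁻¹ * v x ^ 2)
    (heq : gradL2 N v = (((Module.finrank ℝ W : ℝ) - 2) / 2) ^ 2 *
      ∫ x, (‖W.starProjection x‖ ^ 2)⁻¹ * v x ^ 2) : v =ᵐ[volume] 0 := by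
  set A := ∫ x, ((‖W.starProjection x‖ ^ 2 + 1) ^ 2)⁻¹ * v x ^ 2
  set B := ∫ x, ‖W.starProjection x‖ ^ 2 * ((‖W.starProjection x‖ ^ 2 + 1) ^ 2)⁻¹ * v x ^ 2
  have hquad (δ : ℝ) : 0 ≤ B * (δ * δ) + -(2 * A) * δ + 0 := by
    linarith [improved_hardy hN hW hv hint δ]
  have hdiscrim := discrim_le_zero hquad
  have hA0 : A = 0 := by
    rw [discrim] at hdiscrim
    nlinarith
  have hae := (integral_eq_zero_iff_of_nonneg (fun x => by positivity)
    (integrable_inv_add_one_sq_mul_sq hW hint)).1 hA0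
  filter_upwards [hae] with x hx
  have hpos : (((‖W.starProjection x‖ ^ 2 + 1) ^ 2)⁻¹) ≠ 0 := by positivity
  simpa [hpos] using hx

end ImprovedHardy

section LogCylindrical

-- The value `w 0` is that at the singularity `s = 0`, since `Real.log 0 = 0`.
lemma eventually_comp_log_eq_zero {w : ℝ → ℝ} (hc : HasCompactSupport w) (hw0 : w 0 = 0) :
    ∀ᶠ s in nhds 0, w (Real.log s) = 0 := by
  have hbot : ∀ᶠ t in atBot, w t = 0 := by
    have := hasCompactSupport_iff_eventuallyEq.1 hc
    rw [coclosedCompact_eq_cocompact] at this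
    exact this.filter_mono atBot_le_cocompact
  filter_upwards [eventually_nhdsWithin_iff.1 (Real.tendsto_log_nhdsNE_zero.eventually hbot)]
    with s hs
  by_cases h0 : s = 0
  · rwa [h0, Real.log_zero]
  · exact hs h0

lemma contDiff_comp_log {n : WithTop ℕ∞} {w : ℝ → ℝ} (hw : ContDiff ℝ n w)
    (hc : HasCompactSupport w) (hw0 : w 0 = 0) : ContDiff ℝ n fun s => w (Real.log s) := by
  refine contDiff_iff_contDiffAt.2 fun s => ?_
  by_cases hs : s = 0
  · rw [hs]
    exact contDiffAt_const.congr_of_eventuallyEq (eventually_comp_log_eq_zero hc hw0)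
  · exact hw.contDiffAt.comp s (Real.contDiffAt_log.2 hs)

lemma hasDerivAt_comp_log {w : ℝ → ℝ} (hw : Differentiable ℝ w) (hc : HasCompactSupport w)
    (hw0 : w 0 = 0) (s : ℝ) :
    HasDerivAt (fun s => w (Real.log s)) (deriv w (Real.log s) * s⁻¹) s := by
  by_cases hs : s = 0
  · rw [hs, inv_zero, mul_zero]
    exact (hasDerivAt_const 0 0).congr_of_eventuallyEq (eventually_comp_log_eq_zero hc hw0)
  · exact (hw _).hasDerivAt.comp s (Real.hasDerivAt_log hs)

lemma inv_mul_comp_log {f : ℝ → ℝ} (hf : f 0 = 0) {s : ℝ} (hs : 0 ≤ s) :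
    s⁻¹ * f (Real.log s) = Real.exp (-Real.log s) * f (Real.log s) := by
  obtain rfl | hs := hs.eq_or_lt
  · simp [hf]
  · rw [Real.exp_neg, Real.exp_log hs]

variable {E : Type*} [NormedAddCommGroup E] [InnerProductSpace ℝ E] [FiniteDimensional ℝ E]
  (W : Submodule ℝ E)

/-- The function `x ↦ w(log |z|²) g(y)`, where `z` and `y` are the orthogonal projections of `x`
to `W` and to `Wᗮ`. -/
def logCylindrical (w : ℝ → ℝ) (g : E → ℝ) (x : E) : ℝ :=
  w (Real.log (‖W.starProjection x‖ ^ 2)) * g (Wᗮ.starProjection x)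

variable {W} {w : ℝ → ℝ} {g : E → ℝ}

lemma contDiff_logCylindrical {n : WithTop ℕ∞} (hw : ContDiff ℝ n w) (hwc : HasCompactSupport w)
    (hw0 : w 0 = 0) (hg : ContDiff ℝ n g) : ContDiff ℝ n (logCylindrical W w g) :=
  ((contDiff_comp_log hw hwc hw0).comp (W.starProjection.contDiff.norm_sq ℝ)).mul
    (hg.comp Wᗮ.starProjection.contDiff)

lemma hasCompactSupport_logCylindrical (hwc : HasCompactSupport w) (hgc : HasCompactSupport g) :
    HasCompactSupport (logCylindrical W w g) := by
  obtain ⟨R, hR⟩ := hwc.isBounded.subset_closedBall 0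
  obtain ⟨S, hS⟩ := hgc.isBounded.subset_closedBall 0
  refine HasCompactSupport.of_support_subset_isCompact
    (isCompact_closedBall (0 : E) (Real.exp R + 1 + S)) fun x hx => ?_
  have hw : w (Real.log (‖W.starProjection x‖ ^ 2)) ≠ 0 := left_ne_zero_of_mul hx
  have hg : g (Wᗮ.starProjection x) ≠ 0 := right_ne_zero_of_mul hx
  have hlog : |Real.log (‖W.starProjection x‖ ^ 2)| ≤ R := by
    simpa using hR (subset_tsupport _ hw)
  have hy : ‖Wᗮ.starProjection x‖ ≤ S := by simpa using hS (subset_tsupport _ hg)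
  have hz : ‖W.starProjection x‖ ^ 2 ≤ Real.exp R :=
    (Real.le_exp_log _).trans (Real.exp_le_exp.2 ((le_abs_self _).trans hlog))
  rw [mem_closedBall_zero_iff, ← W.starProjection_add_starProjection_orthogonal x]
  refine (norm_add_le _ _).trans (add_le_add ?_ hy)
  nlinarith [sq_nonneg (‖W.starProjection x‖ - 1)]

lemma inv_norm_sq_mul_logCylindrical_sq (hw0 : w 0 = 0) (x : E) :
    (‖W.starProjection x‖ ^ 2)⁻¹ * logCylindrical W w g x ^ 2 =
      logCylindrical W (fun t => Real.exp (-t) * w t ^ 2) (fun y => g y ^ 2) x := by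
  rw [logCylindrical, logCylindrical, mul_pow, ← mul_assoc,
    inv_mul_comp_log (f := fun t => w t ^ 2) (by simp [hw0]) (sq_nonneg _)]

lemma norm_add_comp_starProjection_sq_le {T : E →L[ℝ] ℝ} {a b : ℝ}
    (hT : ∀ h, |T h| ≤ a * ‖W.starProjection h‖ + b * ‖Wᗮ.starProjection h‖) :
    ‖T‖ ^ 2 ≤ a ^ 2 + b ^ 2 := by
  rw [← Real.le_sqrt (norm_nonneg T) (by positivity)]
  refine T.opNorm_le_bound (Real.sqrt_nonneg _) fun h => (hT h).trans ?_
  rw [← Real.sqrt_sq (norm_nonneg h), ← Real.sqrt_mul (by positivity)]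
  refine Real.le_sqrt_of_sq_le ?_
  rw [W.norm_sq_eq_add_norm_sq_starProjection h]
  nlinarith [sq_nonneg (a * ‖Wᗮ.starProjection h‖ - b * ‖W.starProjection h‖)]

lemma fderiv_logCylindrical_apply (hw : Differentiable ℝ w) (hwc : HasCompactSupport w)
    (hw0 : w 0 = 0) (hg : Differentiable ℝ g) (x h : E) :
    fderiv ℝ (logCylindrical W w g) x h =
      2 * deriv w (Real.log (‖W.starProjection x‖ ^ 2)) * (‖W.starProjection x‖ ^ 2)⁻¹ *
        g (Wᗮ.starProjection x) * inner ℝ (W.starProjection x) (W.starProjection h) +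
      w (Real.log (‖W.starProjection x‖ ^ 2)) *
        fderiv ℝ g (Wᗮ.starProjection x) (Wᗮ.starProjection h) := by
  have hz := (hasDerivAt_comp_log hw hwc hw0 (‖W.starProjection x‖ ^ 2)).comp_hasFDerivAt x
    (W.starProjection.hasFDerivAt (x := x)).norm_sq
  have hy := (hg (Wᗮ.starProjection x)).hasFDerivAt.comp x Wᗮ.starProjection.hasFDerivAt
  have hmul : HasFDerivAt (logCylindrical W w g) _ x := hz.mul hy
  rw [hmul.fderiv]
  simp only [Function.comp_apply, add_apply, smul_apply, ContinuousLinearMap.comp_apply,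
    coe_innerSL_apply, nsmul_eq_mul, smul_eq_mul, Nat.cast_ofNat]
  ring

lemma norm_fderiv_logCylindrical_sq_le (hw : Differentiable ℝ w) (hwc : HasCompactSupport w)
    (hw0 : w 0 = 0) (hw0' : deriv w 0 = 0) (hg : Differentiable ℝ g) (x : E) :
    ‖fderiv ℝ (logCylindrical W w g) x‖ ^ 2 ≤
      4 * logCylindrical W (fun t => Real.exp (-t) * deriv w t ^ 2) (fun y => g y ^ 2) x +
      logCylindrical W (fun t => w t ^ 2) (fun y => ‖fderiv ℝ g y‖ ^ 2) x := by
  set z := W.starProjection x with hz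
  set y := Wᗮ.starProjection x with hy
  refine (norm_add_comp_starProjection_sq_le (W := W)
    (a := 2 * |deriv w (Real.log (‖z‖ ^ 2))| * (‖z‖ ^ 2)⁻¹ * |g y| * ‖z‖)
    (b := |w (Real.log (‖z‖ ^ 2))| * ‖fderiv ℝ g y‖) fun h => ?_).trans_eq ?_
  · rw [fderiv_logCylindrical_apply hw hwc hw0 hg, ← hz, ← hy]
    refine (abs_add_le _ _).trans (add_le_add ?_ ?_)
    · simp only [abs_mul, abs_two, abs_inv, abs_pow, abs_norm, mul_assoc]
      gcongr
      exact abs_real_inner_le_norm _ _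
    · rw [abs_mul, mul_assoc]
      gcongr
      exact (fderiv ℝ g y).le_opNorm _
  · have hexp := inv_mul_comp_log (f := fun t => deriv w t ^ 2) (by simp [hw0'])
      (sq_nonneg ‖z‖)
    rw [logCylindrical, logCylindrical, ← hz, ← hy, ← hexp]
    simp only [mul_pow, sq_abs]
    obtain h0 | h0 := eq_or_ne ‖z‖ 0
    · simp [h0]
    · field_simp
      ring

variable [MeasurableSpace E] [BorelSpace E]

lemma integral_starProjection_mul_starProjection (F G : E → ℝ) :
    ∫ x, F (W.starProjection x) * G (Wᗮ.starProjection x) = (∫ z : W, F z) * ∫ y : Wᗮ, G y := by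
  have hmp : MeasurePreserving fun x => WithLp.ofLp (W.orthogonalDecomposition x) :=
    (WithLp.volume_preserving_ofLp W Wᗮ).comp W.orthogonalDecomposition.measurePreserving
  have hemb : MeasurableEmbedding fun x => WithLp.ofLp (W.orthogonalDecomposition x) :=
    (W.orthogonalDecomposition.toHomeomorph.trans
      (WithLp.homeomorphProd 2 W Wᗮ)).measurableEmbedding
  rw [← integral_prod_mul, ← Measure.volume_eq_prod, ← hmp.integral_comp hemb]
  simp only [W.orthogonalDecomposition_apply]
  rfl

lemma integral_Ioi_comp_log_sq (d : ℕ) (w : ℝ → ℝ) :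
    ∫ r in Ioi (0 : ℝ), r ^ d • w (Real.log (r ^ 2)) =
      2⁻¹ * ∫ t, Real.exp ((d + 1) / 2 * t) * w t := by
  have hderiv (t : ℝ) : HasDerivAt (fun t => Real.exp (2⁻¹ * t)) (2⁻¹ * Real.exp (2⁻¹ * t)) t := by
    simpa [mul_comm] using ((hasDerivAt_id t).const_mul (2⁻¹ : ℝ)).exp
  have hrange : (fun t => Real.exp (2⁻¹ * t)) '' univ = Ioi 0 := by
    rw [image_univ, ← Real.range_exp]
    exact (mul_left_surjective₀ (by norm_num : (2⁻¹ : ℝ) ≠ 0)).range_comp Real.exp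
  have hinj : InjOn (fun t : ℝ => Real.exp (2⁻¹ * t)) univ := fun s _ t _ hst => by
    simpa using Real.exp_injective hst
  rw [← hrange, integral_image_eq_integral_abs_deriv_smul MeasurableSet.univ
    (fun t _ => (hderiv t).hasDerivWithinAt) hinj, setIntegral_univ, ← integral_const_mul]
  refine integral_congr_ae (ae_of_all _ fun t => ?_)
  simp only [smul_eq_mul, ← Real.exp_nat_mul, Real.log_exp, abs_mul, abs_inv, abs_two, Real.abs_exp]
  rw [show (d + 1) / 2 * t = 2⁻¹ * t + d * (2⁻¹ * t) by ring, Real.exp_add]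
  push_cast
  ring_nf

variable (W) in
/-- The factor `C` such that `∫ w(log |z|²) g(y) dx = C ∫ exp(m t / 2) w(t) dt`, where `z` has `m`
components. -/
def cylindricalMass (g : E → ℝ) : ℝ :=
  Module.finrank ℝ W * volume.real (ball (0 : W) 1) * 2⁻¹ * ∫ y : Wᗮ, g y

lemma integral_logCylindrical (hW : W ≠ ⊥) (w : ℝ → ℝ) (g : E → ℝ) :
    ∫ x, logCylindrical W w g x =
      cylindricalMass W g * ∫ t, Real.exp (Module.finrank ℝ W / 2 * t) * w t := by
  have : Nontrivial W := Submodule.nontrivial_iff_ne_bot.2 hW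
  have hm : ((Module.finrank ℝ W - 1 : ℕ) : ℝ) + 1 = Module.finrank ℝ W := by
    exact_mod_cast Nat.sub_add_cancel Module.finrank_pos
  simp only [logCylindrical]
  rw [integral_starProjection_mul_starProjection (fun z => w (Real.log (‖z‖ ^ 2))) g]
  have hpolar := integral_fun_norm_addHaar (volume : Measure W) fun r => w (Real.log (r ^ 2))
  simp only [Submodule.norm_coe]
  rw [hpolar, integral_Ioi_comp_log_sq, hm, cylindricalMass]
  simp only [nsmul_eq_mul, smul_eq_mul]
  ring

lemma cylindricalMass_pos (hW : W ≠ ⊥) (hg : Continuous g) (hgc : HasCompactSupport g)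
    (hg0 : 0 ≤ g) (hg1 : g 0 ≠ 0) : 0 < cylindricalMass W g := by
  have : Nontrivial W := Submodule.nontrivial_iff_ne_bot.2 hW
  have hm : 0 < (Module.finrank ℝ W : ℝ) := by exact_mod_cast Module.finrank_pos
  have hball : 0 < volume.real (ball (0 : W) 1) :=
    ENNReal.toReal_pos (measure_ball_pos _ _ one_pos).ne' measure_ball_lt_top.ne
  have hint : 0 < ∫ y : Wᗮ, g y :=
    (hg.comp continuous_subtype_val).integral_pos_of_hasCompactSupport_nonneg_nonzero
      (hgc.comp_isClosedEmbedding
        (Submodule.closed_of_finiteDimensional _).isClosedEmbedding_subtypeVal)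
      (fun y => hg0 y) (x := 0) (by simpa using hg1)
  rw [cylindricalMass]
  positivity

end LogCylindrical

section ExponentialWeight

/-- The test function `t ↦ exp(-α t / 2) a(ε t)`: the exponential turns the weight `exp(α t)` of
its square into Lebesgue measure, and as `ε → 0` the derivative of `a` becomes negligible. -/
def tiltedDilation (α ε : ℝ) (a : ℝ → ℝ) (t : ℝ) : ℝ :=
  Real.exp (-(α / 2 * t)) * a (ε * t)

variable {α c K ε : ℝ} {a : ℝ → ℝ}

lemma deriv_tiltedDilation (ha : Differentiable ℝ a) (t : ℝ) :
    deriv (tiltedDilation α ε a) t =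
      Real.exp (-(α / 2 * t)) * (ε * deriv a (ε * t) - α / 2 * a (ε * t)) := by
  have hexp : HasDerivAt (fun t => Real.exp (-(α / 2 * t)))
      (Real.exp (-(α / 2 * t)) * -(α / 2 * 1)) t :=
    ((hasDerivAt_id t).const_mul (α / 2)).neg.exp
  have haε : HasDerivAt (fun t => a (ε * t)) (deriv a (ε * t) * (ε * 1)) t :=
    (ha (ε * t)).hasDerivAt.comp t ((hasDerivAt_id t).const_mul ε)
  refine (hexp.mul haε).deriv.trans ?_
  ring

lemma exp_mul_tilt_sq (α t x : ℝ) :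
    Real.exp (α * t) * (Real.exp (-(α / 2 * t)) * x) ^ 2 = x ^ 2 := by
  have hexp : α * t + (2 : ℕ) * -(α / 2 * t) = 0 := by
    push_cast
    ring
  rw [mul_pow, ← mul_assoc, ← Real.exp_nat_mul, ← Real.exp_add, hexp, Real.exp_zero, one_mul]

lemma exp_add_one_mul_tilt_sq (α t x : ℝ) :
    Real.exp ((α + 1) * t) * (Real.exp (-(α / 2 * t)) * x) ^ 2 = Real.exp t * x ^ 2 := by
  rw [add_mul, one_mul, add_comm, Real.exp_add, mul_assoc, exp_mul_tilt_sq]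

lemma contDiff_tiltedDilation {n : WithTop ℕ∞} (ha : ContDiff ℝ n a) :
    ContDiff ℝ n (tiltedDilation α ε a) := by
  unfold tiltedDilation
  fun_prop

lemma hasCompactSupport_tiltedDilation (hac : HasCompactSupport a) (hε : ε ≠ 0) :
    HasCompactSupport (tiltedDilation α ε a) :=
  (hac.comp_homeomorph (Homeomorph.mulLeft₀ ε hε)).mul_left

lemma tiltedDilation_eventuallyEq_zero (ha0 : a =ᶠ[nhds 0] 0) :
    tiltedDilation α ε a =ᶠ[nhds 0] 0 := by
  have htend : Tendsto (fun t => ε * t) (nhds 0) (nhds 0) := by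
    simpa using (continuous_const_mul ε).tendsto 0
  filter_upwards [htend.eventually ha0] with t ht
  simp [tiltedDilation, ht]

lemma integral_sq_le_of_exp_weighted
    (h : ∀ b : ℝ → ℝ, ContDiff ℝ (⊤ : ℕ∞) b → HasCompactSupport b → b =ᶠ[nhds 0] 0 →
      c * (∫ t, Real.exp (α * t) * b t ^ 2) ≤ 4 * (∫ t, Real.exp (α * t) * deriv b t ^ 2) +
        K * ∫ t, Real.exp ((α + 1) * t) * b t ^ 2)
    (ha : ContDiff ℝ (⊤ : ℕ∞) a) (hac : HasCompactSupport a) (ha0 : a =ᶠ[nhds 0] 0) (hε : 0 < ε) :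
    c * (∫ s, a s ^ 2) ≤ 4 * (∫ s, (ε * deriv a s - α / 2 * a s) ^ 2) +
      K * ∫ s, Real.exp (ε⁻¹ * s) * a s ^ 2 := by
  have hb := h _ (contDiff_tiltedDilation ha)
    (hasCompactSupport_tiltedDilation (α := α) hac hε.ne') (tiltedDilation_eventuallyEq_zero ha0)
  have hexp (t : ℝ) : Real.exp t * a (ε * t) ^ 2 = Real.exp (ε⁻¹ * (ε * t)) * a (ε * t) ^ 2 := by
    rw [inv_mul_cancel_left₀ hε.ne']
  simp only [deriv_tiltedDilation (ha.differentiable (by simp))] at hb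
  simp only [tiltedDilation, exp_mul_tilt_sq, exp_add_one_mul_tilt_sq, hexp] at hb
  rw [Measure.integral_comp_mul_left (fun s => a s ^ 2),
    Measure.integral_comp_mul_left (fun s => (ε * deriv a s - α / 2 * a s) ^ 2),
    Measure.integral_comp_mul_left (fun s => Real.exp (ε⁻¹ * s) * a s ^ 2)] at hb
  simp only [smul_eq_mul, abs_of_pos (inv_pos.2 hε)] at hb
  refine le_of_mul_le_mul_left ?_ (inv_pos.2 hε)
  linarith

lemma integral_sub_half_mul_sq (ha : ContDiff ℝ 1 a) (hac : HasCompactSupport a) (α ε : ℝ) :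
    ∫ s, (ε * deriv a s - α / 2 * a s) ^ 2 =
      ε ^ 2 * (∫ s, deriv a s ^ 2) - ε * α * (∫ s, deriv a s * a s) +
        α ^ 2 / 4 * ∫ s, a s ^ 2 := by
  have ha' : Continuous (deriv a) := ha.continuous_deriv le_rfl
  have hD : Integrable fun s => ε ^ 2 * deriv a s ^ 2 := by
    refine Continuous.integrable_of_hasCompactSupport (by fun_prop) ?_
    exact (hac.deriv.comp_left (g := (· ^ 2)) (by simp)).mul_left
  have hM : Integrable fun s => ε * α * (deriv a s * a s) :=
    ((ha'.mul ha.continuous).integrable_of_hasCompactSupport hac.mul_left).const_mul _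
  have hA : Integrable fun s => α ^ 2 / 4 * a s ^ 2 := by
    refine Continuous.integrable_of_hasCompactSupport (by fun_prop) ?_
    exact (hac.comp_left (g := (· ^ 2)) (by simp)).mul_left
  simp only [← integral_const_mul]
  have hDM : Integrable fun s => ε ^ 2 * deriv a s ^ 2 - ε * α * (deriv a s * a s) := hD.sub hM
  rw [← integral_sub hD hM, ← integral_add hDM hA]
  congr 1 with s
  ring

lemma integral_exp_mul_sq_le (ha : Continuous a) (hac : HasCompactSupport a)
    (ha1 : ∀ s, -1 < s → a s = 0) (hε : 0 < ε) :
    ∫ s, Real.exp (ε⁻¹ * s) * a s ^ 2 ≤ ε * ∫ s, a s ^ 2 := by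
  have hsq : HasCompactSupport fun s => a s ^ 2 := hac.comp_left (g := (· ^ 2)) (by simp)
  rw [← integral_const_mul]
  refine integral_mono ((by fun_prop : Continuous _).integrable_of_hasCompactSupport hsq.mul_left)
    ((by fun_prop : Continuous _).integrable_of_hasCompactSupport hsq.mul_left) fun s => ?_
  obtain hs | hs := lt_or_ge (-1) s
  · simp [ha1 s hs]
  · have hexp : Real.exp (ε⁻¹ * s) ≤ ε := by
      calc Real.exp (ε⁻¹ * s) ≤ Real.exp (-ε⁻¹) := by
            gcongr
            nlinarith [inv_pos.2 hε]
        _ ≤ ε⁻¹⁻¹ := by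
            rw [Real.exp_neg]
            gcongr
            linarith [Real.add_one_le_exp ε⁻¹]
        _ = ε := inv_inv ε
    exact mul_le_mul_of_nonneg_right hexp (sq_nonneg _)

lemma le_sq_of_forall_exp_weighted
    (h : ∀ b : ℝ → ℝ, ContDiff ℝ (⊤ : ℕ∞) b → HasCompactSupport b → b =ᶠ[nhds 0] 0 →
      c * (∫ t, Real.exp (α * t) * b t ^ 2) ≤ 4 * (∫ t, Real.exp (α * t) * deriv b t ^ 2) +
        K * ∫ t, Real.exp ((α + 1) * t) * b t ^ 2) : c ≤ α ^ 2 := by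
  -- On the support of `a`, where `s ≤ -1`, the weight `exp(s / ε)` is at most `ε`.
  let a : ContDiffBump (-2 : ℝ) := ⟨1 / 2, 1, by norm_num, by norm_num⟩
  have ha1 (s : ℝ) (hs : -1 < s) : a s = 0 :=
    a.zero_of_le_dist (by rw [Real.dist_eq, le_abs]; left; simp only [a]; linarith)
  have ha0 : a =ᶠ[nhds 0] 0 := (lt_mem_nhds (by norm_num : (-1 : ℝ) < 0)).mono ha1
  set A := ∫ s, a s ^ 2
  set D := ∫ s, deriv a s ^ 2
  set M := ∫ s, deriv a s * a s
  have hA : 0 < A :=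
    (a.continuous.pow 2).integral_pos_of_hasCompactSupport_nonneg_nonzero
      (a.hasCompactSupport.comp_left (g := (· ^ 2)) (by simp)) (fun s => sq_nonneg _) (x := -2)
      (by simp [a.one_of_mem_closedBall (mem_closedBall_self a.rIn_pos.le)])
  have hle {ε : ℝ} (hε : 0 < ε) :
      c * A ≤ 4 * (ε ^ 2 * D - ε * α * M + α ^ 2 / 4 * A) + |K| * (ε * A) := by
    have : 0 ≤ ∫ s, Real.exp (ε⁻¹ * s) * a s ^ 2 := integral_nonneg fun s => by positivity
    refine (integral_sq_le_of_exp_weighted h a.contDiff a.hasCompactSupport ha0 hε).trans ?_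
    rw [integral_sub_half_mul_sq a.contDiff a.hasCompactSupport]
    gcongr
    · exact le_abs_self K
    · exact integral_exp_mul_sq_le a.continuous a.hasCompactSupport ha1 hε
  have hcont : Continuous fun ε : ℝ =>
      4 * (ε ^ 2 * D - ε * α * M + α ^ 2 / 4 * A) + |K| * (ε * A) := by fun_prop
  have hlim : c * A ≤ 4 * (0 ^ 2 * D - 0 * α * M + α ^ 2 / 4 * A) + |K| * (0 * A) :=
    ge_of_tendsto (hcont.continuousWithinAt (s := Ioi 0) (x := 0))
      (eventually_mem_nhdsWithin.mono fun ε hε => hle hε)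
  refine le_of_mul_le_mul_right ?_ hA
  linarith

end ExponentialWeight

section Optimality

variable {E : Type*} [NormedAddCommGroup E] [InnerProductSpace ℝ E] [FiniteDimensional ℝ E]
  [MeasurableSpace E] [BorelSpace E] {W : Submodule ℝ E} {w : ℝ → ℝ} {g : E → ℝ} {c : ℝ}

lemma integrable_logCylindrical (hw : Continuous w) (hwc : HasCompactSupport w) (hw0 : w 0 = 0)
    (hg : Continuous g) (hgc : HasCompactSupport g) : Integrable (logCylindrical W w g) :=
  (contDiff_logCylindrical (contDiff_zero.2 hw) hwc hw0
    (contDiff_zero.2 hg)).continuous.integrable_of_hasCompactSupport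
      (hasCompactSupport_logCylindrical hwc hgc)

lemma integral_exp_neg_mul_logCylindrical (hW : W ≠ ⊥) (w : ℝ → ℝ) (g : E → ℝ) :
    ∫ x, logCylindrical W (fun t => Real.exp (-t) * w t) g x =
      cylindricalMass W g *
        ∫ t, Real.exp (((Module.finrank ℝ W : ℝ) - 2) / 2 * t) * w t := by
  rw [integral_logCylindrical hW]
  congr 2 with t
  rw [← mul_assoc, ← Real.exp_add]
  ring_nf

lemma integral_norm_fderiv_logCylindrical_sq_le (hW : W ≠ ⊥) (hw : ContDiff ℝ 1 w)
    (hwc : HasCompactSupport w) (hw0 : w 0 = 0) (hw0' : deriv w 0 = 0) (hg : ContDiff ℝ 1 g)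
    (hgc : HasCompactSupport g) :
    ∫ x, ‖fderiv ℝ (logCylindrical W w g) x‖ ^ 2 ≤
      4 * (cylindricalMass W (fun y => g y ^ 2) *
        ∫ t, Real.exp (((Module.finrank ℝ W : ℝ) - 2) / 2 * t) * deriv w t ^ 2) +
      cylindricalMass W (fun y => ‖fderiv ℝ g y‖ ^ 2) *
        ∫ t, Real.exp ((Module.finrank ℝ W : ℝ) / 2 * t) * w t ^ 2 := by
  have : Continuous (deriv w) := hw.continuous_deriv le_rfl
  have : Continuous (fderiv ℝ g) := hg.continuous_fderiv one_ne_zero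
  have hradial : Integrable
      (logCylindrical W (fun t => Real.exp (-t) * deriv w t ^ 2) fun y => g y ^ 2) :=
    integrable_logCylindrical (by fun_prop)
      (hwc.deriv.comp_left (g := (· ^ 2)) (by simp)).mul_left (by simp [hw0'])
      (hg.continuous.pow 2) (hgc.comp_left (g := (· ^ 2)) (by simp))
  have htangential : Integrable
      (logCylindrical W (fun t => w t ^ 2) fun y => ‖fderiv ℝ g y‖ ^ 2) :=
    integrable_logCylindrical (hw.continuous.pow 2) (hwc.comp_left (g := (· ^ 2)) (by simp))
      (by simp [hw0]) (by fun_prop) ((hgc.fderiv ℝ).comp_left (g := (‖·‖ ^ 2)) (by simp))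
  rw [← integral_exp_neg_mul_logCylindrical hW, ← integral_logCylindrical hW,
    ← integral_const_mul, ← integral_add (hradial.const_mul 4) htangential]
  exact integral_mono_of_nonneg (ae_of_all _ fun x => sq_nonneg _)
    ((hradial.const_mul 4).add htangential)
    (ae_of_all _ (norm_fderiv_logCylindrical_sq_le (hw.differentiable one_ne_zero) hwc hw0 hw0'
      (hg.differentiable one_ne_zero)))

theorem le_sq_of_forall_hardy (hW : W ≠ ⊥)
    (h : ∀ φ : E → ℝ, ContDiff ℝ (⊤ : ℕ∞) φ → HasCompactSupport φ →
      c * (∫ x, (‖W.starProjection x‖ ^ 2)⁻¹ * φ x ^ 2) ≤ ∫ x, ‖fderiv ℝ φ x‖ ^ 2) :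
    c ≤ (((Module.finrank ℝ W : ℝ) - 2) / 2) ^ 2 := by
  let χ : ContDiffBump (0 : E) := default
  have hχ1 : χ 0 ≠ 0 := by simp [χ.one_of_mem_closedBall (mem_closedBall_self χ.rIn_pos.le)]
  set C := cylindricalMass W fun y => χ y ^ 2
  set K := cylindricalMass W fun y => ‖fderiv ℝ χ y‖ ^ 2
  have hC : 0 < C := cylindricalMass_pos hW (χ.continuous.pow 2)
    (χ.hasCompactSupport.comp_left (g := (· ^ 2)) (by simp)) (fun y => sq_nonneg _)
    (pow_ne_zero 2 hχ1)
  refine le_sq_of_forall_exp_weighted (K := K / C) fun b hb hbc hb0 => ?_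
  have hzero : b 0 = 0 := hb0.eq_of_nhds
  have hderiv : deriv b 0 = 0 := by simp [hb0.deriv_eq]
  have hhardy := h _ (contDiff_logCylindrical (W := W) hb hbc hzero χ.contDiff)
    (hasCompactSupport_logCylindrical hbc χ.hasCompactSupport)
  simp only [inv_norm_sq_mul_logCylindrical_sq hzero] at hhardy
  rw [integral_exp_neg_mul_logCylindrical hW] at hhardy
  have henergy := hhardy.trans (integral_norm_fderiv_logCylindrical_sq_le hW
    (hb.of_le (by simp)) hbc hzero hderiv χ.contDiff χ.hasCompactSupport)
  rw [show ((Module.finrank ℝ W : ℝ) - 2) / 2 + 1 = Module.finrank ℝ W / 2 by ring]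
  refine le_of_mul_le_mul_left (henergy.trans_eq' ?_ |>.trans_eq ?_) hC
  · ring
  · rw [mul_add, ← mul_assoc C (K / C), mul_div_cancel₀ _ hC.ne']
    ring

end Optimality

section ZSubspace

/-- The space of vectors of `ℝ^N` supported on the last `N - k` coordinates, so that the
orthogonal projection to it is `x = (t, z) ↦ (0, z)`. -/
def zSubspace (N k : ℕ) : Submodule ℝ (Euc N) :=
  Submodule.span ℝ (range fun i : {i : Fin N // k ≤ i} => EuclideanSpace.single i.1 (1 : ℝ))

variable {N k : ℕ}

lemma mem_zSubspace_of_forall {z : Euc N} (hz : ∀ i : Fin N, (i : ℕ) < k → z i = 0) :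
    z ∈ zSubspace N k := by
  rw [← (EuclideanSpace.basisFun (Fin N) ℝ).sum_repr z]
  refine Submodule.sum_mem _ fun i _ => ?_
  obtain hi | hi := lt_or_ge (i : ℕ) k
  · simp [hz i hi]
  · refine Submodule.smul_mem _ _ (Submodule.subset_span ⟨⟨i, hi⟩, ?_⟩)
    simp

lemma mem_zSubspace_orthogonal_of_forall {t : Euc N} (ht : ∀ i : Fin N, k ≤ i → t i = 0) :
    t ∈ (zSubspace N k)ᗮ := by
  refine Submodule.isOrtho_iff_le.1 (Submodule.isOrtho_span.2 ?_).symm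
    (Submodule.mem_span_singleton_self t)
  rintro _ ⟨i, rfl⟩ _ rfl
  simp only [EuclideanSpace.inner_single_left, ht i.1 i.2, mul_zero]

lemma starProjection_zSubspace_apply (x : Euc N) (i : Fin N) :
    (zSubspace N k).starProjection x i = if k ≤ (i : ℕ) then x i else 0 := by
  rw [Submodule.eq_starProjection_of_mem_orthogonal
    (v := WithLp.toLp 2 fun i : Fin N => if k ≤ (i : ℕ) then x i else 0)
    (mem_zSubspace_of_forall fun i hi => by simp [hi])
    (mem_zSubspace_orthogonal_of_forall fun i hi => by simp [hi])]

lemma zNorm_eq_norm_starProjection (x : Euc N) :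
    zNorm N k x = ‖(zSubspace N k).starProjection x‖ := by
  simp [zNorm, EuclideanSpace.norm_eq, starProjection_zSubspace_apply, ite_pow]

lemma zNorm_rpow_neg_two (x : Euc N) :
    zNorm N k x ^ (-(2 : ℝ)) = (‖(zSubspace N k).starProjection x‖ ^ 2)⁻¹ := by
  rw [zNorm_eq_norm_starProjection, Real.rpow_neg (norm_nonneg _), Real.rpow_two]

lemma finrank_zSubspace (N k : ℕ) : Module.finrank ℝ (zSubspace N k) = N - k := by
  have hli : LinearIndependent ℝ
      fun i : {i : Fin N // k ≤ i} => EuclideanSpace.single i.1 (1 : ℝ) :=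
    (EuclideanSpace.orthonormal_single (𝕜 := ℝ)).linearIndependent.comp _ Subtype.val_injective
  have hcard := Finset.card_filter_add_card_filter_not (s := Finset.univ)
    fun i : Fin N => (i : ℕ) < k
  simp only [Fin.card_filter_val_lt, not_lt, Finset.card_univ, Fintype.card_fin] at hcard
  rw [zSubspace, finrank_span_eq_card hli, Fintype.card_subtype]
  omega

end ZSubspace

theorem statement2_general {N : ℕ} (hN : 3 ≤ N) {W : Submodule ℝ (Euc N)} (hW : W ≠ ⊥) :
    IsGreatest {c : ℝ | ∀ v : Euc N → ℝ, MemD12 N v →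
        c * ∫ x, (‖W.starProjection x‖ ^ 2)⁻¹ * v x ^ 2 ≤ gradL2 N v}
      ((((Module.finrank ℝ W : ℝ) - 2) / 2) ^ 2) ∧
    ¬ ∃ v : Euc N → ℝ, MemD12 N v ∧ ¬ (v =ᵐ[volume] (0 : Euc N → ℝ)) ∧
        Integrable (fun x => (‖W.starProjection x‖ ^ 2)⁻¹ * v x ^ 2) ∧
        gradL2 N v = (((Module.finrank ℝ W : ℝ) - 2) / 2) ^ 2 *
          ∫ x, (‖W.starProjection x‖ ^ 2)⁻¹ * v x ^ 2 := by
  refine ⟨⟨fun v hv => hardy_inequality hN hW hv, fun c hc => ?_⟩, ?_⟩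
  · exact le_sq_of_forall_hardy hW fun φ hφ hφc => hc φ (memD12_of_contDiff hφ hφc)
  · rintro ⟨v, hv, hne, hint, heq⟩
    exact hne (ae_eq_zero_of_hardy_eq hN hW hv hint heq)

/-- The constant `((N-k-2)/2)²` in the cylindrical Hardy inequality is
optimal — it is the largest constant `c` such that `∫ |∇v|² ≥ c ∫ |z|^{-2} v²` for all
`v ∈ D^{1,2}(ℝ^N)` (equivalently, it equals the infimum of the corresponding Rayleigh
quotients) — but it is never achieved: no nonzero `v ∈ D^{1,2}(ℝ^N)` realizes equality. -/
theorem statement2 (N k : ℕ) (hN : 3 ≤ N) (hk : k ≤ N - 1) (hexc : k ≠ N - 2) :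
    IsGreatest {c : ℝ | ∀ v : Euc N → ℝ, MemD12 N v →
        c * ∫ x, zNorm N k x ^ (-(2 : ℝ)) * v x ^ 2 ≤ gradL2 N v}
      ((((N : ℝ) - k - 2) / 2) ^ 2) ∧
    ¬ ∃ v : Euc N → ℝ, MemD12 N v ∧ ¬ (v =ᵐ[volume] (0 : Euc N → ℝ)) ∧
        Integrable (fun x => zNorm N k x ^ (-(2 : ℝ)) * v x ^ 2) ∧
        gradL2 N v =
          (((N : ℝ) - k - 2) / 2) ^ 2 * ∫ x, zNorm N k x ^ (-(2 : ℝ)) * v x ^ 2 := by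
  have hrank : (Module.finrank ℝ (zSubspace N k) : ℝ) = N - k := by
    rw [finrank_zSubspace, Nat.cast_sub (by omega)]
  have hne : zSubspace N k ≠ ⊥ := by
    rw [Ne, ← Submodule.finrank_eq_zero (R := ℝ), finrank_zSubspace]
    omega
  simp only [zNorm_rpow_neg_two, ← hrank]
  exact statement2_general hN hne
end
end

section
/- Let N ≥ 3 and σ ∈ (0,2). The function w(x) = [(N−σ)(N−2)]^{(N−2)/(2(2−σ))} (1 + |x|^{2−σ})^{(2−N)/(2−σ)} satisfies −Δw = |x|^{−σ} w^{2*_σ − 1} pointwise on ℝ^N ∖ {0}, where 2*_σ = 2(N−σ)/(N−2). -/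
open MeasureTheory Filter Metric Set Bornology

noncomputable section

/-- The explicit extremal for the Hardy–Sobolev inequality with point singularity
(`k = 0`): `w(x) = [(N-σ)(N-2)]^{(N-2)/(2(2-σ))} (1+|x|^{2-σ})^{(2-N)/(2-σ)}`. -/
def wPoint (N : ℕ) (σ : ℝ) (x : Euc N) : ℝ :=
  (((N : ℝ) - σ) * ((N : ℝ) - 2)) ^ (((N : ℝ) - 2) / (2 * (2 - σ))) *
    (1 + ‖x‖ ^ (2 - σ)) ^ ((2 - (N : ℝ)) / (2 - σ))

/-!
For a radial function `φ(|·|)` the Laplacian is the ordinary differential operator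
`φ'' + (n - 1) / r * φ'`. On the profile `(1 + r ^ p) ^ a` it gives
`a * p * r ^ (p - 2) * (1 + r ^ p) ^ (a - 2)` times an affine function of `r ^ p` whose slope
`a * p + n - 2` vanishes exactly for `a = (2 - n) / p`. With `p = 2 - σ`, the surviving exponent
`a - 2` is `a * (2*_σ - 1)`, so the profile solves the equation up to the factor
`(n - σ) * (n - 2)`, and rescaling its height absorbs that factor.
-/

section RadialLaplacian

open InnerProductSpace Topology Module
open scoped Laplacian

variable {E : Type*} [NormedAddCommGroup E] [InnerProductSpace ℝ E]
  {F : Type*} [NormedAddCommGroup F] [NormedSpace ℝ F] {x : E}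

theorem hasFDerivAt_norm_of_ne_zero (hx : x ≠ 0) :
    HasFDerivAt (fun y : E ↦ ‖y‖) (‖x‖⁻¹ • innerSL ℝ x) x := by
  have hsqrt := (hasStrictFDerivAt_norm_sq x).hasFDerivAt.sqrt
    (pow_ne_zero 2 (norm_ne_zero_iff.2 hx))
  simp only [Real.sqrt_sq (norm_nonneg _)] at hsqrt
  refine hsqrt.congr_fderiv ?_
  module

theorem hasFDerivAt_comp_norm {φ : ℝ → F} {φ' : F} (hx : x ≠ 0) (hφ : HasDerivAt φ φ' ‖x‖) :
    HasFDerivAt (fun y : E ↦ φ ‖y‖) ((innerSL ℝ x).smulRight (‖x‖⁻¹ • φ')) x := by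
  refine (hφ.hasFDerivAt.comp x (hasFDerivAt_norm_of_ne_zero hx)).congr_fderiv ?_
  ext v
  simp [smul_smul, mul_comm]

theorem iteratedFDeriv_two_comp_norm {φ φ' : ℝ → F} {φ'' : F} (hx : x ≠ 0)
    (hφ : ∀ᶠ r in 𝓝 ‖x‖, HasDerivAt φ (φ' r) r) (hφ' : HasDerivAt φ' φ'' ‖x‖) (v w : E) :
    iteratedFDeriv ℝ 2 (fun y : E ↦ φ ‖y‖) x ![v, w] =
      (‖x‖⁻¹ * inner ℝ v w) • φ' ‖x‖ +
        (inner ℝ x v * inner ℝ x w) • ((‖x‖⁻¹ ^ 2) • φ'' - (‖x‖⁻¹ ^ 3) • φ' ‖x‖) := by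
  have hr : ‖x‖ ≠ 0 := norm_ne_zero_iff.2 hx
  have hfderiv : fderiv ℝ (fun y : E ↦ φ ‖y‖) =ᶠ[𝓝 x]
      fun y ↦ (innerSL ℝ y).smulRight (‖y‖⁻¹ • φ' ‖y‖) := by
    filter_upwards [continuous_norm.continuousAt.eventually hφ, isOpen_ne.mem_nhds hx] with y hy hy0
    exact (hasFDerivAt_comp_norm hy0 hy).fderiv
  have hquot := hasFDerivAt_comp_norm hx ((hasDerivAt_inv hr).smul hφ')
  have hsecond := ((ContinuousLinearMap.smulRightL ℝ E F).hasFDerivAt_of_bilinear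
    (innerSL ℝ (E := E)).hasFDerivAt hquot).congr_of_eventuallyEq hfderiv
  rw [iteratedFDeriv_two_apply, hsecond.fderiv]
  -- The derivative of the product `hfderiv`, first in the vector factor, then in `⟪y, ·⟫`.
  change inner ℝ x w • inner ℝ x v • ‖x‖⁻¹ • (‖x‖⁻¹ • φ'' + -(‖x‖ ^ 2)⁻¹ • φ' ‖x‖) +
    inner ℝ v w • ‖x‖⁻¹ • φ' ‖x‖ = _
  module

variable [FiniteDimensional ℝ E]

theorem laplacian_comp_norm {φ φ' : ℝ → F} {φ'' : F} (hx : x ≠ 0)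
    (hφ : ∀ᶠ r in 𝓝 ‖x‖, HasDerivAt φ (φ' r) r) (hφ' : HasDerivAt φ' φ'' ‖x‖) :
    Δ (fun y : E ↦ φ ‖y‖) x = φ'' + (((finrank ℝ E : ℝ) - 1) / ‖x‖) • φ' ‖x‖ := by
  have hr : ‖x‖ ≠ 0 := norm_ne_zero_iff.2 hx
  simp only [laplacian_eq_iteratedFDeriv_stdOrthonormalBasis,
    iteratedFDeriv_two_comp_norm hx hφ hφ', real_inner_self_eq_norm_sq, ← sq,
    OrthonormalBasis.norm_eq_one, OrthonormalBasis.sum_sq_inner_left, Finset.sum_add_distrib,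
    ← Finset.sum_smul, Finset.sum_const, Finset.card_univ, Fintype.card_fin, one_pow, mul_one,
    nsmul_eq_mul]
  match_scalars <;> field_simp
  ring

end RadialLaplacian

section Profile

open Topology Module
open scoped Laplacian

theorem rpow_sub_two {x : ℝ} (hx : x ≠ 0) (y : ℝ) : x ^ (y - 2) = x ^ y / x ^ 2 :=
  mod_cast Real.rpow_sub_natCast hx y 2

theorem hasDerivAt_one_add_rpow_rpow (p a : ℝ) {r : ℝ} (hr : 0 < r) :
    HasDerivAt (fun r ↦ (1 + r ^ p) ^ a) (a * p * (r ^ (p - 1) * (1 + r ^ p) ^ (a - 1))) r := by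
  have hbase : HasDerivAt (fun r : ℝ ↦ 1 + r ^ p) (p * r ^ (p - 1)) r :=
    (Real.hasDerivAt_rpow_const (Or.inl hr.ne')).const_add 1
  refine (hbase.rpow_const (p := a) (Or.inl (by positivity))).congr_deriv ?_
  ring

theorem hasDerivAt_rpow_mul_one_add_rpow_rpow (q p b : ℝ) {r : ℝ} (hr : 0 < r) :
    HasDerivAt (fun r ↦ r ^ q * (1 + r ^ p) ^ b)
      (r ^ (q - 1) * (1 + r ^ p) ^ (b - 1) * (q + (q + b * p) * r ^ p)) r := by
  refine ((Real.hasDerivAt_rpow_const (Or.inl hr.ne')).mul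
    (hasDerivAt_one_add_rpow_rpow p b hr)).congr_deriv ?_
  have hbase : 1 + r ^ p ≠ 0 := by positivity
  rw [Real.rpow_sub_one hr.ne', Real.rpow_sub_one hr.ne', Real.rpow_sub_one hbase]
  field_simp
  ring

variable {E : Type*} [NormedAddCommGroup E] [InnerProductSpace ℝ E] {x : E}

theorem contDiffAt_one_add_norm_rpow_rpow (p a : ℝ) {n : WithTop ℕ∞} (hx : x ≠ 0) :
    ContDiffAt ℝ n (fun y : E ↦ (1 + ‖y‖ ^ p) ^ a) x := by
  have hbase : ContDiffAt ℝ n (fun y : E ↦ 1 + ‖y‖ ^ p) x :=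
    contDiffAt_const.add ((contDiffAt_norm ℝ hx).rpow_const_of_ne (norm_ne_zero_iff.2 hx))
  exact hbase.rpow_const_of_ne (by positivity)

variable [FiniteDimensional ℝ E]

theorem laplacian_one_add_norm_rpow_rpow (p a : ℝ) (hx : x ≠ 0) :
    Δ (fun y : E ↦ (1 + ‖y‖ ^ p) ^ a) x =
      a * p * ‖x‖ ^ (p - 2) * (1 + ‖x‖ ^ p) ^ (a - 2) *
        (finrank ℝ E + p - 2 + (a * p + finrank ℝ E - 2) * ‖x‖ ^ p) := by
  have hr : 0 < ‖x‖ := norm_pos_iff.2 hx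
  have hbase : 1 + ‖x‖ ^ p ≠ 0 := by positivity
  have hfirst : ∀ᶠ r in 𝓝 ‖x‖, HasDerivAt (fun r : ℝ ↦ (1 + r ^ p) ^ a)
      (a * p * (r ^ (p - 1) * (1 + r ^ p) ^ (a - 1))) r := by
    filter_upwards [lt_mem_nhds hr] with r hr using hasDerivAt_one_add_rpow_rpow p a hr
  have hsecond := (hasDerivAt_rpow_mul_one_add_rpow_rpow (p - 1) p (a - 1) hr).const_mul (a * p)
  rw [laplacian_comp_norm hx hfirst hsecond]
  have hp : p - 2 = p - 1 - 1 := by ring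
  have ha : a - 2 = a - 1 - 1 := by ring
  rw [hp, ha, smul_eq_mul, Real.rpow_sub_one hr.ne' (p - 1), Real.rpow_sub_one hbase (a - 1)]
  field_simp
  ring

theorem laplacian_one_add_norm_rpow_rpow_two_sub_finrank_div {p : ℝ} (hp : p ≠ 0) (hx : x ≠ 0) :
    Δ (fun y : E ↦ (1 + ‖y‖ ^ p) ^ ((2 - finrank ℝ E : ℝ) / p)) x =
      -((finrank ℝ E + p - 2) * (finrank ℝ E - 2) * ‖x‖ ^ (p - 2) *
        (1 + ‖x‖ ^ p) ^ ((2 - finrank ℝ E : ℝ) / p - 2)) := by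
  rw [laplacian_one_add_norm_rpow_rpow _ _ hx, div_mul_cancel₀ _ hp]
  ring

end Profile

section Euclidean

open InnerProductSpace
open scoped Laplacian

variable {N : ℕ} {σ : ℝ} {x : Euc N}

theorem lapl_eq_laplacian {f : Euc N → ℝ} (hf : DifferentiableAt ℝ (fderiv ℝ f) x) :
    lapl N f x = Δ f x := by
  rw [laplacian_eq_iteratedFDeriv_orthonormalBasis f (EuclideanSpace.basisFun (Fin N) ℝ)]
  refine Finset.sum_congr rfl fun i _ ↦ ?_
  simp [iteratedFDeriv_two_apply, fderiv_clm_apply hf (differentiableAt_const _)]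

theorem lapl_wPoint (hσ : σ ≠ 2) (hx : x ≠ 0) :
    lapl N (wPoint N σ) x =
      -((N - σ) * (N - 2) * ‖x‖ ^ (-σ) * (wPoint N σ x / (1 + ‖x‖ ^ (2 - σ)) ^ 2)) := by
  let C : ℝ := (((N : ℝ) - σ) * (N - 2)) ^ (((N : ℝ) - 2) / (2 * (2 - σ)))
  let u : Euc N → ℝ := fun y ↦ (1 + ‖y‖ ^ (2 - σ)) ^ ((2 - N : ℝ) / (2 - σ))
  have hw : wPoint N σ = C • u := rfl
  have hu : ContDiffAt ℝ 2 u x := contDiffAt_one_add_norm_rpow_rpow _ _ hx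
  have hfderiv : DifferentiableAt ℝ (fderiv ℝ (C • u)) x :=
    ((hu.const_smul C).fderiv_right (m := 1) (by norm_num)).differentiableAt one_ne_zero
  have hΔu : Δ u x = -((N - σ) * (N - 2) * ‖x‖ ^ (-σ) * (u x / (1 + ‖x‖ ^ (2 - σ)) ^ 2)) := by
    have hbase : 1 + ‖x‖ ^ (2 - σ) ≠ 0 := by positivity
    have h := laplacian_one_add_norm_rpow_rpow_two_sub_finrank_div (sub_ne_zero.2 hσ.symm) hx
    rwa [finrank_euclideanSpace_fin, rpow_sub_two hbase, show N + (2 - σ) - 2 = N - σ by ring,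
      show 2 - σ - 2 = -σ by ring] at h
  rw [hw, lapl_eq_laplacian hfderiv, laplacian_smul C hu, hΔu, Pi.smul_apply]
  simp only [smul_eq_mul]
  ring

theorem twoStar_sub_one (hN : (N : ℝ) ≠ 2) : twoStar N σ - 1 = (N + 2 - 2 * σ) / (N - 2) := by
  have hN' : (N : ℝ) - 2 ≠ 0 := sub_ne_zero.2 hN
  unfold twoStar
  field_simp
  ring

theorem wPoint_rpow_twoStar_sub_one (hσ : σ ≠ 2) (hA : 0 < ((N : ℝ) - σ) * (N - 2)) (x : Euc N) :
    wPoint N σ x ^ (twoStar N σ - 1) =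
      (N - σ) * (N - 2) * (wPoint N σ x / (1 + ‖x‖ ^ (2 - σ)) ^ 2) := by
  have hσ' : 2 - σ ≠ 0 := sub_ne_zero.2 hσ.symm
  have hN : (N : ℝ) - 2 ≠ 0 := right_ne_zero_of_mul hA.ne'
  have hbase : 0 < 1 + ‖x‖ ^ (2 - σ) := by positivity
  have hheight : ((N : ℝ) - 2) / (2 * (2 - σ)) * (twoStar N σ - 1) =
      (N - 2) / (2 * (2 - σ)) + 1 := by
    rw [twoStar_sub_one (sub_ne_zero.1 hN)]
    field_simp
    ring
  have hprofile : (2 - N : ℝ) / (2 - σ) * (twoStar N σ - 1) = (2 - N) / (2 - σ) - 2 := by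
    rw [twoStar_sub_one (sub_ne_zero.1 hN)]
    field_simp
    ring
  rw [wPoint, Real.mul_rpow (Real.rpow_nonneg hA.le _) (Real.rpow_nonneg hbase.le _),
    ← Real.rpow_mul hA.le, ← Real.rpow_mul hbase.le, hheight, hprofile,
    Real.rpow_add_one hA.ne', rpow_sub_two hbase.ne']
  ring

theorem statement9_general (hσ : σ ≠ 2) (hA : 0 < ((N : ℝ) - σ) * (N - 2)) (hx : x ≠ 0) :
    -lapl N (wPoint N σ) x = ‖x‖ ^ (-σ) * wPoint N σ x ^ (twoStar N σ - 1) := by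
  rw [lapl_wPoint hσ hx, wPoint_rpow_twoStar_sub_one hσ hA]
  ring

end Euclidean

/-- For `N ≥ 3`, `σ ∈ (0,2)`, the function `wPoint N σ` satisfies
`-Δw = |x|^{-σ} w^{2*_σ - 1}` pointwise on `ℝ^N ∖ {0}`. -/
theorem statement9 (N : ℕ) (σ : ℝ) (hN : 3 ≤ N) (hσ : σ ∈ Set.Ioo (0 : ℝ) 2) :
    ∀ x : Euc N, x ≠ 0 →
      -lapl N (wPoint N σ) x = ‖x‖ ^ (-σ) * wPoint N σ x ^ (twoStar N σ - 1) := by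
  have hN' : (3 : ℝ) ≤ N := by exact_mod_cast hN
  exact fun x hx ↦ statement9_general hσ.2.ne
    (mul_pos (by linarith [hσ.2]) (by linarith)) hx
end
end
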